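/- arXiv:1109.5524 — 2 statements merged into one kernel-verified Lean document; each statement's English description precedes it below -/
import Mathlib

section
/- Left-wing Bäcklund transformations for the Wronskian supercharacters. For any fixed b ∈ B2 and f ∈ F2, writing B2′ = B2 with b removed and F2′ = F2 with f removed, the Wronskian supercharacters satisfy, for all a, s ∈ ℤ: (1) z_b·χ_{a+1,s}·χ^{B2′}_{a,s} − χ_{a,s}·χ^{B2′}_{a+1,s} = χ_{a+1,s+1}·χ^{B2′}_{a,s−1}; (2) χ_{a,s−1}·χ^{B2′}_{a,s} − χ_{a,s}·χ^{B2′}_{a,s−1} = χ_{a+1,s}·χ^{B2′}_{a−1,s−1}; (3) z_f·χ^{F2′}_{a+1,s}·χ_{a,s} + χ^{F2′}_{a,s}·χ_{a+1,s} = χ^{F2′}_{a+1,s+1}·χ_{a,s−1}; (4) χ^{F2′}_{a,s−1}·χ_{a,s} − χ^{F2′}_{a,s}·χ_{a,s−1} = −χ^{F2′}_{a+1,s}·χ_{a−1,s−1}. Here χ = χ^{B1,B2,F1,F2}, χ^{B2′} denotes the Wronskian supercharacter built with B2 replaced by B2′ (m2 decreased by 1, all other data unchanged), and χ^{F2′}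 that built with F2 replaced by F2′ (n2 decreased by 1). -/
open scoped BigOperators

namespace Stmt2

/-- The integer segment tuple `⟨a,b⟩ = (a, a+1, …, b)`, empty when `b < a`. -/
def seg (a b : ℤ) : List ℤ := (List.range (b - a + 1).toNat).map (fun k => a + (k : ℤ))

/-- Product of `g x y` over ordered pairs `x ≺ y` in the list `L`. -/
def pairProd {ι : Type*} (L : List ι) (g : ι → ι → ℂ) : ℂ :=
  ∏ i : Fin L.length, ∏ j : Fin L.length, if i < j then g (L.get i) (L.get j) else 1

/-- Product of `g x` over a list. -/
def prodL {ι : Type*} (L : List ι) (g : ι → ℂ) : ℂ := (L.map g).prod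

/-- Product of `g x y` over pairs `(x, y) ∈ L × M`. -/
def prodLL {ι : Type*} (L M : List ι) (g : ι → ι → ℂ) : ℂ :=
  (L.map (fun x => (M.map (g x)).prod)).prod

/-- Determinant of the square matrix whose rows and columns are labelled by the given
key lists (by convention `0` if the two lists have different lengths). -/
noncomputable def listDet {α β : Type*} (rows : List α) (cols : List β) (e : α → β → ℂ) : ℂ :=
  if h : rows.length = cols.length then
    Matrix.det (Matrix.of fun i j : Fin rows.length =>
      e (rows.get i) (cols.get (Fin.cast h j)))
  else 0

/-- The sparse determinant `Δ^{B1,B2,R,(η)}_{F,S,T1,T2}`. -/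
noncomputable def Delta {ι : Type*} (z : ι → ℂ) (B1 B2 F : List ι)
    (R S T1 T2 : List ℤ) (η : ℤ) : ℂ :=
  listDet
    ((B1.map (Sum.inl : ι → ι ⊕ (ι ⊕ ℤ)) ++
      B2.map (fun b => (Sum.inr (Sum.inl b) : ι ⊕ (ι ⊕ ℤ))) ++
      R.map (fun r => (Sum.inr (Sum.inr r) : ι ⊕ (ι ⊕ ℤ)))))
    ((F.map (Sum.inl : ι → ι ⊕ (ℤ ⊕ (ℤ ⊕ ℤ))) ++
      S.map (fun j => (Sum.inr (Sum.inl j) : ι ⊕ (ℤ ⊕ (ℤ ⊕ ℤ)))) ++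
      T1.map (fun j => (Sum.inr (Sum.inr (Sum.inl j)) : ι ⊕ (ℤ ⊕ (ℤ ⊕ ℤ)))) ++
      T2.map (fun j => (Sum.inr (Sum.inr (Sum.inr j)) : ι ⊕ (ℤ ⊕ (ℤ ⊕ ℤ))))))
    (fun row col =>
      match row, col with
      | Sum.inl b, Sum.inl f => 1 / (z b - z f)
      | Sum.inl b, Sum.inr (Sum.inl j) => z b ^ (j - 1)
      | Sum.inl b, Sum.inr (Sum.inr (Sum.inl j)) => z b ^ (j - 1)
      | Sum.inl _, Sum.inr (Sum.inr (Sum.inr _)) => 0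
      | Sum.inr (Sum.inl b), Sum.inl f => (-z f / z b) ^ η / (z b - z f)
      | Sum.inr (Sum.inl b), Sum.inr (Sum.inl j) => z b ^ (j - 1)
      | Sum.inr (Sum.inl _), Sum.inr (Sum.inr (Sum.inl _)) => 0
      | Sum.inr (Sum.inl b), Sum.inr (Sum.inr (Sum.inr j)) => z b ^ (j - 1)
      | Sum.inr (Sum.inr r), Sum.inl f => (-z f) ^ (r - 1)
      | Sum.inr (Sum.inr _), Sum.inr _ => 0)

/-- The denominator formula `D(B|F)`. -/
noncomputable def Dden {ι : Type*} (z : ι → ℂ) (B F : List ι) : ℂ :=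
  pairProd B (fun b b' => z b - z b') * pairProd F (fun f f' => z f' - z f) /
    prodLL B F (fun b f => z b - z f)

/-- `χ` is the Wronskian supercharacter family for the data `(z, B1, B2, F1, F2)`:
it vanishes outside the generalized T-hook and is given by the eight regional
sparse determinant formulas inside the hook. -/
def IsChi {ι : Type*} (z : ι → ℂ) (B1 B2 F1 F2 : List ι) (χ : ℤ → ℤ → ℂ) : Prop :=
  let m1 : ℤ := B1.length
  let m2 : ℤ := B2.length
  let n1 : ℤ := F1.length
  let n2 : ℤ := F2.length
  let η1 : ℤ := m1 - n1
  let η2 : ℤ := m2 - n2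
  let θ : ℤ := (m1 + m2) * (m1 + m2 - 1) / 2 + (n1 + n2) * (n1 + n2 - 1) / 2
  let F : List ι := F1 ++ F2
  let Dd : ℂ := Dden z (B1 ++ B2) F
  (∀ a s : ℤ, (a < 0 ∨ (m1 < a ∧ n1 < s) ∨ (m2 < a ∧ s < -n2)) → χ a s = 0) ∧
  (∀ a s : ℤ, s + η1 ≤ a → -s + η2 ≤ a → 0 ≤ a → -η1 ≤ s → s ≤ η2 →
    χ a s = (-1 : ℂ) ^ ((s + η1) * (s + n2) + θ) *
      Delta z B1 B2 F [] [] (seg 1 (s + η1)) (seg (s - a + η1 + 1) (-a + η1 + η2))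
        (a - s - η1) / Dd) ∧
  (∀ a s : ℤ, s + η1 ≤ a → -s + η2 ≤ a → 0 ≤ a → -η1 ≤ s → η2 ≤ s →
    χ a s = (-1 : ℂ) ^ ((s + η1) * (s + n2) + θ) *
      Delta z B1 B2 F (seg (a - s - η1 + 1) (a - η1 - η2)) [] (seg 1 (s + η1)) []
        (a - s - η1) / Dd) ∧
  (∀ a s : ℤ, s + η1 ≤ a → -s + η2 ≤ a → 0 ≤ a → s ≤ -η1 → s ≤ η2 →
    χ a s = (-1 : ℂ) ^ ((s + η1) * m2 + θ) *
      Delta z B1 B2 F (seg 1 (-s - η1)) [] [] (seg (s - a + η1 + 1) (-a + η1 + η2))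
        (a - s - η1) / Dd) ∧
  (∀ a s : ℤ, s + η1 ≤ a → -s + η2 ≤ a → 0 ≤ a → η2 ≤ s → s ≤ -η1 →
    χ a s = (-1 : ℂ) ^ ((s + η1) * m2 + θ) *
      Delta z B1 B2 F (seg 1 (-s - η1) ++ seg (a - s - η1 + 1) (a - η1 - η2)) [] [] []
        (a - s - η1) / Dd) ∧
  (∀ a s : ℤ, a ≤ s + η1 → a ≤ η1 + η2 →
    χ a s = (-1 : ℂ) ^ (a * m2 + θ) *
      Delta z B1 B2 F [] (seg 1 (-a + η1 + η2)) (seg (s - a + η1 + 1) (s + η1)) [] 0 / Dd) ∧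
  (∀ a s : ℤ, η1 + η2 ≤ a → a ≤ s + η1 →
    χ a s = (-1 : ℂ) ^ (a * (η1 + n2 + 1) + θ) *
      Delta z B1 B2 F (seg 1 (a - η1 - η2)) [] (seg (s - a + η1 + 1) (s + η1)) [] 0 / Dd) ∧
  (∀ a s : ℤ, a ≤ -s + η2 → a ≤ η1 + η2 →
    χ a s = (-1 : ℂ) ^ (a * (1 + m2) + θ) *
      Delta z B1 B2 F [] (seg 1 (-a + η1 + η2)) [] (seg (s - a + η1 + 1) (s + η1)) 0 / Dd) ∧
  (∀ a s : ℤ, η1 + η2 ≤ a → a ≤ -s + η2 →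
    χ a s = (-1 : ℂ) ^ (a * (η1 + n2) + θ) *
      Delta z B1 B2 F (seg 1 (a - η1 - η2)) [] [] (seg (s - a + η1 + 1) (s + η1)) 0 / Dd)

/-!
Each column of the sparse determinants prescribes one function of `y` at the points of `B1` and
another at those of `B2`. Subtracting suitable combinations of power columns replaces the moment
rows `R` and the twist `(-z_f / z_b) ^ η` by rows of coefficients of expansions at `y = ∞`,
truncated at a large order `L`. In this form all eight regional formulas become the same
determinant: its rows are the points of `B1` and `B2` and the coefficients of index `c, …, L` of
the `B2` components, and its columns are the points of `F`, the powers
`s - a + η1 + 1, …, s + η1` on `B2` alone, and the powers `1, …, L` on both.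

Changing `a`, `s`, `B2` or `F2` by one unit now inserts or deletes a row or a column at the end
of its block, so the identities without a spectral parameter are a three-term Plücker relation or
a Desnanot–Jacobi identity. Those with a spectral parameter come from the same two identities for
the index set `B1` enlarged by a point `w`, evaluated at `w = 0`: there the row of `w` meets only
one column, and deleting it multiplies every remaining entry by monomials in the parameters, up
to a shift of the powers.
-/

section ListDet

variable {ρ κ : Type*}

lemma listDet_eq_det {R : List ρ} {C : List κ} (e : ρ → κ → ℂ) (n : ℕ)
    (hR : R.length = n) (hC : C.length = n) :
    listDet R C e = Matrix.det (Matrix.of fun i j : Fin n => e R[i] C[j]) := by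
  subst hR
  simp only [listDet, dif_pos hC.symm]
  rfl

lemma listDet_of_length_ne {R : List ρ} {C : List κ} (e : ρ → κ → ℂ)
    (h : R.length ≠ C.length) : listDet R C e = 0 :=
  dif_neg h

lemma listDet_transpose (R : List ρ) (C : List κ) (e : ρ → κ → ℂ) :
    listDet R C e = listDet C R (flip e) := by
  by_cases h : R.length = C.length
  · rw [listDet_eq_det e _ h rfl, listDet_eq_det _ _ rfl h, ← Matrix.det_transpose]
    rfl
  · rw [listDet_of_length_ne _ h, listDet_of_length_ne _ (Ne.symm h)]

lemma listDet_map_map {ρ' κ' : Type*} (R : List ρ') (C : List κ') (g : ρ' → ρ) (h : κ' → κ)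
    (e : ρ → κ → ℂ) :
    listDet (R.map g) (C.map h) e = listDet R C (fun r c => e (g r) (h c)) := by
  by_cases hl : R.length = C.length
  · rw [listDet_eq_det e R.length (by simp) (by simp [hl]), listDet_eq_det _ _ rfl hl.symm]
    simp
  · rw [listDet_of_length_ne _ hl, listDet_of_length_ne _ (by simpa using hl)]

lemma listDet_congr {R : List ρ} {C : List κ} {e e' : ρ → κ → ℂ}
    (h : ∀ r ∈ R, ∀ c ∈ C, e r c = e' r c) : listDet R C e = listDet R C e' := by
  by_cases hl : R.length = C.length
  · rw [listDet_eq_det e _ rfl hl.symm, listDet_eq_det e' _ rfl hl.symm]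
    congr 1
    ext i j
    exact h _ (List.getElem_mem _) _ (List.getElem_mem _)
  · rw [listDet_of_length_ne _ hl, listDet_of_length_ne _ hl]

lemma listDet_mul_left (R : List ρ) (C : List κ) (e : ρ → κ → ℂ) (u : ρ → ℂ) :
    listDet R C (fun r c => u r * e r c) = (R.map u).prod * listDet R C e := by
  by_cases hl : R.length = C.length
  · rw [listDet_eq_det _ _ rfl hl.symm, listDet_eq_det e _ rfl hl.symm,
      ← Fin.prod_univ_fun_getElem, ← Matrix.det_mul_column]
    rfl
  · rw [listDet_of_length_ne _ hl, listDet_of_length_ne _ hl, mul_zero]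

lemma listDet_mul_right (R : List ρ) (C : List κ) (e : ρ → κ → ℂ) (u : κ → ℂ) :
    listDet R C (fun r c => u c * e r c) = (C.map u).prod * listDet R C e := by
  rw [listDet_transpose, listDet_transpose R]
  exact listDet_mul_left C R (flip e) u

/-- The determinant of the rows `A` and columns `C` bordered by a variable first row, as a linear
form in that row, given by its Laplace expansion. -/
noncomputable def cofactorForm (A : List ρ) (C : List κ) (e : ρ → κ → ℂ) : (κ → ℂ) →ₗ[ℂ] ℂ :=
  ∑ j : Fin C.length, ((-1) ^ (j : ℕ) * listDet A (C.eraseIdx j) e) • LinearMap.proj C[j]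

lemma cofactorForm_apply (A : List ρ) (C : List κ) (e : ρ → κ → ℂ) (u : κ → ℂ) :
    cofactorForm A C e u =
      ∑ j : Fin C.length, (-1) ^ (j : ℕ) * listDet A (C.eraseIdx j) e * u C[j] := by
  simp [cofactorForm]

lemma cofactorForm_congr {A : List ρ} {C : List κ} {e : ρ → κ → ℂ} {u v : κ → ℂ}
    (h : ∀ c ∈ C, u c = v c) : cofactorForm A C e u = cofactorForm A C e v := by
  simp only [cofactorForm_apply]
  exact Finset.sum_congr rfl fun j _ => congrArg _ (h _ (List.getElem_mem _))

lemma listDet_cons (r : ρ) (A : List ρ) (C : List κ) (e : ρ → κ → ℂ) :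
    listDet (r :: A) C e = cofactorForm A C e (e r) := by
  rw [cofactorForm_apply]
  by_cases hl : A.length + 1 = C.length
  · rw [listDet_eq_det e (A.length + 1) rfl hl.symm, Matrix.det_succ_row_zero,
      ← (finCongr hl).sum_comp]
    refine Finset.sum_congr rfl fun j _ => ?_
    have hlen : (C.eraseIdx j).length = A.length := by
      simp [List.length_eraseIdx, ← hl, j.is_le]
    have hminor : listDet A (C.eraseIdx j) e = _ := listDet_eq_det e A.length rfl hlen
    refine (mul_right_comm _ _ _).trans ?_
    congr 2
    refine Eq.trans ?_ hminor.symm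
    congr 1
    ext i k
    simp only [Matrix.submatrix_apply, Matrix.of_apply, Fin.getElem_fin, Fin.val_succ,
      List.getElem_cons_succ, List.getElem_eraseIdx, Fin.succAbove, Fin.lt_def,
      Fin.val_castSucc]
    split_ifs <;> rfl
  · have hne (j : Fin C.length) : A.length ≠ (C.eraseIdx j).length := by
      rw [List.length_eraseIdx_of_lt j.2]
      have := j.2
      omega
    rw [listDet_of_length_ne _ (by simpa using hl)]
    exact (Finset.sum_eq_zero fun j _ => by rw [listDet_of_length_ne _ (hne j)]; ring).symm

lemma listDet_cons_of_mem {x : ρ} {A : List ρ} (hx : x ∈ A) (C : List κ) (e : ρ → κ → ℂ) :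
    listDet (x :: A) C e = 0 := by
  obtain ⟨i, hi, rfl⟩ := List.mem_iff_getElem.1 hx
  by_cases hl : A.length + 1 = C.length
  · rw [listDet_eq_det e (A.length + 1) rfl hl.symm]
    exact Matrix.det_zero_of_row_eq (i := 0) (j := ⟨i + 1, by omega⟩) (by simp [Fin.ext_iff]) rfl
  · exact listDet_of_length_ne _ hl

lemma cofactorForm_of_mem {x : ρ} {A : List ρ} (hx : x ∈ A) (C : List κ) (e : ρ → κ → ℂ) :
    cofactorForm A C e (e x) = 0 := by
  rw [← listDet_cons, listDet_cons_of_mem hx]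

lemma cofactorForm_of_mem_span {A : List ρ} {C : List κ} {e : ρ → κ → ℂ} {u : κ → ℂ}
    (hu : u ∈ Submodule.span ℂ (e '' {x | x ∈ A})) : cofactorForm A C e u = 0 := by
  have hle : Submodule.span ℂ (e '' {x | x ∈ A}) ≤ LinearMap.ker (cofactorForm A C e) := by
    rw [Submodule.span_le]
    rintro _ ⟨x, hx, rfl⟩
    exact cofactorForm_of_mem hx C e
  exact hle hu

lemma cofactorForm_eq_of_eq_zero {A : List ρ} {c : κ} {C : List κ} {e : ρ → κ → ℂ} {u : κ → ℂ}
    (h : ∀ y ∈ C, u y = 0) : cofactorForm A (c :: C) e u = u c * listDet A C e := by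
  have h0 (j : Fin C.length) : u C[j] = 0 := h _ (List.getElem_mem _)
  have htail (j : Fin C.length) : (c :: C)[j.succ] = C[j] := rfl
  simp only [cofactorForm_apply, List.length_cons, Fin.sum_univ_succ, htail, h0, mul_zero,
    Finset.sum_const_zero, add_zero, Fin.val_zero, pow_zero, List.eraseIdx_cons_zero, one_mul]
  exact mul_comm _ _

lemma listDet_cons_cons_of_eq_zero {r : ρ} (A : List ρ) (c : κ) {C : List κ} {e : ρ → κ → ℂ}
    (h : ∀ y ∈ C, e r y = 0) : listDet (r :: A) (c :: C) e = e r c * listDet A C e := by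
  rw [listDet_cons, cofactorForm_eq_of_eq_zero h]

lemma listDet_swap_head (x y : ρ) (B : List ρ) (C : List κ) (e : ρ → κ → ℂ) :
    listDet (x :: y :: B) C e = -listDet (y :: x :: B) C e := by
  by_cases hl : B.length + 2 = C.length
  · rw [listDet_eq_det e (B.length + 2) rfl hl.symm, listDet_eq_det e (B.length + 2) rfl hl.symm,
      ← neg_eq_iff_eq_neg, ← neg_one_mul]
    have hswap := Matrix.det_permute (R := ℂ) (Equiv.swap (0 : Fin (B.length + 2)) 1)
      (Matrix.of fun i j => e (x :: y :: B)[i] C[j])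
    rw [Equiv.Perm.sign_swap (by simp)] at hswap
    push_cast at hswap
    rw [← hswap]
    congr 1
    ext i j
    refine Fin.cases ?_ (fun i => ?_) i
    · simp
    · refine Fin.cases ?_ (fun i => ?_) i
      · simp
      · rw [Matrix.submatrix_apply, Equiv.swap_apply_of_ne_of_ne (by simp) (by simp [Fin.ext_iff])]
        rfl
  · rw [listDet_of_length_ne (R := x :: y :: B) _ hl, listDet_of_length_ne (R := y :: x :: B) _ hl,
      neg_zero]

lemma listDet_swap (A : List ρ) (x y : ρ) (B : List ρ) (C : List κ) (e : ρ → κ → ℂ) :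
    listDet (A ++ x :: y :: B) C e = -listDet (A ++ y :: x :: B) C e := by
  induction A generalizing C with
  | nil => exact listDet_swap_head x y B C e
  | cons a A ih => simp [listDet_cons, cofactorForm_apply, ih]

lemma listDet_append_cons (Q A : List ρ) (x : ρ) (B : List ρ) (C : List κ) (e : ρ → κ → ℂ) :
    listDet (Q ++ (A ++ x :: B)) C e = (-1) ^ A.length * listDet (Q ++ x :: (A ++ B)) C e := by
  induction A generalizing Q with
  | nil => simp
  | cons y A ih =>
    have hQ := ih (Q ++ [y])
    simp only [List.append_assoc, List.cons_append, List.nil_append] at hQ ⊢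
    rw [hQ, listDet_swap, List.length_cons, pow_succ]
    ring

lemma listDet_append_comm (Q A X B : List ρ) (C : List κ) (e : ρ → κ → ℂ) :
    listDet (Q ++ (A ++ (X ++ B))) C e =
      (-1) ^ (A.length * X.length) * listDet (Q ++ (X ++ (A ++ B))) C e := by
  induction X generalizing Q with
  | nil => simp
  | cons y X ih =>
    have hQ := ih (Q ++ [y])
    simp only [List.append_assoc, List.cons_append, List.nil_append] at hQ ⊢
    rw [listDet_append_cons, hQ, List.length_cons, Nat.mul_succ, pow_add]
    ring

lemma listDet_append_comm_right (R : List ρ) (Q A X B : List κ) (e : ρ → κ → ℂ) :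
    listDet R (Q ++ (A ++ (X ++ B))) e =
      (-1) ^ (A.length * X.length) * listDet R (Q ++ (X ++ (A ++ B))) e := by
  rw [listDet_transpose, listDet_append_comm, listDet_transpose R]

lemma listDet_append_cons_right (R : List ρ) (Q A : List κ) (x : κ) (B : List κ)
    (e : ρ → κ → ℂ) :
    listDet R (Q ++ (A ++ x :: B)) e = (-1) ^ A.length * listDet R (Q ++ x :: (A ++ B)) e := by
  rw [listDet_transpose, listDet_append_cons, listDet_transpose R]

lemma listDet_map_smul_add_span {τ : Type*} (Q Z : List ρ) (K : List τ) (g g' : τ → ρ) (c : τ → ℂ)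
    (C : List κ) (e : ρ → κ → ℂ)
    (h : ∀ k ∈ K, ∃ u ∈ Submodule.span ℂ (e '' {x | x ∈ Q ++ Z}),
      ∀ y ∈ C, e (g' k) y = c k * e (g k) y + u y) :
    listDet (Q ++ (K.map g' ++ Z)) C e = (K.map c).prod * listDet (Q ++ (K.map g ++ Z)) C e := by
  suffices H : ∀ Q' : List ρ, Q ⊆ Q' → listDet (Q' ++ (K.map g' ++ Z)) C e =
      (K.map c).prod * listDet (Q' ++ (K.map g ++ Z)) C e from H Q (List.Subset.refl Q)
  induction K with
  | nil => simp
  | cons k K ih =>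
    intro Q' hQ'
    obtain ⟨u, hu, hadd⟩ := h k List.mem_cons_self
    have hspan : u ∈ Submodule.span ℂ (e '' {x | x ∈ Q' ++ (K.map g' ++ Z)}) := by
      refine Submodule.span_mono (Set.image_mono fun x hx => ?_) hu
      rcases List.mem_append.1 hx with hx | hx
      · exact List.mem_append_left _ (hQ' hx)
      · exact List.mem_append_right _ (List.mem_append_right _ hx)
    have hfront : listDet (Q' ++ g' k :: (K.map g' ++ Z)) C e =
        c k * listDet (Q' ++ g k :: (K.map g' ++ Z)) C e := by
      rw [← List.nil_append (Q' ++ g' k :: _), ← List.nil_append (Q' ++ g k :: _),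
        listDet_append_cons, listDet_append_cons, List.nil_append, List.nil_append,
        listDet_cons, listDet_cons, cofactorForm_congr (v := c k • e (g k) + u) hadd, map_add,
        cofactorForm_of_mem_span hspan, map_smul, smul_eq_mul, add_zero, mul_left_comm]
    have hrest := ih (fun k hk => h k (List.mem_cons_of_mem _ hk)) (Q' ++ [g k])
      (List.subset_append_of_subset_left _ hQ')
    simp only [List.append_assoc, List.cons_append, List.nil_append, List.map_cons,
      List.prod_cons] at hrest ⊢
    rw [hfront, hrest, mul_assoc]

lemma listDet_map_smul {τ : Type*} (Q Z : List ρ) (K : List τ) (g g' : τ → ρ) (c : τ → ℂ)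
    (C : List κ) (e : ρ → κ → ℂ) (h : ∀ k ∈ K, ∀ y ∈ C, e (g' k) y = c k * e (g k) y) :
    listDet (Q ++ (K.map g' ++ Z)) C e = (K.map c).prod * listDet (Q ++ (K.map g ++ Z)) C e :=
  listDet_map_smul_add_span Q Z K g g' c C e fun k hk =>
    ⟨0, Submodule.zero_mem _, fun y hy => by rw [h k hk y hy, Pi.zero_apply, add_zero]⟩

lemma listDet_map_smul_add_smul {τ : Type*} (Q Z : List ρ) (K : List τ) (g g' w : τ → ρ)
    (c d : τ → ℂ) (C : List κ) (e : ρ → κ → ℂ) (hw : ∀ k ∈ K, w k ∈ Q ++ Z)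
    (h : ∀ k ∈ K, ∀ y ∈ C, e (g' k) y = c k * e (g k) y + d k * e (w k) y) :
    listDet (Q ++ (K.map g' ++ Z)) C e = (K.map c).prod * listDet (Q ++ (K.map g ++ Z)) C e :=
  listDet_map_smul_add_span Q Z K g g' c C e fun k hk =>
    ⟨d k • e (w k), Submodule.smul_mem _ _ (Submodule.subset_span ⟨w k, hw k hk, rfl⟩), h k hk⟩

lemma listDet_map_smul_add_smul_right {τ : Type*} (R : List ρ) (Q Z : List κ) (K : List τ)
    (g g' w : τ → κ) (c d : τ → ℂ) (e : ρ → κ → ℂ) (hw : ∀ k ∈ K, w k ∈ Q ++ Z)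
    (h : ∀ k ∈ K, ∀ y ∈ R, e y (g' k) = c k * e y (g k) + d k * e y (w k)) :
    listDet R (Q ++ (K.map g' ++ Z)) e = (K.map c).prod * listDet R (Q ++ (K.map g ++ Z)) e := by
  rw [listDet_transpose, listDet_transpose R]
  exact listDet_map_smul_add_smul Q Z K g g' w c d R (flip e) hw h

lemma listDet_append_reverse (A K B : List ρ) (C : List κ) (e : ρ → κ → ℂ) :
    listDet (A ++ (K.reverse ++ B)) C e =
      (-1) ^ (∑ i ∈ Finset.range K.length, i) * listDet (A ++ (K ++ B)) C e := by
  induction K generalizing B with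
  | nil => simp
  | cons k K ih =>
    have hB := ih (k :: B)
    simp only [List.reverse_cons, List.append_assoc, List.cons_append, List.nil_append,
      List.length_cons] at hB ⊢
    rw [hB, listDet_append_cons, Finset.sum_range_succ, pow_add]
    ring

lemma listDet_append_map_of_unit {τ : Type*} [DecidableEq τ] (A : List ρ) (C : List κ)
    (K : List τ) (hK : K.Nodup) (g : τ → ρ) (h : τ → κ) (e : ρ → κ → ℂ)
    (hunit : ∀ k ∈ K, ∀ l ∈ K, e (g k) (h l) = if k = l then 1 else 0)
    (hzero : ∀ k ∈ K, ∀ y ∈ C, e (g k) y = 0) :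
    listDet (A ++ K.map g) (C ++ K.map h) e = listDet A C e := by
  induction K generalizing A C with
  | nil => simp
  | cons k K ih =>
    obtain ⟨hkK, hK⟩ := List.nodup_cons.1 hK
    have hrest := ih (A ++ [g k]) (C ++ [h k]) hK
      (fun a ha b hb => hunit a (List.mem_cons_of_mem _ ha) b (List.mem_cons_of_mem _ hb))
      (fun a ha y hy => by
        rcases List.mem_append.1 hy with hy | hy
        · exact hzero a (List.mem_cons_of_mem _ ha) y hy
        · rw [List.mem_singleton.1 hy,
            hunit a (List.mem_cons_of_mem _ ha) k List.mem_cons_self,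
            if_neg (ne_of_mem_of_not_mem ha hkK)])
    have hlast : listDet (A ++ [g k]) (C ++ [h k]) e =
        (-1) ^ A.length * ((-1) ^ C.length * listDet A C e) := by
      rw [← List.nil_append (A ++ _), ← List.nil_append (C ++ _), listDet_append_cons,
        listDet_append_cons_right, List.nil_append, List.nil_append, List.append_nil,
        List.append_nil, listDet_cons_cons_of_eq_zero _ _ (hzero k List.mem_cons_self),
        hunit k List.mem_cons_self k List.mem_cons_self, if_pos rfl, one_mul]
    simp only [List.append_assoc, List.cons_append, List.nil_append] at hrest
    rw [List.map_cons, List.map_cons, hrest, hlast]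
    by_cases hl : A.length = C.length
    · rw [hl, ← mul_assoc, pow_mul_pow_eq_one _ (by norm_num), one_mul]
    · rw [listDet_of_length_ne _ hl, mul_zero, mul_zero]

end ListDet

section Pluecker

variable {ρ κ : Type*}

lemma listDet_cons_right_of_mem {c : κ} {C : List κ} (hc : c ∈ C) (R : List ρ) (e : ρ → κ → ℂ) :
    listDet R (c :: C) e = 0 := by
  rw [listDet_transpose, listDet_cons_of_mem hc]

lemma listDet_cons_right (R : List ρ) (c : κ) (C : List κ) (e : ρ → κ → ℂ) :
    listDet R (c :: C) e = cofactorForm C R (flip e) (fun r => e r c) := by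
  rw [listDet_transpose, listDet_cons]
  rfl

theorem listDet_pluecker (p q r : ρ) (X : List ρ) (v : κ) (Y : List κ) (e : ρ → κ → ℂ) :
    listDet (p :: q :: X) (v :: Y) e * listDet (r :: X) Y e
      - listDet (p :: r :: X) (v :: Y) e * listDet (q :: X) Y e
      + listDet (q :: r :: X) (v :: Y) e * listDet (p :: X) Y e = 0 := by
  -- On the columns `Y`, Cramer's rule turns the combination `w` of three rows into one of the
  -- rows `X`.
  let w : κ → ℂ := listDet (p :: q :: X) (v :: Y) e • e r
    - listDet (p :: r :: X) (v :: Y) e • e q + listDet (q :: r :: X) (v :: Y) e • e p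
  let t (i : Fin X.length) : ℂ :=
    (-1) ^ (i : ℕ) * listDet (p :: q :: r :: X.eraseIdx i) (v :: Y) e
  have hw : ∀ y ∈ Y, w y = (∑ i, t i • e X[i]) y := by
    intro y hy
    have h0 : listDet (p :: q :: r :: X) (y :: v :: Y) e = 0 :=
      listDet_cons_right_of_mem (List.mem_cons_of_mem _ hy) _ e
    rw [listDet_cons_right, cofactorForm_apply] at h0
    simp only [← listDet_transpose, List.length_cons, Fin.sum_univ_succ, Fin.getElem_fin,
      Fin.val_zero, Fin.val_succ, List.getElem_cons_succ, List.getElem_cons_zero,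
      List.eraseIdx_cons_succ, List.eraseIdx_cons_zero, pow_succ, pow_zero] at h0
    simp only [mul_neg, mul_one, neg_neg, one_mul, neg_mul] at h0
    simp only [w, t, Finset.sum_apply, Pi.add_apply, Pi.sub_apply, Pi.smul_apply, smul_eq_mul,
      Fin.getElem_fin]
    rw [Finset.sum_neg_distrib] at h0
    linear_combination h0
  have hφ : cofactorForm X Y e w = 0 := by
    rw [cofactorForm_congr hw, map_sum]
    exact Finset.sum_eq_zero fun i _ => by
      rw [map_smul]
      exact smul_eq_zero_of_right _ (cofactorForm_of_mem (List.getElem_mem i.2) Y e)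
  simpa only [w, map_add, map_sub, map_smul, ← listDet_cons, smul_eq_mul] using hφ

theorem listDet_desnanot_jacobi (p q : ρ) (X : List ρ) (u v : κ) (Y : List κ) (e : ρ → κ → ℂ) :
    listDet (p :: q :: X) (u :: v :: Y) e * listDet X Y e
      = listDet (p :: X) (u :: Y) e * listDet (q :: X) (v :: Y) e
        - listDet (p :: X) (v :: Y) e * listDet (q :: X) (u :: Y) e := by
  -- The Laplace expansion of `listDet (r :: q :: X) (u :: v :: Y) e` along its first row exhibits
  -- it, as a function of `r`, as a combination of columns; it vanishes for `r ∈ X`.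
  let w : ρ → ℂ := fun r => listDet (r :: q :: X) (u :: v :: Y) e
  let t (j : Fin Y.length) : ℂ := (-1) ^ (j : ℕ) * listDet (q :: X) (u :: v :: Y.eraseIdx j) e
  have hw : w = listDet (q :: X) (v :: Y) e • flip e u - listDet (q :: X) (u :: Y) e • flip e v
      + ∑ j, t j • flip e Y[j] := by
    ext r
    simp only [w, t]
    rw [listDet_cons, cofactorForm_apply]
    simp only [List.length_cons, Fin.sum_univ_succ, Fin.getElem_fin, Fin.val_zero, Fin.val_succ,
      List.getElem_cons_zero, List.getElem_cons_succ, List.eraseIdx_cons_zero,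
      List.eraseIdx_cons_succ, pow_succ, pow_zero, mul_neg, neg_mul, mul_one, one_mul,
      Finset.sum_neg_distrib, Pi.add_apply, Pi.sub_apply, Pi.smul_apply, Finset.sum_apply,
      smul_eq_mul, flip]
    ring
  have hX : ∀ r ∈ X, w r = 0 := fun r hr => listDet_cons_of_mem (List.mem_cons_of_mem _ hr) _ e
  have hφ : cofactorForm Y (p :: X) (flip e) w = w p * listDet X Y e := by
    rw [cofactorForm_eq_of_eq_zero hX, ← listDet_transpose]
  have hφY : ∑ j, cofactorForm Y (p :: X) (flip e) (t j • flip e Y[j]) = 0 :=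
    Finset.sum_eq_zero fun j _ => by
      rw [map_smul]
      exact smul_eq_zero_of_right _ (cofactorForm_of_mem (List.getElem_mem j.2) _ _)
  rw [← hφ, hw, map_add, map_sum, hφY, add_zero, map_sub, map_smul, map_smul, ← listDet_cons,
    ← listDet_cons, ← listDet_transpose, ← listDet_transpose, smul_eq_mul, smul_eq_mul]
  ring

end Pluecker

section PlueckerAppend

variable {ρ κ : Type*}

lemma listDet_append_cons_append_cons (P : List ρ) (p : ρ) (A : List ρ) (q : ρ) (Z : List ρ)
    (C : List κ) (e : ρ → κ → ℂ) :
    listDet (P ++ p :: (A ++ q :: Z)) C e =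
      (-1) ^ (P.length + (P.length + A.length)) *
        listDet (p :: q :: (P ++ (A ++ Z))) C e := by
  have hp := listDet_append_cons [] P p (A ++ q :: Z) C e
  have hq := listDet_append_cons [p] (P ++ A) q Z C e
  simp only [List.nil_append, List.singleton_append, List.append_assoc] at hp hq
  rw [hp, hq, List.length_append]
  ring

theorem listDet_pluecker_append (P : List ρ) (p : ρ) (A : List ρ) (q : ρ) (B : List ρ) (r : ρ)
    (Z : List ρ) (W : List κ) (v : κ) (Y : List κ) (e : ρ → κ → ℂ) :
    listDet (P ++ p :: (A ++ q :: (B ++ Z))) (W ++ v :: Y) e *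
        listDet (P ++ (A ++ (B ++ r :: Z))) (W ++ Y) e
      - listDet (P ++ p :: (A ++ (B ++ r :: Z))) (W ++ v :: Y) e *
        listDet (P ++ (A ++ q :: (B ++ Z))) (W ++ Y) e
      + listDet (P ++ (A ++ q :: (B ++ r :: Z))) (W ++ v :: Y) e *
        listDet (P ++ p :: (A ++ (B ++ Z))) (W ++ Y) e = 0 := by
  have hp := listDet_append_cons [] P p (A ++ (B ++ Z)) (W ++ Y) e
  have hq := listDet_append_cons [] (P ++ A) q (B ++ Z) (W ++ Y) e
  have hr := listDet_append_cons [] (P ++ (A ++ B)) r Z (W ++ Y) e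
  have hpq := listDet_append_cons_append_cons P p A q (B ++ Z) (W ++ v :: Y) e
  have hpr := listDet_append_cons_append_cons P p (A ++ B) r Z (W ++ v :: Y) e
  have hqr := listDet_append_cons_append_cons (P ++ A) q B r Z (W ++ v :: Y) e
  have hv (R : List ρ) := listDet_append_cons_right R [] W v Y e
  simp only [List.nil_append, List.append_assoc, List.length_append] at *
  rw [hp, hq, hr, hpq, hpr, hqr, hv, hv, hv]
  linear_combination
    (-1) ^ (W.length + P.length + (P.length + A.length) + (P.length + A.length + B.length)) *
      listDet_pluecker p q r (P ++ (A ++ (B ++ Z))) v (W ++ Y) e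

theorem listDet_pluecker_append_right (P : List κ) (p : κ) (A : List κ) (q : κ) (B : List κ)
    (r : κ) (Z : List κ) (W : List ρ) (v : ρ) (Y : List ρ) (e : ρ → κ → ℂ) :
    listDet (W ++ v :: Y) (P ++ p :: (A ++ q :: (B ++ Z))) e *
        listDet (W ++ Y) (P ++ (A ++ (B ++ r :: Z))) e
      - listDet (W ++ v :: Y) (P ++ p :: (A ++ (B ++ r :: Z))) e *
        listDet (W ++ Y) (P ++ (A ++ q :: (B ++ Z))) e
      + listDet (W ++ v :: Y) (P ++ (A ++ q :: (B ++ r :: Z))) e *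
        listDet (W ++ Y) (P ++ p :: (A ++ (B ++ Z))) e = 0 := by
  simpa only [listDet_transpose (W ++ v :: Y), listDet_transpose (W ++ Y)]
    using listDet_pluecker_append P p A q B r Z W v Y (flip e)

theorem listDet_desnanot_jacobi_append (P : List ρ) (p : ρ) (A : List ρ) (q : ρ) (Z : List ρ)
    (W : List κ) (u : κ) (T : List κ) (v : κ) (Y : List κ) (e : ρ → κ → ℂ) :
    listDet (P ++ p :: (A ++ q :: Z)) (W ++ u :: (T ++ v :: Y)) e *
        listDet (P ++ (A ++ Z)) (W ++ (T ++ Y)) e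
      = listDet (P ++ p :: (A ++ Z)) (W ++ u :: (T ++ Y)) e *
          listDet (P ++ (A ++ q :: Z)) (W ++ (T ++ v :: Y)) e
        - listDet (P ++ p :: (A ++ Z)) (W ++ (T ++ v :: Y)) e *
          listDet (P ++ (A ++ q :: Z)) (W ++ u :: (T ++ Y)) e := by
  have hp (C : List κ) := listDet_append_cons [] P p (A ++ Z) C e
  have hq (C : List κ) := listDet_append_cons [] (P ++ A) q Z C e
  have hpq (C : List κ) := listDet_append_cons_append_cons P p A q Z C e
  have hu (R : List ρ) := listDet_append_cons_right R [] W u (T ++ Y) e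
  have hv (R : List ρ) := listDet_append_cons_right R [] (W ++ T) v Y e
  have huv := listDet_append_cons_append_cons W u T v Y (p :: q :: (P ++ (A ++ Z))) (flip e)
  simp only [← listDet_transpose, List.nil_append, List.append_assoc, List.length_append] at *
  rw [hpq, huv, hp, hp, hq, hq, hu, hu, hv, hv]
  linear_combination
    (-1) ^ (P.length + (P.length + A.length) + (W.length + (W.length + T.length))) *
      listDet_desnanot_jacobi p q (P ++ (A ++ Z)) u v (W ++ (T ++ Y)) e

end PlueckerAppend

section Segments

lemma seg_eq_map_range (a b : ℤ) :
    seg a b = (List.range (b - a + 1).toNat).map fun k : ℕ => a + (k : ℤ) := by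
  -- `seg` maps over the coerced list of integers.
  unfold seg
  induction List.range (b - a + 1).toNat with
  | nil => rfl
  | cons x l ih => simpa using ih

lemma mem_seg {a b x : ℤ} : x ∈ seg a b ↔ a ≤ x ∧ x ≤ b := by
  simp only [seg_eq_map_range, List.mem_map, List.mem_range]
  constructor
  · rintro ⟨k, hk, rfl⟩
    omega
  · rintro ⟨h1, h2⟩
    exact ⟨(x - a).toNat, by omega, by omega⟩

lemma length_seg (a b : ℤ) : (seg a b).length = (b - a + 1).toNat := by simp [seg_eq_map_range]

lemma cast_length_seg (a b : ℤ) : ((seg a b).length : ℤ) = max (b - a + 1) 0 := by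
  rw [length_seg, Int.ofNat_toNat]

lemma getElem_seg (a b : ℤ) (i : ℕ) (h : i < (seg a b).length) : (seg a b)[i] = a + i := by
  simp [seg_eq_map_range]

lemma nodup_seg (a b : ℤ) : (seg a b).Nodup := by
  rw [seg_eq_map_range]
  exact List.nodup_range.map fun x y h => by simpa using h

lemma seg_eq_nil {a b : ℤ} (h : b < a) : seg a b = [] := by
  apply List.length_eq_zero_iff.1
  rw [length_seg]
  omega

lemma seg_append_seg {a b c : ℤ} (h₁ : a ≤ b + 1) (h₂ : b ≤ c) :
    seg a b ++ seg (b + 1) c = seg a c := by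
  apply List.ext_getElem
  · simp only [List.length_append, length_seg]
    omega
  · intro i h h'
    rw [List.getElem_append, getElem_seg]
    split_ifs with hi
    · rw [getElem_seg]
    · rw [getElem_seg]
      rw [length_seg] at hi ⊢
      omega

lemma seg_self (a : ℤ) : seg a a = [a] := by
  simp [seg_eq_map_range]

lemma seg_cons {a b : ℤ} (h : a ≤ b) : seg a b = a :: seg (a + 1) b := by
  rw [← seg_append_seg (b := a) (by omega) h, seg_self, List.singleton_append]

lemma seg_snoc {a b : ℤ} (h : a ≤ b + 1) : seg a (b + 1) = seg a b ++ [b + 1] := by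
  rw [← seg_append_seg h (by omega), seg_self]

lemma map_add_one_seg (a b : ℤ) : (seg a b).map (· + 1) = seg (a + 1) (b + 1) := by
  apply List.ext_getElem
  · simp [length_seg]
  · intro i h h'
    rw [List.getElem_map, getElem_seg, getElem_seg]
    ring

lemma map_one_sub_seg (a b : ℤ) : (seg a b).map (1 - ·) = (seg (1 - b) (1 - a)).reverse := by
  apply List.ext_getElem
  · simp only [List.length_map, List.length_reverse, length_seg]
    omega
  · intro i h h'
    rw [List.getElem_map, List.getElem_reverse, getElem_seg, getElem_seg, length_seg]
    rw [List.length_map, length_seg] at h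
    omega

end Segments

section Signs

lemma neg_one_zpow_congr {m n : ℤ} (h : Even (m - n)) : (-1 : ℂ) ^ m = (-1) ^ n := by
  rw [← sub_add_cancel m n, zpow_add₀ (by norm_num), h.neg_one_zpow, one_mul]

lemma neg_one_zpow_add (m n : ℤ) : (-1 : ℂ) ^ (m + n) = (-1) ^ m * (-1) ^ n :=
  zpow_add₀ (by norm_num) m n

lemma neg_one_zpow_mul_self (m : ℤ) : (-1 : ℂ) ^ m * (-1) ^ m = 1 := by
  rw [← neg_one_zpow_add, Even.neg_one_zpow ⟨m, rfl⟩]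

lemma neg_one_pow_eq_zpow (n : ℕ) : (-1 : ℂ) ^ n = (-1) ^ (n : ℤ) := (zpow_natCast _ _).symm

end Signs

section SegmentBlocks

variable {ρ κ : Type*}

lemma listDet_append_seg_of_unit (A : List ρ) (C : List κ) (g : ℤ → ρ) (h : ℤ → κ)
    (e : ρ → κ → ℂ) {p q L : ℤ} (hp : p ≤ L + 1) (hq : q ≤ L + 1)
    (hunit : ∀ i j, e (g i) (h j) = if i = j then 1 else 0)
    (hzero : ∀ i, p ≤ i → q ≤ i → ∀ y ∈ C, e (g i) y = 0) :
    listDet (A ++ (seg p L).map g) (C ++ (seg q L).map h) e =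
      listDet (A ++ (seg p (q - 1)).map g) (C ++ (seg q (p - 1)).map h) e := by
  rcases le_total p q with hpq | hqp
  · rw [← seg_append_seg (a := p) (b := q - 1) (by omega) (by omega), sub_add_cancel,
      List.map_append, ← List.append_assoc, seg_eq_nil (b := p - 1) (by omega),
      List.map_nil, List.append_nil]
    refine listDet_append_map_of_unit _ _ _ (nodup_seg _ _) g h e (fun k _ l _ => hunit k l) ?_
    intro k hk
    rw [mem_seg] at hk
    exact hzero k (by omega) hk.1
  · rw [← seg_append_seg (a := q) (b := p - 1) (by omega) (by omega), sub_add_cancel,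
      List.map_append, ← List.append_assoc, seg_eq_nil (b := q - 1) (by omega),
      List.map_nil, List.append_nil]
    refine listDet_append_map_of_unit _ _ _ (nodup_seg _ _) g h e (fun k _ l _ => hunit k l) ?_
    simp only [List.forall_mem_append, List.forall_mem_map, mem_seg]
    intro k hk
    refine ⟨hzero k hk.1 (by omega), fun j hj => ?_⟩
    rw [hunit, if_neg (by omega)]

lemma listDet_append_seg_append_of_unit (A A' : List ρ) (C C' : List κ) (g : ℤ → ρ) (h : ℤ → κ)
    (e : ρ → κ → ℂ) {p q L : ℤ} (hp : p ≤ L + 1) (hq : q ≤ L + 1)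
    (hunit : ∀ i j, e (g i) (h j) = if i = j then 1 else 0)
    (hzero : ∀ i, p ≤ i → q ≤ i → ∀ y ∈ C ++ C', e (g i) y = 0) :
    listDet (A ++ ((seg p L).map g ++ A')) (C ++ ((seg q L).map h ++ C')) e =
      (-1) ^ ((L + 1 - max p q) * (A'.length + C'.length)) *
        listDet (A ++ ((seg p (q - 1)).map g ++ A')) (C ++ ((seg q (p - 1)).map h ++ C')) e := by
  have hunit' := listDet_append_seg_of_unit (A ++ A') (C ++ C') g h e hp hq hunit hzero
  have hrows (K : List ℤ) (D : List κ) := listDet_append_comm A (K.map g) A' [] D e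
  have hcols (K : List ℤ) (R : List ρ) := listDet_append_comm_right R C (K.map h) C' [] e
  simp only [List.append_nil, List.append_assoc, List.length_map, neg_one_pow_eq_zpow,
    Nat.cast_mul] at hunit' hrows hcols
  rw [hrows, hcols, hunit', hrows, hcols]
  simp only [← mul_assoc, ← neg_one_zpow_add, cast_length_seg]
  congr 1
  refine neg_one_zpow_congr ?_
  grind

lemma listDet_map_seg_reflect (A B : List ρ) (C : List κ) (e : ρ → κ → ℂ) (g g' : ℤ → ρ)
    (p q : ℤ) (c : ℂ)
    (h : ∀ r ∈ seg p q, ∀ y ∈ C, e (g' r) y = c * (-1) ^ (r - p) * e (g (1 - r)) y) :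
    listDet (A ++ ((seg p q).map g' ++ B)) C e =
      c ^ (q - p + 1).toNat * listDet (A ++ ((seg (1 - q) (1 - p)).map g ++ B)) C e := by
  -- The signs `(-1) ^ (r - p)` compensate the sign of the reversal.
  have hprod : ((seg p q).map fun r => c * (-1 : ℂ) ^ (r - p)).prod =
      c ^ (q - p + 1).toNat * (-1) ^ (∑ i ∈ Finset.range (q - p + 1).toNat, i) := by
    rw [seg_eq_map_range, List.map_map, ← Finset.prod_pow_eq_pow_sum]
    generalize (q - p + 1).toNat = n
    induction n with
    | zero => simp
    | succ n ih =>
      rw [List.range_succ, List.map_append, List.prod_append, ih, Finset.prod_range_succ, pow_succ]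
      simp only [List.map_cons, List.map_nil, List.prod_singleton, Function.comp_apply,
        add_sub_cancel_left, zpow_natCast]
      ring
  have hrev : (seg p q).map (fun r => g (1 - r)) = ((seg (1 - q) (1 - p)).map g).reverse := by
    rw [← List.map_reverse, ← map_one_sub_seg, List.map_map]
    rfl
  rw [listDet_map_smul A B (seg p q) (fun r => g (1 - r)) g' _ C e h, hrev, listDet_append_reverse,
    hprod, List.length_map, length_seg, ← mul_assoc, show 1 - p - (1 - q) + 1 = q - p + 1 by ring,
    mul_assoc (c ^ _), pow_mul_pow_eq_one _ (by norm_num), mul_one]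

end SegmentBlocks

section Table

/-- A function of a variable `y` given together with its expansion at `y = ∞`: the zero function,
the function `(y / x) ^ t / (y - x) = ∑_{i ≤ t} x ^ (-i) * y ^ (i - 1)`, or `y ^ (j - 1)`. -/
inductive Component
  | zero
  | tail (t : ℤ) (x : ℂ)
  | pow (j : ℤ)

namespace Component

/-- The value at `y`. -/
noncomputable def eval (y : ℂ) : Component → ℂ
  | zero => 0
  | tail t x => (y / x) ^ t / (y - x)
  | pow j => y ^ (j - 1)

/-- The coefficient of `y ^ (i - 1)` in the expansion at infinity. -/
noncomputable def coeff (i : ℤ) : Component → ℂ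
  | zero => 0
  | tail t x => if i ≤ t then x ^ (-i) else 0
  | pow j => if i = j then 1 else 0

/-- The entries of the rows `R` of `Delta`: up to sign, the coefficient of `y ^ (-r)` in the
expansion at infinity, continued beyond the leading term. -/
noncomputable def moment (r : ℤ) : Component → ℂ
  | tail _ x => (-x) ^ (r - 1)
  | _ => 0

lemma eval_tail_add_one {x y : ℂ} (t : ℤ) (hx : x ≠ 0) (hxy : y - x ≠ 0) (hy : y ≠ 0 ∨ t = 0) :
    eval y (tail (t + 1) x) = eval y (tail t x) + x ^ (-(t + 1)) * eval y (pow (t + 1)) := by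
  rcases hy with hy | rfl
  · simp only [eval, add_sub_cancel_right, zpow_add₀ (div_ne_zero hy hx), zpow_one, zpow_neg,
      zpow_add₀ hx, div_zpow]
    have := zpow_ne_zero t hx
    field_simp
    ring
  · simp only [eval, zero_add, zpow_one, zpow_zero, zpow_neg, sub_self]
    field_simp
    ring

lemma coeff_tail_add_one (i t : ℤ) (x : ℂ) :
    coeff i (tail (t + 1) x) = coeff i (tail t x) + x ^ (-(t + 1)) * coeff i (pow (t + 1)) := by
  simp only [coeff]
  rcases lt_trichotomy i (t + 1) with h | rfl | h
  · simp [h.le, h.ne, show i ≤ t by omega]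
  · simp
  · simp [h.not_ge, h.ne', show ¬ i ≤ t by omega]

lemma eval_tail_one (x y : ℂ) : eval y (tail 1 x) = y * (x⁻¹ * eval y (tail 0 x)) := by
  simp only [eval, zpow_one, zpow_zero]
  ring

lemma eval_pow_add_one {y : ℂ} (hy : y ≠ 0) (j : ℤ) :
    eval y (pow (j + 1)) = y * eval y (pow j) := by
  simp only [eval]
  rw [← zpow_one_add₀ hy]
  ring_nf

lemma coeff_tail_one {x : ℂ} (hx : x ≠ 0) (i : ℤ) :
    coeff (i + 1) (tail 1 x) = x⁻¹ * coeff i (tail 0 x) := by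
  simp only [coeff, mul_ite, mul_zero, ← zpow_neg_one, ← zpow_add₀ hx]
  exact if_congr (by omega) (by ring_nf) rfl

end Component

open Component

/-- The label of a column: a pair of components, the first one for the points of `B1` and the
second one for those of `B2`. -/
abbrev Column := Component × Component

/-- The row of the point `y ∈ B1`. -/
noncomputable def pointRow₁ (y : ℂ) (c : Column) : ℂ := c.1.eval y

/-- The row of the point `y ∈ B2`. -/
noncomputable def pointRow₂ (y : ℂ) (c : Column) : ℂ := c.2.eval y

/-- The row of the `i`-th expansion coefficient of the first components. -/
noncomputable def coeffRow₁ (i : ℤ) (c : Column) : ℂ := c.1.coeff i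

/-- The row of the `i`-th expansion coefficient of the second components. -/
noncomputable def coeffRow₂ (i : ℤ) (c : Column) : ℂ := c.2.coeff i

/-- The row `r ∈ R` of `Delta`. -/
noncomputable def momentRow (r : ℤ) (c : Column) : ℂ := c.1.moment r

/-- The column of a point `x ∈ F`; it carries `1 / (y - x)` in both components if `s = t = 0`. -/
def tailCol (s t : ℤ) (x : ℂ) : Column := (tail s x, tail t x)

/-- The column of the power `j ∈ S`. -/
def powCol (j : ℤ) : Column := (pow j, pow j)

/-- The column of the power `j ∈ T1`. -/
def powCol₁ (j : ℤ) : Column := (pow j, zero)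

/-- The column of the power `j ∈ T2`. -/
def powCol₂ (j : ℤ) : Column := (zero, pow j)

lemma Delta_eq_listDet {ι : Type*} (z : ι → ℂ) (B1 B2 F : List ι) (R S T1 T2 : List ℤ) (η : ℤ)
    (h : η = 0 ∨ S = []) :
    Delta z B1 B2 F R S T1 T2 η = (-1) ^ (η * (B2.length + T2.length)) *
      listDet ((B1.map z).map pointRow₁ ++ ((B2.map z).map pointRow₂ ++ R.map momentRow))
        ((F.map z).map (tailCol 0 (-η)) ++ (S.map powCol ++ (T1.map powCol₁ ++ T2.map powCol₂)))
        id := by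
  let row : ι ⊕ (ι ⊕ ℤ) → Column → ℂ :=
    Sum.elim (pointRow₁ ∘ z) (Sum.elim (pointRow₂ ∘ z) momentRow)
  let col : ι ⊕ (ℤ ⊕ (ℤ ⊕ ℤ)) → Column :=
    Sum.elim (tailCol 0 (-η) ∘ z) (Sum.elim powCol (Sum.elim powCol₁ powCol₂))
  let u : ι ⊕ (ι ⊕ ℤ) → ℂ := Sum.elim 1 (Sum.elim (fun _ => (-1) ^ η) 1)
  let v : ι ⊕ (ℤ ⊕ (ℤ ⊕ ℤ)) → ℂ := Sum.elim 1 (Sum.elim 1 (Sum.elim 1 fun _ => (-1) ^ η))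
  let rows := B1.map Sum.inl ++ B2.map (Sum.inr ∘ Sum.inl) ++ R.map (Sum.inr ∘ Sum.inr)
  let cols := F.map Sum.inl ++ S.map (Sum.inr ∘ Sum.inl) ++ T1.map (Sum.inr ∘ Sum.inr ∘ Sum.inl) ++
    T2.map (Sum.inr ∘ Sum.inr ∘ Sum.inr)
  have hrows : rows.map row =
      (B1.map z).map pointRow₁ ++ ((B2.map z).map pointRow₂ ++ R.map momentRow) := by
    simp [rows, row, Function.comp_def]
  have hcols : cols.map col = (F.map z).map (tailCol 0 (-η)) ++
      (S.map powCol ++ (T1.map powCol₁ ++ T2.map powCol₂)) := by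
    simp [cols, col, Function.comp_def]
  have hsign : (-1 : ℂ) ^ (η * (B2.length + T2.length)) =
      (rows.map u).prod * (cols.map v).prod := by
    have hne : (-1 : ℂ) ^ η ≠ 0 := zpow_ne_zero _ (by norm_num)
    simp [rows, cols, u, v, Function.comp_def, zpow_mul, zpow_add₀ hne]
  rw [← hrows, ← hcols, hsign, listDet_map_map, mul_assoc, ← listDet_mul_right, ← listDet_mul_left]
  refine listDet_congr ?_
  have hpole (b f : ι) : (-z f / z b) ^ η / (z b - z f) =
      (-1) ^ η * (((z b / z f) ^ η)⁻¹ / (z b - z f)) := by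
    rw [← inv_zpow, inv_div, neg_div, neg_eq_neg_one_mul, mul_zpow, mul_div_assoc]
  have hpow (b : ι) (j : ℤ) (hj : j ∈ S) : z b ^ (j - 1) = (-1) ^ η * z b ^ (j - 1) := by
    rcases h with rfl | rfl
    · simp
    · simp at hj
  rintro (b | b | r) - (f | j | j | j) hc
  case inr.inl.inr.inl =>
    simpa [u, v, row, col, pointRow₂, powCol, eval] using hpow b j (by simpa using hc)
  all_goals simp [u, v, row, col, pointRow₁, pointRow₂, momentRow, tailCol, powCol, powCol₁,
    powCol₂, eval, moment, hpole, ← mul_assoc, neg_one_zpow_mul_self]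

end Table

section Wings

open Component

/-- The determinant with the rows of `B₁` and `B₂`, the coefficient rows `c, …, L`, the columns
of `F`, the columns `lo, …, hi` of `T2` and the columns `1, …, L` of `S`. It represents all the
`Delta` of the eight regions; `L` is a truncation order of the expansions at infinity. -/
noncomputable def truncDet (B₁ B₂ F : List ℂ) (c lo hi L : ℤ) : ℂ :=
  listDet (B₁.map pointRow₁ ++ (B₂.map pointRow₂ ++ (seg c L).map coeffRow₂))
    (F.map (tailCol 0 0) ++ ((seg lo hi).map powCol₂ ++ (seg 1 L).map powCol)) id

lemma listDet_coeffRow₂_eq_momentRow (B₁ B₂ F : List ℂ) {β L : ℤ} (hL : 0 ≤ L) (hβ : -β ≤ L)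
    (K : List ℤ) (col : ℤ → Column)
    (hcoeff : ∀ j ∈ K, ∀ i, 1 - β ≤ i → coeffRow₂ i (col j) = 0)
    (hmoment : ∀ j ∈ K, ∀ r, momentRow r (col j) = 0) :
    listDet (B₁.map pointRow₁ ++ (B₂.map pointRow₂ ++ (seg (1 - β) L).map coeffRow₂))
        (F.map (tailCol 0 0) ++ (K.map col ++ (seg 1 L).map powCol)) id =
      (-1) ^ (K.length * max (-β) 0) *
        listDet (B₁.map pointRow₁ ++ (B₂.map pointRow₂ ++ (seg 1 β).map momentRow))
          (F.map (tailCol 0 0) ++ ((seg 1 (-β)).map powCol ++ K.map col)) id := by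
  have hblock := listDet_append_seg_of_unit (B₁.map pointRow₁ ++ B₂.map pointRow₂)
    (F.map (tailCol 0 0) ++ K.map col) coeffRow₂ powCol id (p := 1 - β) (q := 1) (L := L)
    (by omega) (by omega) (fun i j => rfl) (by
      simp only [List.forall_mem_append, List.forall_mem_map]
      exact fun i hi hi' => ⟨fun x _ => if_neg (by omega), fun j hj => hcoeff j hj i hi⟩)
  have hreflect := listDet_map_seg_reflect (B₁.map pointRow₁ ++ B₂.map pointRow₂) []
    (F.map (tailCol 0 0) ++ (K.map col ++ (seg 1 (-β)).map powCol)) id coeffRow₂ momentRow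
    1 β 1 (by
      simp only [List.forall_mem_append, List.forall_mem_map, mem_seg]
      refine fun r hr => ⟨fun x _ => ?_, fun j hj => ?_, fun j hj => ?_⟩
      · simp only [id, momentRow, coeffRow₂, tailCol, moment, coeff]
        rw [if_pos (by omega), one_mul, neg_sub, ← mul_zpow, neg_one_mul]
      · simp only [id]
        rw [hmoment j hj, hcoeff j hj _ (by omega), mul_zero]
      · simp only [id, momentRow, coeffRow₂, powCol, moment, coeff]
        rw [if_neg (by omega), mul_zero])
  have hcomm := listDet_append_comm_right
    (B₁.map pointRow₁ ++ (B₂.map pointRow₂ ++ (seg 1 β).map momentRow))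
    (F.map (tailCol 0 0)) (K.map col) ((seg 1 (-β)).map powCol) [] id
  simp only [List.append_assoc, List.append_nil, one_pow, one_mul, sub_self]
    at hblock hreflect hcomm
  rw [hblock, show 1 - β - 1 = -β by ring, ← hreflect, hcomm, neg_one_pow_eq_zpow]
  congr 2
  simp [cast_length_seg]

lemma truncDet_right_wing {ι : Type*} (z : ι → ℂ) (B1 B2 F : List ι) {β lo hi L : ℤ} (hL : 0 ≤ L)
    (hβ : -β ≤ L) (hlo : 1 ≤ lo) (hlohi : lo ≤ hi + 1) (hhi : hi ≤ L) :
    truncDet (B1.map z) (B2.map z) (F.map z) (1 - β) lo hi L =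
      (-1) ^ ((hi - lo + 1) * (1 + max (-β) 0)) *
        Delta z B1 B2 F (seg 1 β) (seg 1 (-β)) (seg lo hi) [] 0 := by
  have hlen : ((seg lo hi).length : ℤ) = hi - lo + 1 := by
    rw [cast_length_seg, max_eq_left (by omega)]
  have hsub := listDet_map_smul_add_smul_right
    ((B1.map z).map pointRow₁ ++ ((B2.map z).map pointRow₂ ++ (seg (1 - β) L).map coeffRow₂))
    ((F.map z).map (tailCol 0 0)) ((seg 1 L).map powCol) (seg lo hi) powCol₁ powCol₂ powCol
    (fun _ => -1) (fun _ => 1) id (by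
      refine fun j hj => List.mem_append_right _ (List.mem_map_of_mem ?_)
      rw [mem_seg] at hj ⊢
      omega) (by
      simp only [List.forall_mem_append, List.forall_mem_map]
      refine fun j _ => ⟨fun y _ => ?_, fun y _ => ?_, fun i _ => ?_⟩ <;>
        simp [pointRow₁, pointRow₂, coeffRow₂, powCol, powCol₁, powCol₂, eval, coeff])
  rw [Delta_eq_listDet z B1 B2 F _ _ _ _ 0 (Or.inl rfl), truncDet, hsub,
    listDet_coeffRow₂_eq_momentRow _ _ _ hL hβ _ _ (fun _ _ _ _ => rfl) (fun _ _ _ => rfl),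
    List.map_const', List.prod_replicate, neg_one_pow_eq_zpow, hlen, mul_add, mul_one,
    neg_one_zpow_add (hi - lo + 1), zero_mul, zpow_zero, one_mul, List.map_nil, List.append_nil,
    neg_zero, mul_assoc]

lemma truncDet_left_wing {ι : Type*} (z : ι → ℂ) (B1 B2 F : List ι) {β lo hi L : ℤ} (hL : 0 ≤ L)
    (hβ : -β ≤ L) (hhi : hi ≤ -β) (hlohi : lo ≤ hi + 1) :
    truncDet (B1.map z) (B2.map z) (F.map z) (1 - β) lo hi L =
      (-1) ^ ((hi - lo + 1) * max (-β) 0) *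
        Delta z B1 B2 F (seg 1 β) (seg 1 (-β)) [] (seg lo hi) 0 := by
  have hlen : ((seg lo hi).length : ℤ) = hi - lo + 1 := by
    rw [cast_length_seg, max_eq_left (by omega)]
  have hcoeff : ∀ j ∈ seg lo hi, ∀ i, 1 - β ≤ i → coeffRow₂ i (powCol₂ j) = 0 := by
    intro j hj i hi
    rw [mem_seg] at hj
    exact if_neg (by omega)
  rw [Delta_eq_listDet z B1 B2 F _ _ _ _ 0 (Or.inl rfl), truncDet,
    listDet_coeffRow₂_eq_momentRow _ _ _ hL hβ _ _ hcoeff (fun _ _ _ => rfl), hlen, zero_mul,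
    zpow_zero, one_mul, List.map_nil, List.nil_append, neg_zero]

end Wings

section Central

open Component

/-- The determinant with independent coefficient rows for the two components, from which both
`truncDet` and the `Delta` of the regions `(1)`–`(4)` are obtained by elimination. -/
noncomputable def centralDet (B₁ B₂ F : List ℂ) (α β η L : ℤ) : ℂ :=
  listDet (B₁.map pointRow₁ ++ (B₂.map pointRow₂ ++
      ((seg (1 - α) L).map coeffRow₁ ++ (seg (1 - β) L).map coeffRow₂)))
    (F.map (tailCol 0 0) ++ ((seg 1 L).map powCol ++ (seg (1 - η) L).map powCol₂)) id

lemma centralDet_eq_listDet_trunc (B₁ B₂ F : List ℂ) {α β η L : ℤ} (hα : -α ≤ L) (hαβ : α ≤ β)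
    (hαη : α ≤ η) :
    centralDet B₁ B₂ F α β η L =
      listDet (B₁.map pointRow₁ ++ (B₂.map pointRow₂ ++
          ((seg (1 - α) L).map coeffRow₁ ++ (seg (1 - β) (-α)).map coeffRow₂)))
        (F.map (tailCol 0 0) ++ ((seg 1 L).map powCol ++ (seg (1 - η) (-α)).map powCol₂)) id := by
  -- The differences of the two coefficient rows of index `i > -α` only meet the columns of `T2`.
  let rows := B₁.map pointRow₁ ++ (B₂.map pointRow₂ ++
    ((seg (1 - α) L).map coeffRow₁ ++ (seg (1 - β) (-α)).map coeffRow₂))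
  let diffRow (i : ℤ) : Column → ℂ := coeffRow₂ i - coeffRow₁ i
  have hsplit (t : ℤ) (ht : α ≤ t) : seg (1 - t) L = seg (1 - t) (-α) ++ seg (1 - α) L := by
    rw [← seg_append_seg (b := -α) (by omega) (by omega), neg_add_eq_sub]
  have hdiff := listDet_map_smul_add_smul rows [] (seg (1 - α) L) diffRow coeffRow₂ coeffRow₁ 1 1
    (F.map (tailCol 0 0) ++ ((seg 1 L).map powCol ++ (seg (1 - η) L).map powCol₂)) id (by
      intro i hi
      simp only [rows, List.append_nil, List.mem_append]
      exact Or.inr (Or.inr (Or.inl (List.mem_map_of_mem hi)))) (by simp [diffRow])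
  have helim := listDet_append_map_of_unit rows
    (F.map (tailCol 0 0) ++ ((seg 1 L).map powCol ++ (seg (1 - η) (-α)).map powCol₂))
    (seg (1 - α) L) (nodup_seg _ _) diffRow powCol₂ id
    (by simp [diffRow, coeffRow₁, coeffRow₂, powCol₂, coeff]) (by
      simp only [List.forall_mem_append, List.forall_mem_map, mem_seg]
      refine fun i hi => ⟨fun x _ => sub_self _, fun j _ => sub_self _, fun j hj => ?_⟩
      simp only [id, diffRow, Pi.sub_apply, coeffRow₁, coeffRow₂, powCol₂, coeff]
      rw [if_neg (by omega), sub_self])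
  simp only [rows, List.append_assoc, List.append_nil, Pi.one_def, List.map_const',
    List.prod_replicate, one_pow, one_mul] at hdiff helim
  rw [centralDet, hsplit β hαβ, List.map_append, hdiff, hsplit η hαη, List.map_append, helim]

lemma centralDet_eq_truncDet (B₁ B₂ F : List ℂ) {α β η L : ℤ} (hL : 0 ≤ L) (hα : -α ≤ L)
    (hαβ : α ≤ β) (hαη : α ≤ η) :
    centralDet B₁ B₂ F α β η L =
      (-1) ^ ((L + α) * (β - α) + L * (η - α)) * truncDet B₁ B₂ F (1 - β) (1 - η) (-α) L := by
  have hrows := listDet_append_comm (B₁.map pointRow₁ ++ B₂.map pointRow₂)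
    ((seg (1 - α) L).map coeffRow₁) ((seg (1 - β) (-α)).map coeffRow₂) []
    (F.map (tailCol 0 0) ++ ((seg 1 L).map powCol ++ (seg (1 - η) (-α)).map powCol₂)) id
  have hcols := listDet_append_comm_right (B₁.map pointRow₁ ++ (B₂.map pointRow₂ ++
      ((seg (1 - β) (-α)).map coeffRow₂ ++ (seg (1 - α) L).map coeffRow₁)))
    (F.map (tailCol 0 0)) ((seg 1 L).map powCol) ((seg (1 - η) (-α)).map powCol₂) [] id
  have hcoeff := listDet_map_smul (B₁.map pointRow₁ ++ (B₂.map pointRow₂ ++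
      (seg (1 - β) (-α)).map coeffRow₂)) [] (seg (1 - α) L) coeffRow₂ coeffRow₁ 1
    (F.map (tailCol 0 0) ++ ((seg (1 - η) (-α)).map powCol₂ ++ (seg 1 L).map powCol)) id (by
      simp only [List.forall_mem_append, List.forall_mem_map, mem_seg, Pi.one_apply, one_mul]
      refine fun i hi => ⟨fun x _ => rfl, fun j hj => ?_, fun j _ => rfl⟩
      exact (if_neg (by omega)).symm)
  have hsplit : seg (1 - β) L = seg (1 - β) (-α) ++ seg (1 - α) L := by
    rw [← seg_append_seg (b := -α) (by omega) (by omega), neg_add_eq_sub]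
  simp only [List.append_assoc, List.append_nil, Pi.one_def, List.map_const',
    List.prod_replicate, one_pow, one_mul] at hrows hcols hcoeff
  rw [centralDet_eq_listDet_trunc B₁ B₂ F hα hαβ hαη, hrows, hcols, hcoeff, truncDet, hsplit,
    List.map_append, ← mul_assoc, neg_one_pow_eq_zpow, neg_one_pow_eq_zpow, ← neg_one_zpow_add]
  simp only [List.length_map, Nat.cast_mul, cast_length_seg]
  rw [max_eq_left (by omega), max_eq_left (by omega), max_eq_left (by omega),
    max_eq_left (by omega)]
  ring_nf

lemma listDet_tailCol_zero_eq_tailCol_neg (B₁ B₂ F : List ℂ) (I₁ I₂ : List ℤ) (C : List Column)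
    (hB₂ : ∀ y ∈ B₂, y ≠ 0) (hF : ∀ x ∈ F, x ≠ 0) (hBF : ∀ y ∈ B₂, ∀ x ∈ F, y ≠ x) (n : ℕ)
    (hC : ∀ k < n, powCol₂ (-(k : ℤ)) ∈ C) :
    listDet (B₁.map pointRow₁ ++ (B₂.map pointRow₂ ++ (I₁.map coeffRow₁ ++ I₂.map coeffRow₂)))
        (F.map (tailCol 0 0) ++ C) id =
      listDet (B₁.map pointRow₁ ++ (B₂.map pointRow₂ ++ (I₁.map coeffRow₁ ++ I₂.map coeffRow₂)))
        (F.map (tailCol 0 (-n)) ++ C) id := by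
  induction n with
  | zero => simp
  | succ n ih =>
    have hidx : -(n : ℤ) = -((n + 1 : ℕ) : ℤ) + 1 := by push_cast; ring
    have hstep := listDet_map_smul_add_smul_right
      (B₁.map pointRow₁ ++ (B₂.map pointRow₂ ++ (I₁.map coeffRow₁ ++ I₂.map coeffRow₂)))
      [] C F (tailCol 0 (-((n + 1 : ℕ) : ℤ))) (tailCol 0 (-n)) (fun _ => powCol₂ (-(n : ℤ)))
      1 (fun x => x ^ (n : ℤ)) id (fun x _ => hC n n.lt_succ_self) (by
        simp only [List.forall_mem_append, List.forall_mem_map, Pi.one_apply, one_mul]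
        refine fun x hx => ⟨fun y _ => ?_, fun y hy => ?_, fun i _ => ?_, fun i _ => ?_⟩
        · simp [pointRow₁, tailCol, powCol₂, eval]
        · have := eval_tail_add_one (-((n + 1 : ℕ) : ℤ)) (hF x hx) (sub_ne_zero.2 (hBF y hy x hx))
            (Or.inl (hB₂ y hy))
          rwa [← hidx, neg_neg] at this
        · simp [coeffRow₁, tailCol, powCol₂, coeff]
        · have := coeff_tail_add_one i (-((n + 1 : ℕ) : ℤ)) x
          rwa [← hidx, neg_neg] at this)
    simp only [List.nil_append, Pi.one_def, List.map_const', List.prod_replicate, one_pow, one_mul]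
      at hstep
    rw [ih fun k hk => hC k (hk.trans n.lt_succ_self), hstep]

lemma centralDet_eq_listDet_untwisted (B₁ B₂ F : List ℂ) {α β η L : ℤ} (hL : 0 ≤ L) (hη : 0 ≤ η)
    (hB₂ : ∀ y ∈ B₂, y ≠ 0) (hF : ∀ x ∈ F, x ≠ 0) (hBF : ∀ y ∈ B₂, ∀ x ∈ F, y ≠ x) :
    centralDet B₁ B₂ F α β η L =
      listDet (B₁.map pointRow₁ ++ (B₂.map pointRow₂ ++
          ((seg (1 - α) L).map coeffRow₁ ++ (seg (1 - β) L).map coeffRow₂)))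
        (F.map (tailCol 0 (-η)) ++ ((seg 1 L).map powCol₁ ++ (seg (1 - η) L).map powCol₂)) id := by
  have hpow := listDet_map_smul_add_smul_right (B₁.map pointRow₁ ++ (B₂.map pointRow₂ ++
      ((seg (1 - α) L).map coeffRow₁ ++ (seg (1 - β) L).map coeffRow₂)))
    (F.map (tailCol 0 0)) ((seg (1 - η) L).map powCol₂) (seg 1 L) powCol₁ powCol powCol₂ 1 1 id
    (fun j hj => List.mem_append_right _ (List.mem_map_of_mem (by rw [mem_seg] at hj ⊢; omega)))
    (by
      simp only [List.forall_mem_append, List.forall_mem_map]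
      refine fun j _ => ⟨fun y _ => ?_, fun y _ => ?_, fun i _ => ?_, fun i _ => ?_⟩ <;>
        simp [pointRow₁, pointRow₂, coeffRow₁, coeffRow₂, powCol, powCol₁, powCol₂, eval, coeff])
  simp only [Pi.one_def, List.map_const', List.prod_replicate, one_pow, one_mul] at hpow
  lift η to ℕ using hη
  rw [centralDet, hpow, listDet_tailCol_zero_eq_tailCol_neg B₁ B₂ F _ _ _ hB₂ hF hBF η]
  exact fun k hk => List.mem_append_right _ (List.mem_map_of_mem (mem_seg.2 (by omega)))

lemma listDet_untwisted_eq_reduced (B₁ B₂ F : List ℂ) {α β η L : ℤ} (hL : 0 ≤ L) (hη : 0 ≤ η)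
    (hα : -α ≤ L) (hβ : -β ≤ L) :
    listDet (B₁.map pointRow₁ ++ (B₂.map pointRow₂ ++
          ((seg (1 - α) L).map coeffRow₁ ++ (seg (1 - β) L).map coeffRow₂)))
        (F.map (tailCol 0 (-η)) ++ ((seg 1 L).map powCol₁ ++ (seg (1 - η) L).map powCol₂)) id =
      (-1) ^ ((L - max (-α) 0) * (β - η)) *
        listDet (B₁.map pointRow₁ ++ (B₂.map pointRow₂ ++
            ((seg (1 - α) 0).map coeffRow₁ ++ (seg (1 - β) (-η)).map coeffRow₂)))
          (F.map (tailCol 0 (-η)) ++ ((seg 1 (-α)).map powCol₁ ++ (seg (1 - η) (-β)).map powCol₂))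
          id := by
  have h₂ := listDet_append_seg_of_unit
    (B₁.map pointRow₁ ++ (B₂.map pointRow₂ ++ (seg (1 - α) L).map coeffRow₁))
    (F.map (tailCol 0 (-η)) ++ (seg 1 L).map powCol₁) coeffRow₂ powCol₂ id
    (p := 1 - β) (q := 1 - η) (L := L) (by omega) (by omega) (fun i j => rfl) (by
      simp only [List.forall_mem_append, List.forall_mem_map]
      exact fun i _ hi => ⟨fun x _ => if_neg (by omega), fun j _ => rfl⟩)
  have h₁ := listDet_append_seg_append_of_unit (B₁.map pointRow₁ ++ B₂.map pointRow₂)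
    ((seg (1 - β) (-η)).map coeffRow₂) (F.map (tailCol 0 (-η))) ((seg (1 - η) (-β)).map powCol₂)
    coeffRow₁ powCol₁ id (p := 1 - α) (q := 1) (L := L) (by omega) (by omega) (fun i j => rfl) (by
      simp only [List.forall_mem_append, List.forall_mem_map]
      exact fun i _ hi => ⟨fun x _ => if_neg (by omega), fun j _ => rfl⟩)
  simp only [List.append_assoc, sub_sub_cancel_left, sub_self, List.length_map,
    cast_length_seg] at h₁ h₂
  have habs : max (-η - (1 - β) + 1) 0 + max (-β - (1 - η) + 1) 0 = |β - η| := by grind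
  rw [h₂, h₁, habs, show L + 1 - max (1 - α) 1 = L - max (-α) 0 by omega]
  congr 1
  refine neg_one_zpow_congr ?_
  simp [Int.even_sub, Int.even_mul, even_abs]

lemma listDet_reduced_eq_momentRow (B₁ B₂ F : List ℂ) (α β η : ℤ) :
    listDet (B₁.map pointRow₁ ++ (B₂.map pointRow₂ ++
          ((seg 1 α).map momentRow ++ (seg (η + 1) β).map momentRow)))
        (F.map (tailCol 0 (-η)) ++ ((seg 1 (-α)).map powCol₁ ++ (seg (1 - η) (-β)).map powCol₂))
        id =
      (-1) ^ (η * max (β - η) 0) *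
        listDet (B₁.map pointRow₁ ++ (B₂.map pointRow₂ ++
            ((seg (1 - α) 0).map coeffRow₁ ++ (seg (1 - β) (-η)).map coeffRow₂)))
          (F.map (tailCol 0 (-η)) ++ ((seg 1 (-α)).map powCol₁ ++ (seg (1 - η) (-β)).map powCol₂))
          id := by
  let cols := F.map (tailCol 0 (-η)) ++
    ((seg 1 (-α)).map powCol₁ ++ (seg (1 - η) (-β)).map powCol₂)
  have h₁ := listDet_map_seg_reflect (B₁.map pointRow₁ ++ B₂.map pointRow₂)
    ((seg (1 - β) (-η)).map coeffRow₂) cols id coeffRow₁ momentRow 1 α 1 (by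
      simp only [cols, List.forall_mem_append, List.forall_mem_map, mem_seg]
      refine fun r hr => ⟨fun x _ => ?_, fun j hj => ?_, fun j _ => ?_⟩
      · simp only [id, momentRow, coeffRow₁, tailCol, moment, coeff]
        rw [if_pos (by omega), one_mul, neg_sub, ← mul_zpow, neg_one_mul]
      · simp only [id, momentRow, coeffRow₁, powCol₁, moment, coeff]
        rw [if_neg (by omega), mul_zero]
      · simp [momentRow, coeffRow₁, powCol₂, moment, coeff])
  have h₂ := listDet_map_seg_reflect (B₁.map pointRow₁ ++ (B₂.map pointRow₂ ++
      (seg 1 α).map momentRow)) [] cols id coeffRow₂ momentRow (η + 1) β ((-1) ^ η) (by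
      simp only [cols, List.forall_mem_append, List.forall_mem_map, mem_seg]
      refine fun r hr => ⟨fun x _ => ?_, fun j _ => ?_, fun j hj => ?_⟩
      · simp only [id, momentRow, coeffRow₂, tailCol, moment, coeff]
        rw [if_pos (by omega), neg_sub, ← neg_one_zpow_add, neg_eq_neg_one_mul, mul_zpow,
          show η + (r - (η + 1)) = r - 1 by ring]
      · simp [momentRow, coeffRow₂, powCol₁, moment, coeff]
      · simp only [id, momentRow, coeffRow₂, powCol₂, moment, coeff]
        rw [if_neg (by omega), mul_zero])
  simp only [cols, List.append_assoc, List.append_nil, one_pow, one_mul, sub_self,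
    sub_add_cancel_right] at h₁ h₂
  rw [h₂, h₁, ← zpow_natCast, ← zpow_mul, show β - (η + 1) + 1 = β - η by ring, Int.toNat_eq_max]

lemma listDet_reduced_eq_Delta {ι : Type*} (z : ι → ℂ) (B1 B2 F : List ι) (α β η : ℤ) :
    listDet ((B1.map z).map pointRow₁ ++ ((B2.map z).map pointRow₂ ++
          ((seg (1 - α) 0).map coeffRow₁ ++ (seg (1 - β) (-η)).map coeffRow₂)))
        ((F.map z).map (tailCol 0 (-η)) ++
          ((seg 1 (-α)).map powCol₁ ++ (seg (1 - η) (-β)).map powCol₂)) id =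
      (-1) ^ (η * (B2.length + (β - η))) *
        Delta z B1 B2 F (seg 1 α ++ seg (η + 1) β) [] (seg 1 (-α)) (seg (1 - η) (-β)) η := by
  have habs : max (β - η) 0 + max (-β - (1 - η) + 1) 0 = |β - η| := by grind
  have heven : Even (η * (B2.length + (β - η)) + η * (B2.length + max (-β - (1 - η) + 1) 0) +
      η * max (β - η) 0) := by
    rw [show _ + _ = 2 * (η * B2.length) + η * (|β - η| + (β - η)) by rw [← habs]; ring]
    exact (even_two_mul _).add ((Int.even_add.2 even_abs).mul_left _)
  rw [Delta_eq_listDet z B1 B2 F _ _ _ _ η (Or.inr rfl), List.map_append, List.map_nil,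
    List.nil_append, listDet_reduced_eq_momentRow, ← mul_assoc, ← mul_assoc, ← neg_one_zpow_add,
    ← neg_one_zpow_add, cast_length_seg, heven.neg_one_zpow, one_mul]

lemma truncDet_central {ι : Type*} (z : ι → ℂ) (B1 B2 F : List ι) {α β η L : ℤ} (hL : 0 ≤ L)
    (hη : 0 ≤ η) (hα : -α ≤ L) (hβ : -β ≤ L) (hαβ : α ≤ β) (hαη : α ≤ η)
    (hB₂ : ∀ y ∈ B2, z y ≠ 0) (hF : ∀ x ∈ F, z x ≠ 0) (hBF : ∀ y ∈ B2, ∀ x ∈ F, z y ≠ z x) :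
    truncDet (B1.map z) (B2.map z) (F.map z) (1 - β) (1 - η) (-α) L =
      (-1) ^ (α * (β + 1) + max (-α) 0 * (β - η) + η * (B2.length + β + 1)) *
        Delta z B1 B2 F (seg 1 α ++ seg (η + 1) β) [] (seg 1 (-α)) (seg (1 - η) (-β)) η := by
  have htrunc := centralDet_eq_truncDet (B1.map z) (B2.map z) (F.map z) hL hα hαβ hαη
  rw [centralDet_eq_listDet_untwisted _ _ _ hL hη (by simpa using hB₂) (by simpa using hF)
    (by simpa using hBF), listDet_untwisted_eq_reduced _ _ _ hL hη hα hβ,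
    listDet_reduced_eq_Delta] at htrunc
  have hinv := congrArg ((-1) ^ ((L + α) * (β - α) + L * (η - α)) * ·) htrunc
  simp only [← mul_assoc, neg_one_zpow_mul_self, one_mul, ← neg_one_zpow_add] at hinv
  rw [← hinv]
  congr 1
  refine neg_one_zpow_congr ?_
  rw [show _ - _ = 2 * (L * (β - α) - max (-α) 0 * (β - η)) - α * (α + 1) - η * (η + 1) by ring]
  exact ((even_two_mul _).sub (Int.even_mul_succ_self α)).sub (Int.even_mul_succ_self η)

end Central

section Hook

lemma truncDet_eq_of_le (B₁ B₂ F : List ℂ) {c lo hi L L' : ℤ} (hL : 0 ≤ L) (hc : c ≤ L + 1)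
    (hhi : hi ≤ L) (hLL' : L ≤ L') : truncDet B₁ B₂ F c lo hi L' = truncDet B₁ B₂ F c lo hi L := by
  have hunit := listDet_append_map_of_unit
    (B₁.map pointRow₁ ++ (B₂.map pointRow₂ ++ (seg c L).map coeffRow₂))
    (F.map (tailCol 0 0) ++ ((seg lo hi).map powCol₂ ++ (seg 1 L).map powCol))
    (seg (L + 1) L') (nodup_seg _ _) coeffRow₂ powCol id (fun i _ j _ => rfl) (by
      simp only [List.forall_mem_append, List.forall_mem_map, mem_seg]
      exact fun i hi => ⟨fun x _ => if_neg (by omega), fun j _ => if_neg (by omega),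
        fun j _ => if_neg (by omega)⟩)
  simp only [List.append_assoc, ← List.map_append, seg_append_seg hc hLL',
    seg_append_seg (show 1 ≤ L + 1 by omega) hLL'] at hunit
  exact hunit

/-- The supercharacter `χ_{a,s}` up to sign and normalization, with `h = s + η1`: the stable value
of `truncDet` with `c` the index that makes the matrix square and `a` columns of `T2`. -/
noncomputable def hookDet (B₁ B₂ F : List ℂ) (a h : ℤ) : ℂ :=
  truncDet B₁ B₂ F (1 + (B₁.length + B₂.length) - (a + F.length)) (h + 1 - a) h
    (max 0 (max h (B₁.length + B₂.length - (a + F.length))))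

lemma hookDet_eq_truncDet {B₁ B₂ F : List ℂ} {a h c lo L : ℤ}
    (hc : c = 1 + (B₁.length + B₂.length) - (a + F.length)) (hlo : lo = h + 1 - a) (hL : 0 ≤ L)
    (hhL : h ≤ L) (hcL : c ≤ L + 1) : hookDet B₁ B₂ F a h = truncDet B₁ B₂ F c lo h L := by
  subst hc hlo
  exact (truncDet_eq_of_le B₁ B₂ F (by omega) (by omega) (by omega) (by omega)).symm

lemma hookDet_of_neg (B₁ B₂ F : List ℂ) {a : ℤ} (ha : a < 0) (h : ℤ) : hookDet B₁ B₂ F a h = 0 := by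
  refine listDet_of_length_ne _ fun hlen => ?_
  simp only [List.length_append, List.length_map, length_seg] at hlen
  omega

end Hook

section Representation

variable {ι : Type*} {z : ι → ℂ} {B1 B2 F1 F2 : List ι} {χ : ℤ → ℤ → ℂ}

/-- The factor of the supercharacter that does not depend on `a` and `s`. -/
noncomputable def prefactor (z : ι → ℂ) (B1 B2 F1 F2 : List ι) : ℂ :=
  (-1) ^ (((B1.length + B2.length) * (B1.length + B2.length - 1) / 2 +
    (F1.length + F2.length) * (F1.length + F2.length - 1) / 2 : ℤ)) / Dden z (B1 ++ B2) (F1 ++ F2)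

/-- The closed form of `χ_{a,s}` on the whole lattice. -/
noncomputable def hookChar (z : ι → ℂ) (B1 B2 F1 F2 : List ι) (a s : ℤ) : ℂ :=
  prefactor z B1 B2 F1 F2 * ((-1) ^ (a * (B1.length + (F1.length + F2.length)) : ℤ) *
    hookDet (B1.map z) (B2.map z) ((F1 ++ F2).map z) a (s + (B1.length - F1.length)))

lemma hookChar_eq_of_truncDet_eq {a s η₁ β L d e : ℤ} {x : ℂ} (hη₁ : η₁ = B1.length - F1.length)
    (hβ : β = a - η₁ - (B2.length - F2.length)) (hL : 0 ≤ L) (hsL : s + η₁ ≤ L) (hβL : -β ≤ L)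
    (hx : truncDet (B1.map z) (B2.map z) ((F1 ++ F2).map z) (1 - β) (s - a + η₁ + 1) (s + η₁) L =
      (-1) ^ d * x)
    (hd : Even (e - (a * (B1.length + (F1.length + F2.length)) + d))) :
    (-1) ^ (e + ((B1.length + B2.length) * (B1.length + B2.length - 1) / 2 +
        (F1.length + F2.length) * (F1.length + F2.length - 1) / 2)) * x /
      Dden z (B1 ++ B2) (F1 ++ F2) = hookChar z B1 B2 F1 F2 a s := by
  have hhook := hookDet_eq_truncDet (B₁ := B1.map z) (B₂ := B2.map z) (F := (F1 ++ F2).map z)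
    (a := a) (c := 1 - β) (lo := s - a + η₁ + 1) (by simp; omega) (by ring) hL hsL (by omega)
  rw [hookChar, ← hη₁, hhook, hx, prefactor, neg_one_zpow_add,
    neg_one_zpow_congr hd, neg_one_zpow_add]
  ring

lemma IsChi.eq_hookChar_of_le_right (hχ : IsChi z B1 B2 F1 F2 χ) {a s : ℤ} (ha : 0 ≤ a)
    (has : a ≤ s + (B1.length - F1.length)) : χ a s = hookChar z B1 B2 F1 F2 a s := by
  obtain ⟨-, -, -, -, -, h₅, h₆, -, -⟩ := hχ
  specialize h₅ a s has
  specialize h₆ a s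
  obtain ⟨η₁, hη₁⟩ : ∃ η₁ : ℤ, η₁ = B1.length - F1.length := ⟨_, rfl⟩
  obtain ⟨β, hβ⟩ : ∃ β : ℤ, β = a - η₁ - (B2.length - F2.length) := ⟨_, rfl⟩
  obtain ⟨L, hL, hsL, hβL⟩ : ∃ L : ℤ, 0 ≤ L ∧ s + η₁ ≤ L ∧ -β ≤ L :=
    ⟨max 0 (max (s + η₁) (-β)), by omega, by omega, by omega⟩
  have hΔ := truncDet_right_wing z B1 B2 (F1 ++ F2) (lo := s - a + η₁ + 1) hL hβL (by omega)
    (by omega) hsL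
  rw [← hη₁, show -a + η₁ + (B2.length - F2.length) = -β by omega] at h₅
  rw [← hη₁, ← hβ] at h₆
  rw [← hη₁] at has
  rw [show s + η₁ - (s - a + η₁ + 1) + 1 = a by ring] at hΔ
  rcases le_total β 0 with h | h
  · rw [seg_eq_nil (show β < 1 by omega), max_eq_left (by omega)] at hΔ
    rw [h₅ (by omega)]
    refine hookChar_eq_of_truncDet_eq hη₁ hβ hL hsL hβL hΔ ?_
    rw [hβ, hη₁, show _ - _ = 2 * -(a * B1.length) + (a - 1) * (a - 1 + 1) by ring]
    exact (even_two_mul _).add (Int.even_mul_succ_self _)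
  · rw [seg_eq_nil (show -β < 1 by omega), max_eq_right (by omega)] at hΔ
    rw [h₆ (by omega) has]
    refine hookChar_eq_of_truncDet_eq hη₁ hβ hL hsL hβL hΔ ⟨-(a * F1.length), ?_⟩
    rw [hη₁]
    ring

lemma IsChi.eq_hookChar_of_le_left (hχ : IsChi z B1 B2 F1 F2 χ) {a s : ℤ} (ha : 0 ≤ a)
    (has : a ≤ -s + (B2.length - F2.length)) : χ a s = hookChar z B1 B2 F1 F2 a s := by
  obtain ⟨-, -, -, -, -, -, -, h₇, h₈⟩ := hχ
  specialize h₇ a s has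
  specialize h₈ a s
  obtain ⟨η₁, hη₁⟩ : ∃ η₁ : ℤ, η₁ = B1.length - F1.length := ⟨_, rfl⟩
  obtain ⟨β, hβ⟩ : ∃ β : ℤ, β = a - η₁ - (B2.length - F2.length) := ⟨_, rfl⟩
  obtain ⟨L, hL, hsL, hβL⟩ : ∃ L : ℤ, 0 ≤ L ∧ s + η₁ ≤ L ∧ -β ≤ L :=
    ⟨max 0 (max (s + η₁) (-β)), by omega, by omega, by omega⟩
  have hΔ := truncDet_left_wing z B1 B2 (F1 ++ F2) (lo := s - a + η₁ + 1) (hi := s + η₁) hL hβL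
    (by omega) (by omega)
  rw [← hη₁, show -a + η₁ + (B2.length - F2.length) = -β by omega] at h₇
  rw [← hη₁, ← hβ] at h₈
  rw [show s + η₁ - (s - a + η₁ + 1) + 1 = a by ring] at hΔ
  rcases le_total β 0 with h | h
  · rw [seg_eq_nil (show β < 1 by omega), max_eq_left (by omega)] at hΔ
    rw [h₇ (by omega)]
    refine hookChar_eq_of_truncDet_eq hη₁ hβ hL hsL hβL hΔ ?_
    rw [hβ, hη₁, show _ - _ = 2 * -(a * B1.length) + a * (a + 1) by ring]
    exact (even_two_mul _).add (Int.even_mul_succ_self _)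
  · rw [seg_eq_nil (show -β < 1 by omega), max_eq_right (by omega)] at hΔ
    rw [h₈ (by omega) has]
    refine hookChar_eq_of_truncDet_eq hη₁ hβ hL hsL hβL hΔ ⟨-(a * F1.length), ?_⟩
    rw [hη₁]
    ring

lemma IsChi.eq_hookChar_of_ge (hχ : IsChi z B1 B2 F1 F2 χ) (hz : ∀ i ∈ B2 ++ (F1 ++ F2), z i ≠ 0)
    (hzd : ∀ y ∈ B2, ∀ x ∈ F1 ++ F2, z y ≠ z x) {a s : ℤ} (ha : 0 ≤ a)
    (hr : s + (B1.length - F1.length) ≤ a) (hl : -s + (B2.length - F2.length) ≤ a) :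
    χ a s = hookChar z B1 B2 F1 F2 a s := by
  obtain ⟨-, h₁, h₂, h₃, h₄, -, -, -, -⟩ := hχ
  specialize h₁ a s hr hl ha
  specialize h₂ a s hr hl ha
  specialize h₃ a s hr hl ha
  specialize h₄ a s hr hl ha
  obtain ⟨η₁, hη₁⟩ : ∃ η₁ : ℤ, η₁ = B1.length - F1.length := ⟨_, rfl⟩
  obtain ⟨β, hβ⟩ : ∃ β : ℤ, β = a - η₁ - (B2.length - F2.length) := ⟨_, rfl⟩
  obtain ⟨L, hL, hsL, hβL⟩ : ∃ L : ℤ, 0 ≤ L ∧ s + η₁ ≤ L ∧ -β ≤ L :=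
    ⟨max 0 (max (s + η₁) (-β)), by omega, by omega, by omega⟩
  have hΔ := truncDet_central z B1 B2 (F1 ++ F2) (α := -s - η₁) (β := β) (η := a - s - η₁) hL
    (by omega) (by omega) hβL (by omega) (by omega) (fun y hy => hz y (List.mem_append_left _ hy))
    (fun x hx => hz x (List.mem_append_right _ hx)) hzd
  rw [show 1 - (a - s - η₁) = s - a + η₁ + 1 by ring, show -(-s - η₁) = s + η₁ by ring] at hΔ
  rw [← hη₁] at h₁ h₂ h₃ h₄
  rw [show -a + η₁ + (B2.length - F2.length) = -β by omega] at h₁ h₃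
  rw [← hβ] at h₂ h₄
  have hrep {e d : ℤ} {x : ℂ} :=
    hookChar_eq_of_truncDet_eq (z := z) (e := e) (d := d) (x := x) hη₁ hβ hL hsL hβL
  obtain ⟨k, hk⟩ : ∃ k : ℤ, k = (s + η₁) * (F1.length + F2.length - B1.length + 1 + a) -
    a * (F1.length + F2.length) := ⟨_, rfl⟩
  have heven {x : ℤ} (hx : x = 2 * k - a * (a + 1)) : Even x :=
    hx ▸ (even_two_mul _).sub (Int.even_mul_succ_self a)
  rcases le_total 0 (s + η₁) with h | h <;>
    rcases le_total s (B2.length - F2.length) with hs | hs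
  · rw [max_eq_left h, seg_eq_nil (show -s - η₁ < 1 by omega),
      seg_eq_nil (show β < a - s - η₁ + 1 by omega), List.append_nil] at hΔ
    exact (h₁ (by omega) hs).trans (hrep hΔ (heven (by rw [hk, hβ, hη₁]; ring)))
  · rw [max_eq_left h, seg_eq_nil (show -s - η₁ < 1 by omega), List.nil_append,
      seg_eq_nil (show -β < s - a + η₁ + 1 by omega)] at hΔ
    exact (h₂ (by omega) hs).trans (hrep hΔ (heven (by rw [hk, hβ, hη₁]; ring)))
  · rw [max_eq_right h, seg_eq_nil (show s + η₁ < 1 by omega),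
      seg_eq_nil (show β < a - s - η₁ + 1 by omega), List.append_nil] at hΔ
    exact (h₃ (by omega) hs).trans (hrep hΔ (heven (by rw [hk, hβ, hη₁]; ring)))
  · rw [max_eq_right h, seg_eq_nil (show s + η₁ < 1 by omega),
      seg_eq_nil (show -β < s - a + η₁ + 1 by omega)] at hΔ
    exact (h₄ hs (by omega)).trans (hrep hΔ (heven (by rw [hk, hβ, hη₁]; ring)))

lemma IsChi.eq_hookChar (hχ : IsChi z B1 B2 F1 F2 χ) (hz : ∀ i ∈ B2 ++ (F1 ++ F2), z i ≠ 0)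
    (hzd : ∀ y ∈ B2, ∀ x ∈ F1 ++ F2, z y ≠ z x) (a s : ℤ) :
    χ a s = hookChar z B1 B2 F1 F2 a s := by
  rcases lt_or_ge a 0 with ha | ha
  · rw [hχ.1 a s (Or.inl ha), hookChar, hookDet_of_neg _ _ _ ha, mul_zero, mul_zero]
  rcases le_total a (s + (B1.length - F1.length)) with hr | hr
  · exact hχ.eq_hookChar_of_le_right ha hr
  rcases le_total a (-s + (B2.length - F2.length)) with hl | hl
  · exact hχ.eq_hookChar_of_le_left ha hl
  · exact hχ.eq_hookChar_of_ge hz hzd ha hr hl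

end Representation

section Shift

open Component

lemma listDet_map_map_eq_mul {ρ κ α : Type*} {R : List ρ} {C : List κ} {row row' : ρ → α → ℂ}
    {col col' : κ → α} {u : ρ → ℂ} {v : κ → ℂ}
    (h : ∀ r ∈ R, ∀ k ∈ C, row' r (col' k) = u r * (v k * row r (col k))) :
    listDet (R.map row') (C.map col') id =
      (R.map u).prod * ((C.map v).prod * listDet (R.map row) (C.map col) id) := by
  rw [listDet_map_map, listDet_map_map, ← listDet_mul_right, ← listDet_mul_left]
  exact listDet_congr h

lemma listDet_tailCol_one {B₁ B₂ F : List ℂ} (hB₁ : ∀ y ∈ B₁, y ≠ 0) (hB₂ : ∀ y ∈ B₂, y ≠ 0)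
    (hF : ∀ x ∈ F, x ≠ 0) (c lo hi L : ℤ) :
    listDet (B₁.map pointRow₁ ++ (B₂.map pointRow₂ ++ (seg (c + 1) (L + 1)).map coeffRow₂))
        (F.map (tailCol 1 1) ++
          ((seg (lo + 1) (hi + 1)).map powCol₂ ++ (seg (1 + 1) (L + 1)).map powCol)) id =
      B₁.prod * B₂.prod * (F.prod⁻¹ * truncDet B₁ B₂ F c lo hi L) := by
  let u : ℂ ⊕ (ℂ ⊕ ℤ) → ℂ := Sum.elim id (Sum.elim id 1)
  let v : ℂ ⊕ (ℤ ⊕ ℤ) → ℂ := Sum.elim (·⁻¹) (Sum.elim 1 1)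
  let row : ℂ ⊕ (ℂ ⊕ ℤ) → Column → ℂ := Sum.elim pointRow₁ (Sum.elim pointRow₂ coeffRow₂)
  let row' : ℂ ⊕ (ℂ ⊕ ℤ) → Column → ℂ :=
    Sum.elim pointRow₁ (Sum.elim pointRow₂ fun i => coeffRow₂ (i + 1))
  let col : ℂ ⊕ (ℤ ⊕ ℤ) → Column := Sum.elim (tailCol 0 0) (Sum.elim powCol₂ powCol)
  let col' : ℂ ⊕ (ℤ ⊕ ℤ) → Column :=
    Sum.elim (tailCol 1 1) (Sum.elim (fun j => powCol₂ (j + 1)) fun j => powCol (j + 1))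
  let rows := B₁.map Sum.inl ++ (B₂.map (Sum.inr ∘ Sum.inl) ++ (seg c L).map (Sum.inr ∘ Sum.inr))
  let cols := F.map Sum.inl ++
    ((seg lo hi).map (Sum.inr ∘ Sum.inl) ++ (seg 1 L).map (Sum.inr ∘ Sum.inr))
  have hrows : rows.map row' =
      B₁.map pointRow₁ ++ (B₂.map pointRow₂ ++ (seg (c + 1) (L + 1)).map coeffRow₂) := by
    simp [rows, row', ← map_add_one_seg, Function.comp_def]
  have hcols : cols.map col' = F.map (tailCol 1 1) ++
      ((seg (lo + 1) (hi + 1)).map powCol₂ ++ (seg (1 + 1) (L + 1)).map powCol) := by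
    simp only [cols, col', ← map_add_one_seg, List.map_append, List.map_map, Function.comp_def,
      Sum.elim_inl, Sum.elim_inr]
  have hscale : ∀ r ∈ rows, ∀ k ∈ cols, row' r (col' k) = u r * (v k * row r (col k)) := by
    simp only [rows, cols, List.forall_mem_append, List.forall_mem_map]
    have hpow {y : ℂ} (hy : y ≠ 0) (j : ℤ) :
        eval y (pow (j + 1)) = y * (1 * eval y (pow j)) := by rw [eval_pow_add_one hy, one_mul]
    refine ⟨fun y hy => ⟨fun x _ => eval_tail_one x y, fun j _ => ?_, fun j _ => hpow (hB₁ y hy) j⟩,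
      fun y hy => ⟨fun x _ => eval_tail_one x y, fun j _ => hpow (hB₂ y hy) j,
        fun j _ => hpow (hB₂ y hy) j⟩,
      fun i _ => ⟨fun x hx => (coeff_tail_one (hF x hx) i).trans (one_mul _).symm,
        fun j _ => ?_, fun j _ => ?_⟩⟩
    · exact (by simp [eval] : eval y zero = y * (1 * eval y zero))
    all_goals simp [u, v, row, row', col, col', powCol₂, powCol, coeffRow₂, coeff]
  have hu : (rows.map u).prod = B₁.prod * B₂.prod := by simp [rows, u, Function.comp_def]
  have hv : (cols.map v).prod = F.prod⁻¹ := by simp [cols, v, Function.comp_def, List.prod_inv]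
  have hbase : listDet (rows.map row) (cols.map col) id = truncDet B₁ B₂ F c lo hi L := by
    simp [rows, cols, row, col, truncDet, Function.comp_def]
  rw [← hrows, ← hcols, ← hbase, ← hu, ← hv]
  exact listDet_map_map_eq_mul hscale

lemma truncDet_cons_zero_eq_listDet {B₁ B₂ F : List ℂ} (hF : ∀ x ∈ F, x ≠ 0)
    (hB₁F : ∀ y ∈ B₁, ∀ x ∈ F, y ≠ x) (hB₂F : ∀ y ∈ B₂, ∀ x ∈ F, y ≠ x) {c lo hi L : ℤ}
    (hL : 1 ≤ L) :
    truncDet (0 :: B₁) B₂ F c lo hi L = (-1) ^ (F.length + (seg lo hi).length) *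
      listDet (B₁.map pointRow₁ ++ (B₂.map pointRow₂ ++ (seg c L).map coeffRow₂))
        (F.map (tailCol 1 1) ++ ((seg lo hi).map powCol₂ ++ (seg (1 + 1) L).map powCol)) id := by
  have hsub := listDet_map_smul_add_smul_right
    ((0 :: B₁).map pointRow₁ ++ (B₂.map pointRow₂ ++ (seg c L).map coeffRow₂)) []
    ((seg lo hi).map powCol₂ ++ (seg 1 L).map powCol) F (tailCol 0 0)
    (tailCol 1 1) (fun _ => powCol 1) 1 (fun x => x⁻¹) id
    (fun x _ => List.mem_append_right _ (List.mem_append_right _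
      (List.mem_map_of_mem (mem_seg.2 ⟨le_rfl, by omega⟩)))) (by
      have heval (x y : ℂ) (hx : x ∈ F) (hyx : y ≠ x) :
          eval y (tail 1 x) = 1 * eval y (tail 0 x) + x⁻¹ * eval y (pow 1) := by
        simpa using eval_tail_add_one 0 (hF x hx) (sub_ne_zero.2 hyx) (Or.inr rfl)
      have hcoeff (x : ℂ) (i : ℤ) :
          coeff i (tail 1 x) = 1 * coeff i (tail 0 x) + x⁻¹ * coeff i (pow 1) := by
        simpa using coeff_tail_add_one i 0 x
      simp only [List.forall_mem_append, List.forall_mem_map, List.forall_mem_cons]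
      exact fun x hx => ⟨⟨heval x 0 hx (hF x hx).symm, fun y hy => heval x y hx (hB₁F y hy x hx)⟩,
        fun y hy => heval x y hx (hB₂F y hy x hx),
        fun i _ => hcoeff x i⟩)
  have hmove := listDet_append_cons_right
    ((0 :: B₁).map pointRow₁ ++ (B₂.map pointRow₂ ++ (seg c L).map coeffRow₂)) []
    (F.map (tailCol 1 1) ++ (seg lo hi).map powCol₂) (powCol 1)
    ((seg (1 + 1) L).map powCol) id
  have hpivot := listDet_cons_cons_of_eq_zero (r := pointRow₁ 0)
    (B₁.map pointRow₁ ++ (B₂.map pointRow₂ ++ (seg c L).map coeffRow₂)) (powCol 1)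
    (C := F.map (tailCol 1 1) ++
      ((seg lo hi).map powCol₂ ++ (seg (1 + 1) L).map powCol)) (e := id) (by
      simp only [List.forall_mem_append, List.forall_mem_map, mem_seg]
      refine ⟨fun x _ => ?_, fun j _ => rfl, fun j hj => ?_⟩
      · simp [pointRow₁, tailCol, eval]
      · exact zero_zpow _ (by omega))
  have hone : id (pointRow₁ 0) (powCol 1) = 1 := by simp [pointRow₁, powCol, eval]
  simp only [List.nil_append, Pi.one_def, List.map_const', List.prod_replicate, one_pow,
    one_mul, List.append_assoc, List.map_cons, List.cons_append] at hsub hmove hpivot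
  rw [truncDet, List.map_cons, List.cons_append, ← hsub, seg_cons hL, List.map_cons, hmove,
    hpivot, hone, one_mul, List.length_append, List.length_map, List.length_map]

lemma truncDet_cons_zero {B₁ B₂ F : List ℂ} (hB₁ : ∀ y ∈ B₁, y ≠ 0) (hB₂ : ∀ y ∈ B₂, y ≠ 0)
    (hF : ∀ x ∈ F, x ≠ 0) (hB₁F : ∀ y ∈ B₁, ∀ x ∈ F, y ≠ x) (hB₂F : ∀ y ∈ B₂, ∀ x ∈ F, y ≠ x)
    {c lo hi L : ℤ} (hL : 0 ≤ L) :
    F.prod * truncDet (0 :: B₁) B₂ F (c + 1) (lo + 1) (hi + 1) (L + 1) =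
      (-1) ^ (F.length + (seg lo hi).length) *
        (B₁.prod * B₂.prod * truncDet B₁ B₂ F c lo hi L) := by
  have hlen : (seg (lo + 1) (hi + 1)).length = (seg lo hi).length := by
    rw [← map_add_one_seg, List.length_map]
  have hprod : F.prod ≠ 0 := List.prod_ne_zero fun h => hF 0 h rfl
  rw [truncDet_cons_zero_eq_listDet hF hB₁F hB₂F (by omega), hlen,
    listDet_tailCol_one hB₁ hB₂ hF]
  field_simp

end Shift

section Identities

lemma truncDet_pluecker_row (w y : ℂ) (B₁ B₂ F : List ℂ) {c lo hi L : ℤ} (hc : c ≤ L)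
    (hlo : lo ≤ hi + 1) :
    truncDet (w :: B₁) (y :: B₂) F (c + 1) lo (hi + 1) L * truncDet B₁ B₂ F c lo hi L
      - truncDet (w :: B₁) B₂ F c lo (hi + 1) L * truncDet B₁ (y :: B₂) F (c + 1) lo hi L
      + truncDet B₁ (y :: B₂) F c lo (hi + 1) L * truncDet (w :: B₁) B₂ F (c + 1) lo hi L = 0 := by
  have h := listDet_pluecker_append [] (pointRow₁ w) (B₁.map pointRow₁) (pointRow₂ y)
    (B₂.map pointRow₂) (coeffRow₂ c) ((seg (c + 1) L).map coeffRow₂)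
    (F.map (tailCol 0 0) ++ (seg lo hi).map powCol₂) (powCol₂ (hi + 1)) ((seg 1 L).map powCol) id
  simpa [truncDet, seg_cons hc, seg_snoc hlo] using h

lemma truncDet_desnanot_jacobi_row (y : ℂ) (B₁ B₂ F : List ℂ) {c lo hi L : ℤ} (hc : c ≤ L)
    (hlo : lo ≤ hi) :
    truncDet B₁ (y :: B₂) F c lo (hi + 1) L * truncDet B₁ B₂ F (c + 1) (lo + 1) hi L =
      truncDet B₁ (y :: B₂) F (c + 1) lo hi L * truncDet B₁ B₂ F c (lo + 1) (hi + 1) L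
        - truncDet B₁ (y :: B₂) F (c + 1) (lo + 1) (hi + 1) L * truncDet B₁ B₂ F c lo hi L := by
  have h := listDet_desnanot_jacobi_append (B₁.map pointRow₁) (pointRow₂ y) (B₂.map pointRow₂)
    (coeffRow₂ c) ((seg (c + 1) L).map coeffRow₂) (F.map (tailCol 0 0)) (powCol₂ lo)
    ((seg (lo + 1) hi).map powCol₂) (powCol₂ (hi + 1)) ((seg 1 L).map powCol) id
  simpa [truncDet, seg_cons hc, seg_cons hlo, seg_snoc (show lo ≤ hi + 1 by omega),
    seg_snoc (show lo + 1 ≤ hi + 1 by omega)] using h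

lemma truncDet_desnanot_jacobi_col (w x : ℂ) (B₁ B₂ F : List ℂ) {c lo hi L : ℤ} (hc : c ≤ L)
    (hlo : lo ≤ hi + 1) :
    truncDet (w :: B₁) B₂ (x :: F) c lo (hi + 1) L * truncDet B₁ B₂ F (c + 1) lo hi L =
      truncDet (w :: B₁) B₂ (x :: F) (c + 1) lo hi L * truncDet B₁ B₂ F c lo (hi + 1) L
        - truncDet (w :: B₁) B₂ F (c + 1) lo (hi + 1) L * truncDet B₁ B₂ (x :: F) c lo hi L := by
  have h := listDet_desnanot_jacobi_append [] (pointRow₁ w)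
    (B₁.map pointRow₁ ++ B₂.map pointRow₂) (coeffRow₂ c) ((seg (c + 1) L).map coeffRow₂) []
    (tailCol 0 0 x) (F.map (tailCol 0 0) ++ (seg lo hi).map powCol₂) (powCol₂ (hi + 1))
    ((seg 1 L).map powCol) id
  simpa [truncDet, seg_cons hc, seg_snoc hlo] using h

lemma truncDet_pluecker_col (x : ℂ) (B₁ B₂ F : List ℂ) {c lo hi L : ℤ} (hc : c ≤ L)
    (hlo : lo ≤ hi) :
    truncDet B₁ B₂ (x :: F) c lo hi L * truncDet B₁ B₂ F (c + 1) (lo + 1) (hi + 1) L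
      - truncDet B₁ B₂ (x :: F) c (lo + 1) (hi + 1) L * truncDet B₁ B₂ F (c + 1) lo hi L
      + truncDet B₁ B₂ F c lo (hi + 1) L * truncDet B₁ B₂ (x :: F) (c + 1) (lo + 1) hi L = 0 := by
  have h := listDet_pluecker_append_right [] (tailCol 0 0 x) (F.map (tailCol 0 0)) (powCol₂ lo)
    ((seg (lo + 1) hi).map powCol₂) (powCol₂ (hi + 1)) ((seg 1 L).map powCol)
    (B₁.map pointRow₁ ++ B₂.map pointRow₂) (coeffRow₂ c) ((seg (c + 1) L).map coeffRow₂) id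
  simpa [truncDet, seg_cons hc, seg_cons hlo, seg_snoc (show lo ≤ hi + 1 by omega),
    seg_snoc (show lo + 1 ≤ hi + 1 by omega)] using h

end Identities

section HookIdentities

variable (w x y : ℂ) (B₁ B₂ F : List ℂ) {a : ℤ} (h : ℤ)

lemma hookDet_pluecker_row (ha : 0 ≤ a) :
    hookDet (w :: B₁) (y :: B₂) F (a + 1) (h + 1) * hookDet B₁ B₂ F a h
      - hookDet (w :: B₁) B₂ F (a + 1) (h + 1) * hookDet B₁ (y :: B₂) F a h
      + hookDet B₁ (y :: B₂) F (a + 1) (h + 1) * hookDet (w :: B₁) B₂ F a h = 0 := by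
  obtain ⟨c, hc⟩ : ∃ c : ℤ, c = 1 + (B₁.length + B₂.length) - (a + F.length) := ⟨_, rfl⟩
  obtain ⟨L, hL, hhL, hcL⟩ : ∃ L : ℤ, 0 ≤ L ∧ h + 1 ≤ L ∧ c ≤ L :=
    ⟨max 0 (max (h + 1) c), by omega, by omega, by omega⟩
  convert truncDet_pluecker_row w y B₁ B₂ F hcL (show h + 1 - a ≤ h + 1 by omega)
  all_goals
    apply hookDet_eq_truncDet
    all_goals grind

lemma hookDet_desnanot_jacobi_row (ha : 1 ≤ a) :
    hookDet B₁ (y :: B₂) F (a + 1) h * hookDet B₁ B₂ F (a - 1) (h - 1) =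
      hookDet B₁ (y :: B₂) F a (h - 1) * hookDet B₁ B₂ F a h
        - hookDet B₁ (y :: B₂) F a h * hookDet B₁ B₂ F a (h - 1) := by
  obtain ⟨c, hc⟩ : ∃ c : ℤ, c = 1 + (B₁.length + B₂.length) - (a + F.length) := ⟨_, rfl⟩
  obtain ⟨L, hL, hhL, hcL⟩ : ∃ L : ℤ, 0 ≤ L ∧ h ≤ L ∧ c ≤ L :=
    ⟨max 0 (max h c), by omega, by omega, by omega⟩
  have hT := truncDet_desnanot_jacobi_row y B₁ B₂ F hcL (show h - a ≤ h - 1 by omega)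
  rw [sub_add_cancel] at hT
  convert hT
  all_goals
    apply hookDet_eq_truncDet
    all_goals grind

lemma hookDet_desnanot_jacobi_col (ha : 0 ≤ a) :
    hookDet (w :: B₁) B₂ (x :: F) (a + 1) (h + 1) * hookDet B₁ B₂ F a h =
      hookDet (w :: B₁) B₂ (x :: F) a h * hookDet B₁ B₂ F (a + 1) (h + 1)
        - hookDet (w :: B₁) B₂ F (a + 1) (h + 1) * hookDet B₁ B₂ (x :: F) a h := by
  obtain ⟨c, hc⟩ : ∃ c : ℤ, c = (B₁.length + B₂.length) - (a + F.length) := ⟨_, rfl⟩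
  obtain ⟨L, hL, hhL, hcL⟩ : ∃ L : ℤ, 0 ≤ L ∧ h + 1 ≤ L ∧ c ≤ L :=
    ⟨max 0 (max (h + 1) c), by omega, by omega, by omega⟩
  convert truncDet_desnanot_jacobi_col w x B₁ B₂ F hcL (show h + 1 - a ≤ h + 1 by omega)
  all_goals
    apply hookDet_eq_truncDet
    all_goals grind

lemma hookDet_pluecker_col (ha : 1 ≤ a) :
    hookDet B₁ B₂ (x :: F) a (h - 1) * hookDet B₁ B₂ F a h
      - hookDet B₁ B₂ (x :: F) a h * hookDet B₁ B₂ F a (h - 1)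
      + hookDet B₁ B₂ F (a + 1) h * hookDet B₁ B₂ (x :: F) (a - 1) (h - 1) = 0 := by
  obtain ⟨c, hc⟩ : ∃ c : ℤ, c = (B₁.length + B₂.length) - (a + F.length) := ⟨_, rfl⟩
  obtain ⟨L, hL, hhL, hcL⟩ : ∃ L : ℤ, 0 ≤ L ∧ h ≤ L ∧ c ≤ L :=
    ⟨max 0 (max h c), by omega, by omega, by omega⟩
  have hT := truncDet_pluecker_col x B₁ B₂ F hcL (show h - a ≤ h - 1 by omega)
  rw [sub_add_cancel] at hT
  convert hT
  all_goals
    apply hookDet_eq_truncDet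
    all_goals grind

lemma hookDet_zero (h h' : ℤ) : hookDet B₁ B₂ F 0 h = hookDet B₁ B₂ F 0 h' := by
  obtain ⟨c, hc⟩ : ∃ c : ℤ, c = 1 + (B₁.length + B₂.length) - (0 + F.length) := ⟨_, rfl⟩
  obtain ⟨L, hL, hhL, hhL', hcL⟩ : ∃ L : ℤ, 0 ≤ L ∧ h ≤ L ∧ h' ≤ L ∧ c ≤ L + 1 :=
    ⟨max 0 (max c (max h h')), by omega, by omega, by omega, by omega⟩
  rw [hookDet_eq_truncDet hc rfl hL hhL hcL, hookDet_eq_truncDet hc rfl hL hhL' hcL, truncDet,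
    truncDet, seg_eq_nil (show h < h + 1 - 0 by omega), seg_eq_nil (show h' < h' + 1 - 0 by omega)]

variable {B₁ B₂ F}

lemma hookDet_cons_zero (hB₁ : ∀ y ∈ B₁, y ≠ 0) (hB₂ : ∀ y ∈ B₂, y ≠ 0) (hF : ∀ x ∈ F, x ≠ 0)
    (hB₁F : ∀ y ∈ B₁, ∀ x ∈ F, y ≠ x) (hB₂F : ∀ y ∈ B₂, ∀ x ∈ F, y ≠ x) (ha : 0 ≤ a) :
    F.prod * hookDet (0 :: B₁) B₂ F a (h + 1) =
      (-1) ^ (F.length + a) * (B₁.prod * B₂.prod * hookDet B₁ B₂ F a h) := by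
  obtain ⟨c, hc⟩ : ∃ c : ℤ, c = 1 + (B₁.length + B₂.length) - (a + F.length) := ⟨_, rfl⟩
  obtain ⟨L, hL, hhL, hcL⟩ : ∃ L : ℤ, 0 ≤ L ∧ h ≤ L ∧ c ≤ L + 1 :=
    ⟨max 0 (max h c), by omega, by omega, by omega⟩
  rw [hookDet_eq_truncDet hc rfl hL hhL hcL,
    hookDet_eq_truncDet (c := c + 1) (lo := h + 1 - a + 1) (L := L + 1) (by grind) (by grind)
      (by grind) (by grind) (by grind),
    truncDet_cons_zero hB₁ hB₂ hF hB₁F hB₂F hL, neg_one_pow_eq_zpow]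
  congr 2
  rw [Nat.cast_add, cast_length_seg, max_eq_left (by omega)]
  ring

end HookIdentities

section Backlund

/-- The left-wing Bäcklund transformations between two functions on the lattice, for the spectral
parameter `w`; the sign `σ` is `1` when a point of `B2` is removed from the supercharacter and `-1`
when a point of `F2` is. -/
def IsBacklundPair (w σ : ℂ) (G G' : ℤ → ℤ → ℂ) : Prop :=
  ∀ a h : ℤ,
    w * G (a + 1) h * G' a h - σ * (G a h * G' (a + 1) h) = G (a + 1) (h + 1) * G' a (h - 1) ∧
    G a (h - 1) * G' a h - G a h * G' a (h - 1) = σ * (G (a + 1) h * G' (a - 1) (h - 1))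

theorem IsBacklundPair.rescale {w : ℂ} {G G' H H' : ℤ → ℤ → ℂ} (hG : IsBacklundPair w 1 G G')
    {K K' : ℂ} {N N' η : ℤ} (hH : ∀ a s, H a s = K * ((-1) ^ (a * N) * G a (s + η)))
    (hH' : ∀ a s, H' a s = K' * ((-1) ^ (a * N') * G' a (s + η))) :
    IsBacklundPair w ((-1) ^ (N + N')) H H' := by
  intro a s
  obtain ⟨h₁, h₂⟩ := hG a (s + η)
  have hN : (-1 : ℂ) ^ ((a + 1) * N) = (-1) ^ (a * N) * (-1) ^ N := by
    rw [← neg_one_zpow_add, add_one_mul]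
  have hN' : (-1 : ℂ) ^ ((a + 1) * N') = (-1) ^ (a * N') * (-1) ^ N' := by
    rw [← neg_one_zpow_add, add_one_mul]
  have hN'' : (-1 : ℂ) ^ ((a - 1) * N') = (-1) ^ (a * N') * (-1) ^ N' := by
    rw [← hN']
    exact neg_one_zpow_congr ⟨-N', by ring⟩
  have hsq : (-1 : ℂ) ^ N * (-1) ^ N = 1 := neg_one_zpow_mul_self N
  have hsq' : (-1 : ℂ) ^ N' * (-1) ^ N' = 1 := neg_one_zpow_mul_self N'
  rw [hH, hH, hH, hH, hH', hH', hH', hH', hN, hN', hN'', neg_one_zpow_add,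
    add_right_comm s 1 η, sub_add_eq_add_sub s 1 η]
  generalize (-1 : ℂ) ^ N = e, (-1 : ℂ) ^ N' = e' at hsq hsq' ⊢
  generalize (-1 : ℂ) ^ (a * N) = A, (-1 : ℂ) ^ (a * N') = A'
  constructor
  · linear_combination K * K' * A * A' * e *
      (h₁ - G a (s + η) * G' (a + 1) (s + η) * hsq')
  · linear_combination K * K' * A * A' *
      (h₂ - G (a + 1) (s + η) * G' (a - 1) (s + η - 1) * (e' * e' * hsq + hsq'))

variable {B₁ B₂ F : List ℂ} {x y : ℂ}

theorem isBacklundPair_hookDet_cons_row (hB₁ : ∀ v ∈ B₁, v ≠ 0) (hB₂ : ∀ v ∈ y :: B₂, v ≠ 0)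
    (hF : ∀ x ∈ F, x ≠ 0) (hB₁F : ∀ v ∈ B₁, ∀ x ∈ F, v ≠ x) (hB₂F : ∀ v ∈ y :: B₂, ∀ x ∈ F, v ≠ x) :
    IsBacklundPair y 1 (hookDet B₁ (y :: B₂) F) (hookDet B₁ B₂ F) := by
  refine fun a h => ⟨?_, ?_⟩
  · rcases lt_or_ge a 0 with ha | ha
    · simp [hookDet_of_neg _ _ _ ha]
    have hpluecker := hookDet_pluecker_row 0 y B₁ B₂ F h ha
    have hB₂' : ∀ v ∈ B₂, v ≠ 0 := fun v hv => hB₂ v (List.mem_cons_of_mem _ hv)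
    have hB₂F' : ∀ v ∈ B₂, ∀ x ∈ F, v ≠ x := fun v hv => hB₂F v (List.mem_cons_of_mem _ hv)
    have hyG := hookDet_cons_zero (a := a + 1) h hB₁ hB₂ hF hB₁F hB₂F (by omega)
    have hG' := hookDet_cons_zero (a := a + 1) h hB₁ hB₂' hF hB₁F hB₂F' (by omega)
    have hG'' := hookDet_cons_zero (h - 1) hB₁ hB₂' hF hB₁F hB₂F' ha
    rw [← add_assoc, neg_one_zpow_add _ 1, zpow_one] at hyG hG'
    rw [sub_add_cancel] at hG''
    rw [List.prod_cons] at hyG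
    have hsign : (-1 : ℂ) ^ (F.length + a) ≠ 0 := zpow_ne_zero _ (by norm_num)
    have hprod : B₁.prod * B₂.prod ≠ 0 :=
      mul_ne_zero (List.prod_ne_zero fun h => hB₁ 0 h rfl) (List.prod_ne_zero fun h => hB₂' 0 h rfl)
    refine mul_left_cancel₀ (mul_ne_zero hsign hprod) ?_
    linear_combination -F.prod * hpluecker + hookDet B₁ B₂ F a h * hyG
      - hookDet B₁ (y :: B₂) F a h * hG' + hookDet B₁ (y :: B₂) F (a + 1) (h + 1) * hG''
  · rcases lt_trichotomy a 0 with ha | rfl | ha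
    · simp [hookDet_of_neg _ _ _ ha, hookDet_of_neg _ _ _ (show a - 1 < 0 by omega)]
    · rw [hookDet_zero B₁ (y :: B₂) F (h - 1) h, hookDet_zero B₁ B₂ F (h - 1) h,
        hookDet_of_neg B₁ B₂ F (show (0 : ℤ) - 1 < 0 by omega)]
      ring
    · rw [one_mul, hookDet_desnanot_jacobi_row _ _ _ _ _ (by omega)]

theorem isBacklundPair_hookDet_cons_col (hB₁ : ∀ v ∈ B₁, v ≠ 0) (hB₂ : ∀ v ∈ B₂, v ≠ 0)
    (hF : ∀ v ∈ x :: F, v ≠ 0) (hB₁F : ∀ y ∈ B₁, ∀ v ∈ x :: F, y ≠ v)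
    (hB₂F : ∀ y ∈ B₂, ∀ v ∈ x :: F, y ≠ v) :
    IsBacklundPair x 1 (hookDet B₁ B₂ F) (hookDet B₁ B₂ (x :: F)) := by
  refine fun a h => ⟨?_, ?_⟩
  · rcases lt_or_ge a 0 with ha | ha
    · simp [hookDet_of_neg _ _ _ ha]
    have hjacobi := hookDet_desnanot_jacobi_col 0 x B₁ B₂ F h ha
    have hF' : ∀ v ∈ F, v ≠ 0 := fun v hv => hF v (List.mem_cons_of_mem _ hv)
    have hB₁F' : ∀ y ∈ B₁, ∀ v ∈ F, y ≠ v := fun y hy v hv =>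
      hB₁F y hy v (List.mem_cons_of_mem _ hv)
    have hB₂F' : ∀ y ∈ B₂, ∀ v ∈ F, y ≠ v := fun y hy v hv =>
      hB₂F y hy v (List.mem_cons_of_mem _ hv)
    have hG := hookDet_cons_zero (a := a + 1) h hB₁ hB₂ hF' hB₁F' hB₂F' (by omega)
    have hG' := hookDet_cons_zero (a := a + 1) h hB₁ hB₂ hF hB₁F hB₂F (by omega)
    have hG'' := hookDet_cons_zero (h - 1) hB₁ hB₂ hF hB₁F hB₂F ha
    rw [sub_add_cancel] at hG''
    rw [← add_assoc, neg_one_zpow_add _ 1, zpow_one] at hG hG'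
    rw [List.length_cons, Nat.cast_succ, add_right_comm, neg_one_zpow_add _ 1, zpow_one] at hG' hG''
    rw [List.prod_cons] at hG' hG''
    have hsign : (-1 : ℂ) ^ (F.length + a) ≠ 0 := zpow_ne_zero _ (by norm_num)
    have hprod : B₁.prod * B₂.prod ≠ 0 :=
      mul_ne_zero (List.prod_ne_zero fun h => hB₁ 0 h rfl) (List.prod_ne_zero fun h => hB₂ 0 h rfl)
    refine mul_left_cancel₀ (mul_ne_zero hsign hprod) ?_
    linear_combination hookDet B₁ B₂ F a h * hG' - hookDet B₁ B₂ F (a + 1) (h + 1) * hG''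
      + x * hookDet B₁ B₂ (x :: F) a h * hG - x * F.prod * hjacobi
  · rcases lt_trichotomy a 0 with ha | rfl | ha
    · simp [hookDet_of_neg _ _ _ ha, hookDet_of_neg _ _ _ (show a - 1 < 0 by omega)]
    · rw [hookDet_zero B₁ B₂ F (h - 1) h, hookDet_zero B₁ B₂ (x :: F) (h - 1) h,
        hookDet_of_neg B₁ B₂ (x :: F) (show (0 : ℤ) - 1 < 0 by omega)]
      ring
    · linear_combination -hookDet_pluecker_col x B₁ B₂ F h (show 1 ≤ a by omega)

lemma hookDet_append_cons_row (B₁ X : List ℂ) (y : ℂ) (Y F : List ℂ) (a h : ℤ) :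
    hookDet B₁ (X ++ y :: Y) F a h = (-1) ^ X.length * hookDet B₁ (y :: (X ++ Y)) F a h := by
  have hlen : (X ++ y :: Y).length = (y :: (X ++ Y)).length := by grind
  simp only [hookDet, truncDet, hlen, List.map_append, List.map_cons, List.append_assoc,
    List.cons_append]
  rw [listDet_append_cons, List.length_map]

lemma hookDet_append_cons_col (B₁ B₂ X : List ℂ) (x : ℂ) (Y : List ℂ) (a h : ℤ) :
    hookDet B₁ B₂ (X ++ x :: Y) a h = (-1) ^ X.length * hookDet B₁ B₂ (x :: (X ++ Y)) a h := by
  have hlen : (X ++ x :: Y).length = (x :: (X ++ Y)).length := by grind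
  simp only [hookDet, truncDet, hlen, List.map_append, List.map_cons, List.append_assoc,
    List.cons_append]
  rw [← List.nil_append (List.map (tailCol 0 0) X ++ _), listDet_append_cons_right,
    List.length_map, List.nil_append]

theorem isBacklundPair_hookChar_row {ι : Type*} {z : ι → ℂ} {B1 X Y F1 F2 : List ι} {b : ι}
    (hB1 : ∀ i ∈ B1, z i ≠ 0) (hB2 : ∀ i ∈ X ++ b :: Y, z i ≠ 0) (hF : ∀ i ∈ F1 ++ F2, z i ≠ 0)
    (hB1F : ∀ i ∈ B1, ∀ j ∈ F1 ++ F2, z i ≠ z j)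
    (hB2F : ∀ i ∈ X ++ b :: Y, ∀ j ∈ F1 ++ F2, z i ≠ z j) :
    IsBacklundPair (z b) 1 (hookChar z B1 (X ++ b :: Y) F1 F2) (hookChar z B1 (X ++ Y) F1 F2) := by
  have hperm {i : ι} (hi : i ∈ b :: (X ++ Y)) : i ∈ X ++ b :: Y :=
    List.perm_middle.mem_iff.2 hi
  have hpair : IsBacklundPair (z b) 1
      (hookDet (B1.map z) (z b :: (X ++ Y).map z) ((F1 ++ F2).map z))
      (hookDet (B1.map z) ((X ++ Y).map z) ((F1 ++ F2).map z)) := by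
    rw [← List.map_cons]
    apply isBacklundPair_hookDet_cons_row <;>
      simp only [← List.map_cons, List.forall_mem_map]
    exacts [hB1, fun i hi => hB2 i (hperm hi), hF, hB1F, fun i hi => hB2F i (hperm hi)]
  have hscaled := hpair.rescale
    (H := hookChar z B1 (X ++ b :: Y) F1 F2) (H' := hookChar z B1 (X ++ Y) F1 F2)
    (K := prefactor z B1 (X ++ b :: Y) F1 F2 * (-1) ^ X.length)
    (N := B1.length + (F1.length + F2.length)) (fun a s => ?_) (fun a s => rfl)
  · rwa [neg_one_zpow_add, neg_one_zpow_mul_self] at hscaled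
  · rw [hookChar, List.map_append, List.map_cons, hookDet_append_cons_row, List.length_map,
      ← List.map_append]
    ring

theorem isBacklundPair_hookChar_col {ι : Type*} {z : ι → ℂ} {B1 B2 F1 X Y : List ι} {f : ι}
    (hB1 : ∀ i ∈ B1, z i ≠ 0) (hB2 : ∀ i ∈ B2, z i ≠ 0) (hF : ∀ i ∈ F1 ++ (X ++ f :: Y), z i ≠ 0)
    (hB1F : ∀ i ∈ B1, ∀ j ∈ F1 ++ (X ++ f :: Y), z i ≠ z j)
    (hB2F : ∀ i ∈ B2, ∀ j ∈ F1 ++ (X ++ f :: Y), z i ≠ z j) :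
    IsBacklundPair (z f) (-1) (hookChar z B1 B2 F1 (X ++ Y))
      (hookChar z B1 B2 F1 (X ++ f :: Y)) := by
  have hperm {i : ι} (hi : i ∈ f :: (F1 ++ (X ++ Y))) : i ∈ F1 ++ (X ++ f :: Y) := by grind
  have hpair : IsBacklundPair (z f) 1
      (hookDet (B1.map z) (B2.map z) ((F1 ++ (X ++ Y)).map z))
      (hookDet (B1.map z) (B2.map z) (z f :: (F1 ++ (X ++ Y)).map z)) := by
    rw [← List.map_cons]
    apply isBacklundPair_hookDet_cons_col <;>
      simp only [← List.map_cons, List.forall_mem_map]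
    exacts [hB1, hB2, fun i hi => hF i (hperm hi), fun i hi j hj => hB1F i hi j (hperm hj),
      fun i hi j hj => hB2F i hi j (hperm hj)]
  have hscaled := hpair.rescale
    (H := hookChar z B1 B2 F1 (X ++ Y)) (H' := hookChar z B1 B2 F1 (X ++ f :: Y))
    (K' := prefactor z B1 B2 F1 (X ++ f :: Y) * (-1) ^ (F1 ++ X).length)
    (N' := B1.length + (F1.length + (X ++ f :: Y).length)) (fun a s => rfl) (fun a s => ?_)
  · rwa [neg_one_zpow_congr (n := 1) ⟨B1.length + (F1.length + (X ++ Y).length), by grind⟩,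
      zpow_one] at hscaled
  · rw [hookChar, ← List.append_assoc, List.map_append, List.map_cons, hookDet_append_cons_col,
      List.length_map, ← List.map_append, List.append_assoc]
    ring

end Backlund

/-- **Left-wing Bäcklund transformations for the Wronskian supercharacters.** -/
theorem backlund_left {ι : Type*} [DecidableEq ι] (z : ι → ℂ) (B1 B2 F1 F2 : List ι)
    (hnd : (B1 ++ B2 ++ F1 ++ F2).Nodup)
    (hz0 : ∀ i ∈ B1 ++ B2 ++ F1 ++ F2, z i ≠ 0)
    (hzd : ∀ i ∈ B1 ++ B2 ++ F1 ++ F2, ∀ j ∈ B1 ++ B2 ++ F1 ++ F2, i ≠ j → z i ≠ z j)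
    (b : ι) (hb : b ∈ B2) (f : ι) (hf : f ∈ F2)
    (χ χb χf : ℤ → ℤ → ℂ)
    (hχ : IsChi z B1 B2 F1 F2 χ)
    (hχb : IsChi z B1 (B2.erase b) F1 F2 χb)
    (hχf : IsChi z B1 B2 F1 (F2.erase f) χf) :
    (∀ a s : ℤ,
      z b * χ (a + 1) s * χb a s - χ a s * χb (a + 1) s = χ (a + 1) (s + 1) * χb a (s - 1)) ∧
    (∀ a s : ℤ,
      χ a (s - 1) * χb a s - χ a s * χb a (s - 1) = χ (a + 1) s * χb (a - 1) (s - 1)) ∧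
    (∀ a s : ℤ,
      z f * χf (a + 1) s * χ a s + χf a s * χ (a + 1) s = χf (a + 1) (s + 1) * χ a (s - 1)) ∧
    (∀ a s : ℤ,
      χf a (s - 1) * χ a s - χf a s * χ a (s - 1) = -(χf (a + 1) s * χ (a - 1) (s - 1))) := by
  obtain ⟨X, Y, -, rfl, hXY⟩ := List.exists_erase_eq hb
  obtain ⟨X', Y', -, rfl, hXY'⟩ := List.exists_erase_eq hf
  rw [hXY] at hχb
  rw [hXY'] at hχf
  have hB1 : ∀ i ∈ B1, z i ≠ 0 := fun i hi => hz0 i (by grind)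
  have hB2 : ∀ i ∈ X ++ b :: Y, z i ≠ 0 := fun i hi => hz0 i (by grind)
  have hF : ∀ i ∈ F1 ++ (X' ++ f :: Y'), z i ≠ 0 := fun i hi => hz0 i (by grind)
  have hB1F : ∀ i ∈ B1, ∀ j ∈ F1 ++ (X' ++ f :: Y'), z i ≠ z j := fun i hi j hj =>
    hzd i (by grind) j (by grind) (by grind)
  have hB2F : ∀ i ∈ X ++ b :: Y, ∀ j ∈ F1 ++ (X' ++ f :: Y'), z i ≠ z j := fun i hi j hj =>
    hzd i (by grind) j (by grind) (by grind)
  obtain rfl := funext₂ (hχ.eq_hookChar (by grind) hB2F)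
  obtain rfl := funext₂ (hχb.eq_hookChar (by grind) (by grind))
  obtain rfl := funext₂ (hχf.eq_hookChar (by grind) (by grind))
  have hrow := isBacklundPair_hookChar_row hB1 hB2 hF hB1F hB2F
  have hcol := isBacklundPair_hookChar_col hB1 hB2 hF hB1F hB2F
  refine ⟨fun a s => ?_, fun a s => ?_, fun a s => ?_, fun a s => ?_⟩
  · simpa only [one_mul] using (hrow a s).1
  · simpa only [one_mul] using (hrow a s).2
  · simpa only [neg_one_mul, sub_neg_eq_add] using (hcol a s).1
  · simpa only [neg_one_mul] using (hcol a s).2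

end Stmt2
end

section
/- σ-transformation of the Wronskian supercharacters. For every integer a ≥ 0 and every s ∈ ℤ, the Wronskian supercharacter χ^{B1,B2,F1,F2}_{a,s} evaluated with every parameter z_i replaced by z^σ_i equals (∏_{b∈B̂} z_b / ∏_{f∈F̂} (−z_f))^a · χ^{B̂1,B̂2,F̂1,F̂2}_{a,−s} evaluated at the original parameters z, where B̂1 = (M+1−b : b∈B2), B̂2 = (M+1−b : b∈B1), F̂1 = (2M+N+1−f : f∈F2), F̂2 = (2M+N+1−f : f∈F1), B̂ = B̂1⊔B̂2, F̂ = F̂1⊔F̂2, and χ^{B̂1,B̂2,F̂1,F̂2} is the Wronskian supercharacter built from the hatted tuples (of lengths m2, m1, n2, n1). -/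
open scoped BigOperators

namespace Stmt4

/-- The integer segment tuple `⟨a,b⟩ = (a, a+1, …, b)`, empty when `b < a`. -/
def seg (a b : ℤ) : List ℤ := (List.range (b - a + 1).toNat).map (fun k => a + (k : ℤ))

/-- Product of `g x y` over ordered pairs `x ≺ y` in the list `L`. -/
def pairProd {ι : Type*} (L : List ι) (g : ι → ι → ℂ) : ℂ :=
  ∏ i : Fin L.length, ∏ j : Fin L.length, if i < j then g (L.get i) (L.get j) else 1

/-- Product of `g x` over a list. -/
def prodL {ι : Type*} (L : List ι) (g : ι → ℂ) : ℂ := (L.map g).prod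

/-- Product of `g x y` over pairs `(x, y) ∈ L × M`. -/
def prodLL {ι : Type*} (L M : List ι) (g : ι → ι → ℂ) : ℂ :=
  (L.map (fun x => (M.map (g x)).prod)).prod

/-- Determinant of the square matrix whose rows and columns are labelled by the given
key lists (by convention `0` if the two lists have different lengths). -/
noncomputable def listDet {α β : Type*} (rows : List α) (cols : List β) (e : α → β → ℂ) : ℂ :=
  if h : rows.length = cols.length then
    Matrix.det (Matrix.of fun i j : Fin rows.length =>
      e (rows.get i) (cols.get (Fin.cast h j)))
  else 0

/-- The sparse determinant `Δ^{B1,B2,R,(η)}_{F,S,T1,T2}`. -/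
noncomputable def Delta {ι : Type*} (z : ι → ℂ) (B1 B2 F : List ι)
    (R S T1 T2 : List ℤ) (η : ℤ) : ℂ :=
  listDet
    ((B1.map (Sum.inl : ι → ι ⊕ (ι ⊕ ℤ)) ++
      B2.map (fun b => (Sum.inr (Sum.inl b) : ι ⊕ (ι ⊕ ℤ))) ++
      R.map (fun r => (Sum.inr (Sum.inr r) : ι ⊕ (ι ⊕ ℤ)))))
    ((F.map (Sum.inl : ι → ι ⊕ (ℤ ⊕ (ℤ ⊕ ℤ))) ++
      S.map (fun j => (Sum.inr (Sum.inl j) : ι ⊕ (ℤ ⊕ (ℤ ⊕ ℤ)))) ++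
      T1.map (fun j => (Sum.inr (Sum.inr (Sum.inl j)) : ι ⊕ (ℤ ⊕ (ℤ ⊕ ℤ)))) ++
      T2.map (fun j => (Sum.inr (Sum.inr (Sum.inr j)) : ι ⊕ (ℤ ⊕ (ℤ ⊕ ℤ))))))
    (fun row col =>
      match row, col with
      | Sum.inl b, Sum.inl f => 1 / (z b - z f)
      | Sum.inl b, Sum.inr (Sum.inl j) => z b ^ (j - 1)
      | Sum.inl b, Sum.inr (Sum.inr (Sum.inl j)) => z b ^ (j - 1)
      | Sum.inl _, Sum.inr (Sum.inr (Sum.inr _)) => 0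
      | Sum.inr (Sum.inl b), Sum.inl f => (-z f / z b) ^ η / (z b - z f)
      | Sum.inr (Sum.inl b), Sum.inr (Sum.inl j) => z b ^ (j - 1)
      | Sum.inr (Sum.inl _), Sum.inr (Sum.inr (Sum.inl _)) => 0
      | Sum.inr (Sum.inl b), Sum.inr (Sum.inr (Sum.inr j)) => z b ^ (j - 1)
      | Sum.inr (Sum.inr r), Sum.inl f => (-z f) ^ (r - 1)
      | Sum.inr (Sum.inr _), Sum.inr _ => 0)

/-- The denominator formula `D(B|F)`. -/
noncomputable def Dden {ι : Type*} (z : ι → ℂ) (B F : List ι) : ℂ :=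
  pairProd B (fun b b' => z b - z b') * pairProd F (fun f f' => z f' - z f) /
    prodLL B F (fun b f => z b - z f)

/-- `χ` is the Wronskian supercharacter family for the data `(z, B1, B2, F1, F2)`:
it vanishes outside the generalized T-hook and is given by the eight regional
sparse determinant formulas inside the hook. -/
def IsChi {ι : Type*} (z : ι → ℂ) (B1 B2 F1 F2 : List ι) (χ : ℤ → ℤ → ℂ) : Prop :=
  let m1 : ℤ := B1.length
  let m2 : ℤ := B2.length
  let n1 : ℤ := F1.length
  let n2 : ℤ := F2.length
  let η1 : ℤ := m1 - n1
  let η2 : ℤ := m2 - n2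
  let θ : ℤ := (m1 + m2) * (m1 + m2 - 1) / 2 + (n1 + n2) * (n1 + n2 - 1) / 2
  let F : List ι := F1 ++ F2
  let Dd : ℂ := Dden z (B1 ++ B2) F
  (∀ a s : ℤ, (a < 0 ∨ (m1 < a ∧ n1 < s) ∨ (m2 < a ∧ s < -n2)) → χ a s = 0) ∧
  (∀ a s : ℤ, s + η1 ≤ a → -s + η2 ≤ a → 0 ≤ a → -η1 ≤ s → s ≤ η2 →
    χ a s = (-1 : ℂ) ^ ((s + η1) * (s + n2) + θ) *
      Delta z B1 B2 F [] [] (seg 1 (s + η1)) (seg (s - a + η1 + 1) (-a + η1 + η2))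
        (a - s - η1) / Dd) ∧
  (∀ a s : ℤ, s + η1 ≤ a → -s + η2 ≤ a → 0 ≤ a → -η1 ≤ s → η2 ≤ s →
    χ a s = (-1 : ℂ) ^ ((s + η1) * (s + n2) + θ) *
      Delta z B1 B2 F (seg (a - s - η1 + 1) (a - η1 - η2)) [] (seg 1 (s + η1)) []
        (a - s - η1) / Dd) ∧
  (∀ a s : ℤ, s + η1 ≤ a → -s + η2 ≤ a → 0 ≤ a → s ≤ -η1 → s ≤ η2 →
    χ a s = (-1 : ℂ) ^ ((s + η1) * m2 + θ) *
      Delta z B1 B2 F (seg 1 (-s - η1)) [] [] (seg (s - a + η1 + 1) (-a + η1 + η2))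
        (a - s - η1) / Dd) ∧
  (∀ a s : ℤ, s + η1 ≤ a → -s + η2 ≤ a → 0 ≤ a → η2 ≤ s → s ≤ -η1 →
    χ a s = (-1 : ℂ) ^ ((s + η1) * m2 + θ) *
      Delta z B1 B2 F (seg 1 (-s - η1) ++ seg (a - s - η1 + 1) (a - η1 - η2)) [] [] []
        (a - s - η1) / Dd) ∧
  (∀ a s : ℤ, a ≤ s + η1 → a ≤ η1 + η2 →
    χ a s = (-1 : ℂ) ^ (a * m2 + θ) *
      Delta z B1 B2 F [] (seg 1 (-a + η1 + η2)) (seg (s - a + η1 + 1) (s + η1)) [] 0 / Dd) ∧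
  (∀ a s : ℤ, η1 + η2 ≤ a → a ≤ s + η1 →
    χ a s = (-1 : ℂ) ^ (a * (η1 + n2 + 1) + θ) *
      Delta z B1 B2 F (seg 1 (a - η1 - η2)) [] (seg (s - a + η1 + 1) (s + η1)) [] 0 / Dd) ∧
  (∀ a s : ℤ, a ≤ -s + η2 → a ≤ η1 + η2 →
    χ a s = (-1 : ℂ) ^ (a * (1 + m2) + θ) *
      Delta z B1 B2 F [] (seg 1 (-a + η1 + η2)) [] (seg (s - a + η1 + 1) (s + η1)) 0 / Dd) ∧
  (∀ a s : ℤ, η1 + η2 ≤ a → a ≤ -s + η2 →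
    χ a s = (-1 : ℂ) ^ (a * (η1 + n2) + θ) *
      Delta z B1 B2 F (seg 1 (a - η1 - η2)) [] [] (seg (s - a + η1 + 1) (s + η1)) 0 / Dd)

/-!
In the variables `x = z_b` and `y = -z_f` the entries of the sparse determinants are powers `x ^ k`,
`y ^ k` and kernels `K_t(x, y) = (y / x) ^ t / (x + y)`, and inversion of all variables acts simply:
it sends `K_t` to `x ^ (1 + w) * y ^ (1 - w) * K_{w - t}` for any integer `w`, and reflects the
exponents. So up to explicit monomial factors, inverted determinants are again sparse determinants,
in which the two bosonic blocks have to be exchanged and the kernel indices do not yet fit.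
The indices are corrected by the telescoping identity
`K_t + K_{t + 1} = x ^ (-(t + 1)) * y ^ t`: the monomials separating `K_t` from `K_u` are exactly
those supplied by the exponent rows `R` and columns `S`, `T1`, `T2`, so row and column operations
replace the one kernel by the other up to a sign.

With `p = s + η1` and `q = -s + η2`, the transformation `s ↦ -s` exchanges `p` and `q`. The region
`max p q ≤ a` is thereby mapped to itself and the regions `a ≤ p` and `a ≤ q` are exchanged.
-/

section Signs

theorem neg_one_zpow_congr {m n : ℤ} (h : Even (m - n)) : (-1 : ℂ) ^ m = (-1) ^ n := by
  rw [← sub_add_cancel m n, zpow_add₀ (by norm_num), h.neg_one_zpow, one_mul]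

theorem choose_two_add (m n : ℕ) :
    (m + n).choose 2 = m.choose 2 + n.choose 2 + m * n := by
  induction n with
  | zero => simp
  | succ n ih =>
    rw [← add_assoc, Nat.choose_succ_succ' (m + n) 1, Nat.choose_succ_succ' n 1, ih]
    simp only [Nat.choose_one_right]
    ring

end Signs

section SkewSymmetricFunctions

variable {α : Type*}

/-- A function of lists that changes sign when two adjacent entries are exchanged; it records
how determinants and Vandermonde products depend on the order of their labels. -/
def IsSkewSymm (f : List α → ℂ) : Prop :=
  ∀ A x y D, f (A ++ x :: y :: D) = -f (A ++ y :: x :: D)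

namespace IsSkewSymm

variable {f : List α → ℂ}

theorem cons_append (hf : IsSkewSymm f) (A : List α) (x : α) (L D : List α) :
    f (A ++ x :: (L ++ D)) = (-1) ^ L.length * f (A ++ (L ++ x :: D)) := by
  induction L generalizing A with
  | nil => simp
  | cons y L ih =>
    have hmove := ih (A ++ [y])
    simp only [List.append_assoc, List.cons_append, List.nil_append] at hmove ⊢
    rw [hf, hmove, List.length_cons, pow_succ]
    ring

theorem append_comm (hf : IsSkewSymm f) (A L K D : List α) :
    f (A ++ (L ++ (K ++ D))) = (-1) ^ (L.length * K.length) * f (A ++ (K ++ (L ++ D))) := by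
  induction L generalizing A with
  | nil => simp
  | cons x L ih =>
    have hswap := ih (A ++ [x])
    simp only [List.append_assoc, List.cons_append, List.nil_append] at hswap ⊢
    rw [hswap, hf.cons_append A x K (L ++ D), List.length_cons, add_mul, pow_add, one_mul]
    ring

theorem reverse (hf : IsSkewSymm f) (A L D : List α) :
    f (A ++ (L ++ D)) = (-1) ^ L.length.choose 2 * f (A ++ (L.reverse ++ D)) := by
  induction L generalizing D with
  | nil => simp
  | cons x L ih =>
    simp only [List.append_assoc, List.cons_append, List.nil_append, List.reverse_cons]
    rw [hf.cons_append, ih (x :: D), List.length_cons, Nat.choose_succ_succ' L.length 1, pow_add,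
      Nat.choose_one_right, mul_assoc]

end IsSkewSymm

end SkewSymmetricFunctions

section LabelledDeterminants

variable {α β γ δ : Type*} (rows : List α) (cols : List β) (e : α → β → ℂ)

theorem listDet_eq_det {rows : List α} {cols : List β} {n : ℕ} (hr : rows.length = n)
    (hc : cols.length = n) :
    listDet rows cols e =
      Matrix.det (Matrix.of fun i j : Fin n =>
        e (rows[i.1]'(hr ▸ i.2)) (cols[j.1]'(hc ▸ j.2))) := by
  subst hr
  exact dif_pos hc.symm

theorem listDet_of_length_ne {rows : List α} {cols : List β} (h : rows.length ≠ cols.length) :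
    listDet rows cols e = 0 :=
  dif_neg h

variable {rows cols e} in
theorem listDet_congr {e' : α → β → ℂ} (h : ∀ r ∈ rows, ∀ c ∈ cols, e r c = e' r c) :
    listDet rows cols e = listDet rows cols e' := by
  unfold listDet
  split_ifs
  · congr 1
    ext i j
    exact h _ (List.getElem_mem _) _ (List.getElem_mem _)
  · rfl

theorem listDet_map (f : α → γ) (g : β → δ) (e : γ → δ → ℂ) :
    listDet (rows.map f) (cols.map g) e = listDet rows cols fun r c => e (f r) (g c) := by
  by_cases h : rows.length = cols.length
  · rw [listDet_eq_det _ (n := cols.length) (by simpa) (by simp), listDet_eq_det _ h rfl]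
    simp only [List.getElem_map]
  · rw [listDet_of_length_ne _ h, listDet_of_length_ne _ (by simpa using h)]

theorem listDet_transpose : listDet rows cols e = listDet cols rows fun c r => e r c := by
  by_cases h : rows.length = cols.length
  · rw [listDet_eq_det _ h rfl, listDet_eq_det _ rfl h, ← Matrix.det_transpose]
    rfl
  · rw [listDet_of_length_ne _ h, listDet_of_length_ne _ (Ne.symm h)]

theorem listDet_mul_row (u : α → ℂ) :
    (listDet rows cols fun r c => u r * e r c) = (rows.map u).prod * listDet rows cols e := by
  by_cases h : rows.length = cols.length
  · rw [listDet_eq_det _ rfl h.symm, listDet_eq_det _ rfl h.symm, ← Fin.prod_univ_fun_getElem]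
    exact Matrix.det_mul_column (fun i : Fin rows.length => u rows[i.1])
      (Matrix.of fun i j : Fin rows.length => e rows[i.1] (cols[j.1]'(by omega)))
  · rw [listDet_of_length_ne _ h, listDet_of_length_ne _ h, mul_zero]

theorem listDet_mul_col (v : β → ℂ) :
    (listDet rows cols fun r c => v c * e r c) = (cols.map v).prod * listDet rows cols e := by
  rw [listDet_transpose, listDet_mul_row, ← listDet_transpose]

variable {rows cols e} in
theorem listDet_rescale {e' : α → β → ℂ} (u : α → ℂ) (v : β → ℂ)
    (h : ∀ r ∈ rows, ∀ c ∈ cols, e r c = u r * (v c * e' r c)) :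
    listDet rows cols e = (rows.map u).prod * ((cols.map v).prod * listDet rows cols e') := by
  rw [listDet_congr h, listDet_mul_row, listDet_mul_col]

-- The column operation is right multiplication by a block unitriangular matrix.
theorem listDet_add_cols (P : β → Prop) (κ : β → β → ℂ)
    (hκ : ∀ c d, ¬(P d ∧ ¬P c) → κ c d = 0) :
    (listDet rows cols fun r d => e r d + (cols.map fun c => e r c * κ c d).sum) =
      listDet rows cols e := by
  classical
  by_cases h : rows.length = cols.length
  swap
  · rw [listDet_of_length_ne _ h, listDet_of_length_ne _ h]
  rw [listDet_eq_det _ h rfl, listDet_eq_det _ h rfl]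
  set A := Matrix.of fun i j : Fin cols.length => e (rows[i.1]'(by omega)) cols[j.1] with hA
  set V : Matrix (Fin cols.length) (Fin cols.length) ℂ :=
    Matrix.of fun i j => κ cols[i.1] cols[j.1] with hV
  have hdiag (Q : Fin cols.length → Prop) (hQ : ∀ i j, Q i → Q j → V i j = 0) :
      (1 + V).toSquareBlockProp Q = 1 := by
    ext i j
    simp [Matrix.toSquareBlockProp, hQ _ _ i.2 j.2, Matrix.one_apply, Subtype.ext_iff]
  have hdet : (1 + V).det = 1 := by
    rw [Matrix.twoBlockTriangular_det' (1 + V) fun i => P cols[i.1],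
      hdiag _ fun _ _ hi _ => hκ _ _ fun hh => hh.2 hi,
      hdiag _ fun _ _ _ hj => hκ _ _ fun hh => hj hh.1, Matrix.det_one, Matrix.det_one, one_mul]
    intro i hi j hj
    have hne : i ≠ j := fun hij => hj (hij ▸ hi)
    simp [hV, hne, hκ _ _ fun hh => hj hh.1]
  rw [← mul_one A.det, ← hdet, ← Matrix.det_mul, mul_add, mul_one]
  congr 1
  ext i j
  simp [hA, hV, Matrix.mul_apply, ← Fin.sum_univ_fun_getElem]

theorem listDet_add_rows (P : α → Prop) (κ : α → α → ℂ)
    (hκ : ∀ c d, ¬(P d ∧ ¬P c) → κ c d = 0) :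
    (listDet rows cols fun d c => e d c + (rows.map fun r => e r c * κ r d).sum) =
      listDet rows cols e := by
  rw [listDet_transpose, listDet_add_cols cols rows (fun c r => e r c) P κ hκ,
    ← listDet_transpose]

theorem getElem_append_swap (A D : List α) (x y : α) (i : ℕ)
    (hi : i < (A ++ x :: y :: D).length) :
    (A ++ x :: y :: D)[i] =
      (A ++ y :: x :: D)[Equiv.swap A.length (A.length + 1) i]'(by
        simp only [List.length_append, List.length_cons] at hi ⊢
        rw [Equiv.swap_apply_def]; split_ifs <;> omega) := by
  simp only [Equiv.swap_apply_def]
  split_ifs <;> grind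

theorem isSkewSymm_listDet_rows : IsSkewSymm fun rows => listDet rows cols e := by
  intro A x y D
  by_cases h : (A ++ x :: y :: D).length = cols.length
  · have h' : (A ++ y :: x :: D).length = cols.length := by simpa using h
    have hlt : A.length + 1 < cols.length := by simp at h; omega
    set i₀ : Fin cols.length := ⟨A.length, by omega⟩
    set i₁ : Fin cols.length := ⟨A.length + 1, hlt⟩
    have hne : i₀ ≠ i₁ := by simp [i₀, i₁]
    have hsign := Matrix.det_permute (Equiv.swap i₀ i₁) (Matrix.of fun i j : Fin cols.length =>
      e ((A ++ y :: x :: D)[i.1]'(by omega)) cols[j.1])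
    rw [Equiv.Perm.sign_swap hne] at hsign
    simp only [Units.val_neg, Units.val_one, Int.cast_neg, Int.cast_one, neg_one_mul] at hsign
    simp only [listDet_eq_det e h rfl, listDet_eq_det e h' rfl, ← hsign]
    congr 1
    ext i j
    simp only [Matrix.of_apply, Matrix.submatrix_apply, id_eq, getElem_append_swap A D x y]
    congr 2
    exact Fin.val_injective.swap_apply i₀ i₁ i
  · have h' : (A ++ y :: x :: D).length ≠ cols.length := by simpa using h
    simp only [listDet_of_length_ne e h, listDet_of_length_ne e h', neg_zero]

theorem isSkewSymm_listDet_cols : IsSkewSymm fun cols => listDet rows cols e := by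
  intro A x y D
  have h := isSkewSymm_listDet_rows rows (fun c r => e r c) A x y D
  simpa only [← listDet_transpose] using h

end LabelledDeterminants

section Segments

theorem seg_eq (a b : ℤ) :
    seg a b = (List.range (b - a + 1).toNat).map fun k : ℕ => a + (k : ℤ) := by
  have hcast (L : List ℕ) :
      (L >>= fun k => pure (k : ℤ) : List ℤ) = L.map fun k : ℕ => (k : ℤ) := by
    induction L with
    | nil => rfl
    | cons k L ih => simp_all
  rw [seg, hcast, List.map_map]
  rfl

@[simp]
theorem length_seg (a b : ℤ) : (seg a b).length = (b - a + 1).toNat := by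
  simp [seg_eq]

theorem seg_eq_nil {a b : ℤ} (h : b < a) : seg a b = [] := by
  rw [← List.length_eq_zero_iff, length_seg]
  omega

theorem mem_seg {a b r : ℤ} : r ∈ seg a b ↔ a ≤ r ∧ r ≤ b := by
  simp only [seg_eq, List.mem_map, List.mem_range]
  exact ⟨by rintro ⟨k, hk, rfl⟩; omega, fun h => ⟨(r - a).toNat, by omega, by omega⟩⟩

theorem seg_succ_right {a b : ℤ} (h : a ≤ b + 1) : seg a (b + 1) = seg a b ++ [b + 1] := by
  have hlen : (b + 1 - a + 1).toNat = (b - a + 1).toNat + 1 := by omega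
  have hlast : a + ((b - a + 1).toNat : ℤ) = b + 1 := by omega
  simp only [seg_eq, hlen, List.range_succ, List.map_append, List.map_cons, List.map_nil, hlast]

theorem reverse_map_sub_seg (c a b : ℤ) :
    ((seg a b).map fun r => c - r).reverse = seg (c - b) (c - a) := by
  apply List.ext_getElem
  · simp
  · intro i h _
    simp only [List.length_reverse, List.length_map, length_seg] at h
    simp only [seg_eq, List.getElem_reverse, List.getElem_map, List.getElem_range,
      List.length_map, List.length_range]
    omega

end Segments

section CauchyKernel

/-- The twisted Cauchy kernel `(y/x) ^ t / (x + y)`; the upper left blocks of the sparse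
determinants are made of it, at `x = z_b` and `y = -z_f`. -/
noncomputable def kernel (t : ℤ) (x y : ℂ) : ℂ :=
  (y / x) ^ t / (x + y)

theorem kernel_swap (t : ℤ) (x y : ℂ) : kernel t x y = kernel (-t) y x := by
  rw [kernel, kernel, zpow_neg, ← inv_zpow, inv_div, add_comm]

variable {x y : ℂ}

theorem kernel_add_kernel_succ (hx : x ≠ 0) (hy : y ≠ 0) (hxy : x + y ≠ 0) (t : ℤ) :
    kernel t x y + kernel (t + 1) x y = x ^ (-(t + 1)) * y ^ t := by
  rw [kernel, kernel, zpow_add_one₀ (div_ne_zero hy hx), div_zpow, neg_add, zpow_add₀ hx,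
    zpow_neg, zpow_neg_one]
  field_simp

theorem kernel_inv (hx : x ≠ 0) (hy : y ≠ 0) (hxy : x + y ≠ 0) (w t : ℤ) :
    kernel t x⁻¹ y⁻¹ = x ^ (1 + w) * (y ^ (1 - w) * kernel (w - t) x y) := by
  have hinv : x⁻¹ + y⁻¹ = (x + y) / (x * y) := by field_simp; exact add_comm _ _
  rw [kernel, kernel, hinv, inv_div_inv, ← inv_div y x, inv_zpow', zpow_sub₀ (div_ne_zero hy hx),
    zpow_neg, div_zpow y x w, zpow_add₀ hx, zpow_sub₀ hy, zpow_one, zpow_one]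
  field_simp

/-- The coefficient of the monomial `y ^ (r - 1)` in the telescoped difference between
`kernel t` and a later kernel, see `kernel_eq_telescope`. -/
noncomputable def elimCoeff (t r : ℤ) (x : ℂ) : ℂ :=
  (-1) ^ (r - t - 1) * x ^ (-r)

theorem kernel_eq_of_le (hx : x ≠ 0) (hy : y ≠ 0) (hxy : x + y ≠ 0) {t u : ℤ} (htu : t ≤ u) :
    kernel t x y = (-1) ^ (u - t) * kernel u x y +
      ((seg (t + 1) u).map fun r => y ^ (r - 1) * elimCoeff t r x).sum := by
  induction u, htu using Int.leInduction with
  | base => simp [seg_eq_nil]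
  | succ u htu ih =>
    have hsign : (-1 : ℂ) ^ (u + 1 - t) = -(-1) ^ (u - t) := by
      rw [add_sub_right_comm, zpow_add_one₀ (by norm_num), mul_neg_one]
    rw [ih, seg_succ_right (by omega), List.map_append, List.sum_append, List.map_singleton,
      List.sum_singleton, eq_sub_of_add_eq (kernel_add_kernel_succ hx hy hxy u), elimCoeff, hsign]
    simp only [add_sub_cancel_right, show u + 1 - t - 1 = u - t by ring]
    ring

theorem kernel_eq_telescope (hx : x ≠ 0) (hy : y ≠ 0) (hxy : x + y ≠ 0) (t u : ℤ) :
    kernel t x y = (-1) ^ (u - t) * kernel u x y +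
      ((seg (1 - t) (-u)).map fun j => x ^ (j - 1) * elimCoeff (-t) j y).sum +
      ((seg (t + 1) u).map fun r => y ^ (r - 1) * elimCoeff t r x).sum := by
  rcases le_total t u with htu | hut
  · rw [seg_eq_nil (a := 1 - t) (by omega), kernel_eq_of_le hx hy hxy htu]
    simp
  · rw [seg_eq_nil (a := t + 1) (by omega), kernel_swap t, kernel_swap u,
      kernel_eq_of_le hy hx (add_comm x y ▸ hxy) (neg_le_neg hut), neg_add_eq_sub t 1,
      neg_one_zpow_congr (m := -u - -t) (n := u - t) ⟨t - u, by ring⟩]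
    simp

end CauchyKernel

section SparseDeterminants

variable {ι : Type*}

/-- The row labels of a sparse determinant: two blocks of bosons and the exponents `R`. -/
def rowKeys (X1 X2 : List ι) (R : List ℤ) : List (ι ⊕ (ι ⊕ ℤ)) :=
  X1.map Sum.inl ++ (X2.map (fun x => Sum.inr (Sum.inl x)) ++ R.map fun r => Sum.inr (Sum.inr r))

/-- The column labels of a sparse determinant: the fermions and the exponents `S`, `T1`, `T2`. -/
def colKeys (Y : List ι) (S T1 T2 : List ℤ) : List (ι ⊕ (ℤ ⊕ (ℤ ⊕ ℤ))) :=
  Y.map Sum.inl ++ (S.map (fun j => Sum.inr (Sum.inl j)) ++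
    (T1.map (fun j => Sum.inr (Sum.inr (Sum.inl j))) ++
      T2.map fun j => Sum.inr (Sum.inr (Sum.inr j))))

/-- The entries of a sparse determinant with arbitrary kernels `K1`, `K2` in the two blocks
of rows labelled by bosons. -/
noncomputable def sparseEntry (K1 K2 : ℂ → ℂ → ℂ) : ℂ ⊕ (ℂ ⊕ ℤ) → ℂ ⊕ (ℤ ⊕ (ℤ ⊕ ℤ)) → ℂ
  | .inl x, .inl y => K1 x y
  | .inl x, .inr (.inl j) => x ^ (j - 1)
  | .inl x, .inr (.inr (.inl j)) => x ^ (j - 1)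
  | .inl _, .inr (.inr (.inr _)) => 0
  | .inr (.inl x), .inl y => K2 x y
  | .inr (.inl x), .inr (.inl j) => x ^ (j - 1)
  | .inr (.inl _), .inr (.inr (.inl _)) => 0
  | .inr (.inl x), .inr (.inr (.inr j)) => x ^ (j - 1)
  | .inr (.inr r), .inl y => y ^ (r - 1)
  | .inr (.inr _), .inr _ => 0

/-- The sparse determinant with arbitrary kernels, as a function of the values `x = z_b` and
`y = -z_f` of the parameters. -/
noncomputable def sparseDet (K1 K2 : ℂ → ℂ → ℂ) (X1 X2 Y : List ℂ) (R S T1 T2 : List ℤ) : ℂ :=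
  listDet (rowKeys X1 X2 R) (colKeys Y S T1 T2) (sparseEntry K1 K2)

theorem sparseDet_map (K1 K2 : ℂ → ℂ → ℂ) (f g : ι → ℂ) (p q : ℤ → ℤ) (X1 X2 Y : List ι)
    (R S T1 T2 : List ℤ) :
    sparseDet K1 K2 (X1.map f) (X2.map f) (Y.map g) (R.map p) (S.map q) (T1.map q) (T2.map q) =
      listDet (rowKeys X1 X2 R) (colKeys Y S T1 T2) fun r c =>
        sparseEntry K1 K2 (Sum.map f (Sum.map f p) r)
          (Sum.map g (Sum.map q (Sum.map q q)) c) := by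
  rw [← listDet_map, sparseDet]
  simp only [rowKeys, colKeys, List.map_append, List.map_map, Function.comp_def, Sum.map_inl,
    Sum.map_inr]

theorem Delta_eq_sparseDet (z : ι → ℂ) (B1 B2 F : List ι) (R S T1 T2 : List ℤ) (η : ℤ) :
    Delta z B1 B2 F R S T1 T2 η =
      sparseDet (kernel 0) (kernel η) (B1.map z) (B2.map z) (F.map fun f => -z f) R S T1 T2 := by
  have hmap := sparseDet_map (kernel 0) (kernel η) z (fun f => -z f) id id B1 B2 F R S T1 T2
  simp only [List.map_id] at hmap
  rw [hmap, Delta]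
  simp only [rowKeys, colKeys, List.append_assoc]
  refine listDet_congr fun r _ c _ => ?_
  rcases r with b | b | r <;> rcases c with f | j | j | j <;>
    simp [sparseEntry, kernel, sub_eq_add_neg]

variable {K1 K2 : ℂ → ℂ → ℂ} {X1 X2 Y : List ℂ} {R S T1 T2 : List ℤ}

theorem sparseDet_add_cols (κS κ1 κ2 : ℤ → ℂ → ℂ) :
    sparseDet
        (fun x y => K1 x y + (S.map fun j => x ^ (j - 1) * κS j y).sum +
          (T1.map fun j => x ^ (j - 1) * κ1 j y).sum)
        (fun x y => K2 x y + (S.map fun j => x ^ (j - 1) * κS j y).sum +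
          (T2.map fun j => x ^ (j - 1) * κ2 j y).sum) X1 X2 Y R S T1 T2 =
      sparseDet K1 K2 X1 X2 Y R S T1 T2 := by
  let coeff : ℂ ⊕ (ℤ ⊕ (ℤ ⊕ ℤ)) → ℂ ⊕ (ℤ ⊕ (ℤ ⊕ ℤ)) → ℂ
    | .inr (.inl j), .inl y => κS j y
    | .inr (.inr (.inl j)), .inl y => κ1 j y
    | .inr (.inr (.inr j)), .inl y => κ2 j y
    | _, _ => 0
  have hcoeff : ∀ c d, ¬(d.isLeft ∧ ¬c.isLeft) → coeff c d = 0 := by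
    rintro (_ | _ | _ | _) (_ | _ | _ | _) h <;> simp_all [coeff]
  rw [sparseDet, sparseDet,
    ← listDet_add_cols _ _ (sparseEntry K1 K2) (fun c => c.isLeft) coeff hcoeff]
  refine listDet_congr fun r _ c _ => ?_
  rcases r with x | x | r <;> rcases c with y | j | j | j <;>
    simp [sparseEntry, coeff, colKeys, Function.comp_def, add_assoc]

theorem sparseDet_add_rows (l1 l2 : ℤ → ℂ → ℂ) :
    sparseDet
        (fun x y => K1 x y + (R.map fun r => y ^ (r - 1) * l1 r x).sum)
        (fun x y => K2 x y + (R.map fun r => y ^ (r - 1) * l2 r x).sum) X1 X2 Y R S T1 T2 =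
      sparseDet K1 K2 X1 X2 Y R S T1 T2 := by
  let coeff : ℂ ⊕ (ℂ ⊕ ℤ) → ℂ ⊕ (ℂ ⊕ ℤ) → ℂ
    | .inr (.inr r), .inl x => l1 r x
    | .inr (.inr r), .inr (.inl x) => l2 r x
    | _, _ => 0
  let IsBoson : ℂ ⊕ (ℂ ⊕ ℤ) → Prop := Sum.elim (fun _ => True) fun r => r.isLeft
  have hcoeff : ∀ c d, ¬(IsBoson d ∧ ¬IsBoson c) → coeff c d = 0 := by
    rintro (_ | _ | _) (_ | _ | _) h <;> simp_all [coeff, IsBoson]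
  rw [sparseDet, sparseDet, ← listDet_add_rows _ _ (sparseEntry K1 K2) IsBoson coeff hcoeff]
  refine listDet_congr fun r _ c _ => ?_
  rcases r with x | x | r <;> rcases c with y | j | j | j <;>
    simp [sparseEntry, coeff, rowKeys, Function.comp_def]

theorem sparseDet_congr {K1' K2' : ℂ → ℂ → ℂ} (h1 : ∀ x ∈ X1, ∀ y ∈ Y, K1 x y = K1' x y)
    (h2 : ∀ x ∈ X2, ∀ y ∈ Y, K2 x y = K2' x y) :
    sparseDet K1 K2 X1 X2 Y R S T1 T2 = sparseDet K1' K2' X1 X2 Y R S T1 T2 := by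
  refine listDet_congr fun r hr c hc => ?_
  rcases r with x | x | r <;> rcases c with y | j | j | j <;>
    simp_all [sparseEntry, rowKeys, colKeys]

theorem sparseDet_mul_kernels {c1 c2 : ℂ} (hc1 : c1 * c1 = 1) (hc2 : c2 * c2 = 1)
    (hS : S = [] ∨ c1 = c2) :
    sparseDet (fun x y => c1 * K1 x y) (fun x y => c2 * K2 x y) X1 X2 Y R S T1 T2 =
      c1 ^ (X1.length + S.length + T1.length) * c2 ^ (X2.length + T2.length) *
        sparseDet K1 K2 X1 X2 Y R S T1 T2 := by
  rw [sparseDet, listDet_rescale (e' := sparseEntry K1 K2)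
    (Sum.elim (fun _ => c1) (Sum.elim (fun _ => c2) fun _ => 1))
    (Sum.elim (fun _ => 1) (Sum.elim (fun _ => c1) (Sum.elim (fun _ => c1) fun _ => c2)))]
  · simp only [rowKeys, colKeys, List.map_append, List.map_map, List.prod_append,
      Function.comp_def, Sum.elim_inl, Sum.elim_inr, List.map_const', List.prod_replicate,
      one_pow, sparseDet]
    ring
  · intro r _ c hc
    rcases hS with rfl | rfl <;> rcases r with x | x | r <;> rcases c with y | j | j | j <;>
      simp_all [sparseEntry, colKeys, ← mul_assoc]

theorem sparseDet_eliminate {K1' K2' : ℂ → ℂ → ℂ} {c1 c2 : ℂ} {κS κ1 κ2 l1 l2 : ℤ → ℂ → ℂ}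
    (h1 : ∀ x ∈ X1, ∀ y ∈ Y, K1 x y = c1 * K1' x y +
      (S.map fun j => x ^ (j - 1) * κS j y).sum + (T1.map fun j => x ^ (j - 1) * κ1 j y).sum +
      (R.map fun r => y ^ (r - 1) * l1 r x).sum)
    (h2 : ∀ x ∈ X2, ∀ y ∈ Y, K2 x y = c2 * K2' x y +
      (S.map fun j => x ^ (j - 1) * κS j y).sum + (T2.map fun j => x ^ (j - 1) * κ2 j y).sum +
      (R.map fun r => y ^ (r - 1) * l2 r x).sum)
    (hc1 : c1 * c1 = 1) (hc2 : c2 * c2 = 1) (hS : S = [] ∨ c1 = c2) :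
    sparseDet K1 K2 X1 X2 Y R S T1 T2 =
      c1 ^ (X1.length + S.length + T1.length) * c2 ^ (X2.length + T2.length) *
        sparseDet K1' K2' X1 X2 Y R S T1 T2 := by
  rw [sparseDet_congr h1 h2, sparseDet_add_rows, sparseDet_add_cols,
    sparseDet_mul_kernels hc1 hc2 hS]

/-- The hypotheses on the values of the bosonic and fermionic parameters under which the Cauchy
kernels have neither zeros nor poles. -/
structure IsGeneric (X Y : List ℂ) : Prop where
  left_ne_zero : ∀ x ∈ X, x ≠ 0
  right_ne_zero : ∀ y ∈ Y, y ≠ 0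
  add_ne_zero : ∀ x ∈ X, ∀ y ∈ Y, x + y ≠ 0

namespace IsGeneric

theorem swap {X1 X2 Y1 Y2 : List ℂ} (h : IsGeneric (X1 ++ X2) (Y1 ++ Y2)) :
    IsGeneric (X2 ++ X1) (Y2 ++ Y1) := by
  have hX {x} : x ∈ X2 ++ X1 → x ∈ X1 ++ X2 := List.perm_append_comm.mem_iff.1
  have hY {y} : y ∈ Y2 ++ Y1 → y ∈ Y1 ++ Y2 := List.perm_append_comm.mem_iff.1
  exact ⟨fun x hx => h.1 x (hX hx), fun y hy => h.2 y (hY hy),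
    fun x hx y hy => h.3 x (hX hx) y (hY hy)⟩

end IsGeneric

theorem neg_one_zpow_mul_self (n : ℤ) : (-1 : ℂ) ^ n * (-1) ^ n = 1 := by
  rw [← zpow_add₀ (by norm_num), Even.neg_one_zpow ⟨n, rfl⟩]

theorem neg_one_zpow_pow (n : ℤ) (k : ℕ) : ((-1 : ℂ) ^ n) ^ k = (-1) ^ (n * k) := by
  rw [zpow_mul, zpow_natCast]

theorem sparseDet_shift (h : IsGeneric (X1 ++ X2) Y) (t u : ℤ) :
    sparseDet (kernel t) (kernel t) X1 X2 Y (seg (t + 1) u) (seg (1 - t) (-u)) T1 T2 =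
      (-1) ^ ((u - t) * (X1.length + X2.length + (-u + t).toNat + T1.length + T2.length)) *
        sparseDet (kernel u) (kernel u) X1 X2 Y (seg (t + 1) u) (seg (1 - t) (-u)) T1 T2 := by
  have htel : ∀ x ∈ X1 ++ X2, ∀ y ∈ Y, ∀ T : List ℤ, kernel t x y = (-1) ^ (u - t) * kernel u x y +
      ((seg (1 - t) (-u)).map fun j => x ^ (j - 1) * elimCoeff (-t) j y).sum +
      (T.map fun j => x ^ (j - 1) * (0 : ℤ → ℂ → ℂ) j y).sum +
      ((seg (t + 1) u).map fun r => y ^ (r - 1) * elimCoeff t r x).sum := fun x hx y hy T => by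
    simpa using kernel_eq_telescope (h.1 x hx) (h.2 y hy) (h.3 x hx y hy) t u
  rw [sparseDet_eliminate (fun x hx y hy => htel x (List.mem_append_left _ hx) y hy T1)
    (fun x hx y hy => htel x (List.mem_append_right _ hx) y hy T2)
    (neg_one_zpow_mul_self _) (neg_one_zpow_mul_self _) (.inr rfl), ← pow_add, neg_one_zpow_pow,
    length_seg]
  congr 3
  rw [show -u - (1 - t) + 1 = -u + t by ring]
  push_cast
  ring

theorem sum_map_append_ite {P : ℤ → Prop} [DecidablePred P] {L L' : List ℤ} (hL : ∀ r ∈ L, P r)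
    (hL' : ∀ r ∈ L', ¬P r) (f g : ℤ → ℂ) :
    ((L ++ L').map fun r => g r * if P r then f r else 0).sum = (L.map fun r => g r * f r).sum := by
  rw [List.map_append, List.sum_append,
    List.map_congr_left (l := L) (g := fun r => g r * f r) fun r hr => by rw [if_pos (hL r hr)],
    List.map_congr_left (l := L') (g := fun _ => 0) fun r hr => by rw [if_neg (hL' r hr), mul_zero]]
  simp

theorem sparseDet_shift_blocks (h : IsGeneric (X1 ++ X2) Y) {t1 u1 t2 u2 : ℤ}
    (hdisj : (seg (t1 + 1) u1).Disjoint (seg (t2 + 1) u2)) :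
    sparseDet (kernel t1) (kernel t2) X1 X2 Y (seg (t1 + 1) u1 ++ seg (t2 + 1) u2) []
        (seg (1 - t1) (-u1)) (seg (1 - t2) (-u2)) =
      (-1) ^ ((u1 - t1) * (X1.length + (t1 - u1).toNat) +
          (u2 - t2) * (X2.length + (t2 - u2).toNat)) *
        sparseDet (kernel u1) (kernel u2) X1 X2 Y (seg (t1 + 1) u1 ++ seg (t2 + 1) u2) []
          (seg (1 - t1) (-u1)) (seg (1 - t2) (-u2)) := by
  set R1 := seg (t1 + 1) u1 with hR1
  set R2 := seg (t2 + 1) u2 with hR2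
  have h1 : ∀ x ∈ X1, ∀ y ∈ Y, kernel t1 x y = (-1) ^ (u1 - t1) * kernel u1 x y +
      (([] : List ℤ).map fun j => x ^ (j - 1) * (0 : ℤ → ℂ → ℂ) j y).sum +
      ((seg (1 - t1) (-u1)).map fun j => x ^ (j - 1) * elimCoeff (-t1) j y).sum +
      ((R1 ++ R2).map fun r => y ^ (r - 1) * if r ∈ R1 then elimCoeff t1 r x else 0).sum := by
    intro x hx y hy
    replace hx := List.mem_append_left X2 hx
    rw [sum_map_append_ite (fun r hr => hr) fun r hr hr' => hdisj hr' hr, hR1,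
      kernel_eq_telescope (h.1 x hx) (h.2 y hy) (h.3 x hx y hy) t1 u1]
    simp
  have h2 : ∀ x ∈ X2, ∀ y ∈ Y, kernel t2 x y = (-1) ^ (u2 - t2) * kernel u2 x y +
      (([] : List ℤ).map fun j => x ^ (j - 1) * (0 : ℤ → ℂ → ℂ) j y).sum +
      ((seg (1 - t2) (-u2)).map fun j => x ^ (j - 1) * elimCoeff (-t2) j y).sum +
      ((R1 ++ R2).map fun r => y ^ (r - 1) * if r ∈ R2 then elimCoeff t2 r x else 0).sum := by
    intro x hx y hy
    replace hx := List.mem_append_right X1 hx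
    rw [(List.perm_append_comm.map _).sum_eq,
      sum_map_append_ite (fun r hr => hr) fun r hr hr' => hdisj hr hr', hR2,
      kernel_eq_telescope (h.1 x hx) (h.2 y hy) (h.3 x hx y hy) t2 u2]
    simp
  rw [sparseDet_eliminate (l1 := fun r x => if r ∈ R1 then elimCoeff t1 r x else 0)
    (l2 := fun r x => if r ∈ R2 then elimCoeff t2 r x else 0) h1 h2
    (neg_one_zpow_mul_self _) (neg_one_zpow_mul_self _) (.inl rfl), neg_one_zpow_pow,
    neg_one_zpow_pow, ← zpow_add₀ (by norm_num), length_seg, length_seg]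
  simp only [List.length_nil, add_zero, Nat.cast_add, neg_sub_left]
  congr 3 <;> ring_nf

theorem sparseDet_inv (h : IsGeneric (X1 ++ X2) Y) (t1 t2 w : ℤ) :
    sparseDet (kernel t1) (kernel t2) (X1.map (·⁻¹)) (X2.map (·⁻¹)) (Y.map (·⁻¹)) R S T1 T2 =
      (X1 ++ X2).prod ^ (1 + w) * (Y.prod ^ (1 - w) *
        sparseDet (kernel (w - t1)) (kernel (w - t2)) X1 X2 Y (R.map (1 + w - ·))
          (S.map (1 - w - ·)) (T1.map (1 - w - ·)) (T2.map (1 - w - ·))) := by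
  have hl := sparseDet_map (kernel t1) (kernel t2) (·⁻¹) (·⁻¹) id id X1 X2 Y R S T1 T2
  have hr := sparseDet_map (kernel (w - t1)) (kernel (w - t2)) id id (1 + w - ·) (1 - w - ·)
    X1 X2 Y R S T1 T2
  simp only [List.map_id] at hl hr
  rw [hl, hr, listDet_rescale (Sum.elim (· ^ (1 + w)) (Sum.elim (· ^ (1 + w)) fun _ => 1))
    (Sum.elim (· ^ (1 - w)) fun _ => 1) ?_]
  · congr 2
    · simp [rowKeys, Function.comp_def, List.prod_zpow, mul_zpow]
    · simp [colKeys, Function.comp_def, List.prod_zpow]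
  · clear hl hr
    intro r hr c hc
    have hX : ∀ x ∈ X1 ++ X2, ∀ j : ℤ, x⁻¹ ^ (j - 1) = x ^ (1 + w) * x ^ (1 - w - j - 1) :=
      fun x hx j => by rw [← zpow_add₀ (h.1 x hx), inv_zpow']; congr 1; ring
    have hY : ∀ y ∈ Y, ∀ r : ℤ, y⁻¹ ^ (r - 1) = y ^ (1 - w) * y ^ (1 + w - r - 1) :=
      fun y hy r => by rw [← zpow_add₀ (h.2 y hy), inv_zpow']; congr 1; ring
    have hK : ∀ x ∈ X1 ++ X2, ∀ y ∈ Y, ∀ t, kernel t x⁻¹ y⁻¹ = _ := fun x hx y hy =>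
      kernel_inv (h.1 x hx) (h.2 y hy) (h.3 x hx y hy) w
    rcases r with x | x | r <;> rcases c with y | j | j | j <;>
      simp only [rowKeys, colKeys, List.mem_append, List.mem_map, Sum.inl.injEq, Sum.inr.injEq,
        reduceCtorEq, exists_eq_right, exists_const, and_false, or_self, or_false, false_or]
        at hr hc <;>
      simp [sparseEntry, hX, hY, hK, hr, hc]

theorem listDet_rowKeys_swap {ι β : Type*} (X1 X2 : List ι) (R : List ℤ) (cols : List β)
    (e : ι ⊕ (ι ⊕ ℤ) → β → ℂ) :
    listDet (rowKeys X1 X2 R) cols e =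
      (-1) ^ (X1.length * X2.length + R.length.choose 2) *
        listDet (rowKeys X2 X1 R.reverse) cols fun r =>
          e (Sum.elim (fun x => .inr (.inl x)) (Sum.elim .inl fun r => .inr (.inr r)) r) := by
  have hskew := isSkewSymm_listDet_rows (cols := cols) (e := e)
  have hswap := hskew.append_comm [] (X1.map .inl) (X2.map fun x => .inr (.inl x))
    (R.map fun r => .inr (.inr r))
  have hrev := hskew.reverse (X2.map (fun x => .inr (.inl x)) ++ X1.map .inl)
    (R.map fun r => .inr (.inr r)) []
  simp only [List.nil_append, List.append_nil, List.append_assoc, List.length_map,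
    ← List.map_reverse] at hswap hrev
  have hmap := listDet_map (rowKeys X2 X1 R.reverse) cols
    (Sum.elim (fun x => .inr (.inl x)) (Sum.elim .inl fun r => .inr (.inr r))) id e
  simp only [List.map_id, id] at hmap
  rw [← hmap, rowKeys, hswap, hrev, ← mul_assoc, ← pow_add]
  simp [rowKeys, Function.comp_def]

theorem listDet_colKeys_swap {ι α : Type*} (Y1 Y2 : List ι) (S T1 T2 : List ℤ) (rows : List α)
    (e : α → ι ⊕ (ℤ ⊕ (ℤ ⊕ ℤ)) → ℂ) :
    listDet rows (colKeys (Y1 ++ Y2) S T1 T2) e =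
      (-1) ^ (Y1.length * Y2.length + S.length.choose 2 + (T1.length + T2.length).choose 2) *
        listDet rows (colKeys (Y2 ++ Y1) S.reverse T2.reverse T1.reverse) fun r c =>
          e r (Sum.map id (Sum.map id Sum.swap) c) := by
  have hskew := isSkewSymm_listDet_cols (rows := rows) (e := e)
  set S' : List (ι ⊕ (ℤ ⊕ (ℤ ⊕ ℤ))) := S.map fun j => .inr (.inl j)
  set T' : List (ι ⊕ (ℤ ⊕ (ℤ ⊕ ℤ))) :=
    T1.map (fun j => .inr (.inr (.inl j))) ++ T2.map fun j => .inr (.inr (.inr j))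
  have hswap := hskew.append_comm [] (Y1.map .inl) (Y2.map .inl) (S' ++ T')
  have hrevS := hskew.reverse (Y2.map .inl ++ Y1.map .inl) S' T'
  have hrevT := hskew.reverse (Y2.map .inl ++ (Y1.map .inl ++ S'.reverse)) T' []
  simp only [List.nil_append, List.append_nil, List.append_assoc, List.length_map]
    at hswap hrevS hrevT
  have hmap := listDet_map rows (colKeys (Y2 ++ Y1) S.reverse T2.reverse T1.reverse) id
    (Sum.map id (Sum.map id Sum.swap)) e
  simp only [List.map_id, id] at hmap
  rw [← hmap, colKeys, List.map_append, List.append_assoc, hswap, hrevS, hrevT, ← mul_assoc,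
    ← pow_add, ← mul_assoc, ← pow_add]
  simp [colKeys, Function.comp_def, S', T']

theorem sparseDet_swap (X1 X2 Y1 Y2 : List ℂ) (R S T1 T2 : List ℤ) :
    sparseDet K1 K2 X1 X2 (Y1 ++ Y2) R S T1 T2 =
      (-1) ^ (X1.length * X2.length + R.length.choose 2 +
          (Y1.length * Y2.length + S.length.choose 2 + (T1.length + T2.length).choose 2)) *
        sparseDet K2 K1 X2 X1 (Y2 ++ Y1) R.reverse S.reverse T2.reverse T1.reverse := by
  rw [sparseDet, listDet_rowKeys_swap, listDet_colKeys_swap, ← mul_assoc, ← pow_add, sparseDet]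
  congr 1
  refine listDet_congr fun r _ c _ => ?_
  rcases r with x | x | r <;> rcases c with y | j | j | j <;> rfl

end SparseDeterminants

section CauchyDenominators

theorem pairProd_cons {ι : Type*} (x : ι) (L : List ι) (g : ι → ι → ℂ) :
    pairProd (x :: L) g = (L.map (g x)).prod * pairProd L g := by
  simp only [pairProd, List.length_cons]
  rw [Fin.prod_univ_succ, Fin.prod_univ_succ]
  congr 1
  · simp [← Fin.prod_univ_fun_getElem]
  · refine Finset.prod_congr rfl fun i _ => ?_
    simp [Fin.prod_univ_succ]

@[simp]
theorem pairProd_nil {ι : Type*} (g : ι → ι → ℂ) : pairProd [] g = 1 := by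
  simp [pairProd]

theorem pairProd_map {ι κ : Type*} (f : ι → κ) (L : List ι) (g : κ → κ → ℂ) :
    pairProd (L.map f) g = pairProd L fun x y => g (f x) (f y) := by
  induction L with
  | nil => simp
  | cons x L ih => simp [pairProd_cons, ih, Function.comp_def]

theorem isSkewSymm_pairProd_sub : IsSkewSymm fun X : List ℂ => pairProd X fun x y => x - y := by
  intro A x y D
  induction A with
  | nil =>
    simp only [List.nil_append, pairProd_cons, List.map_cons, List.prod_cons]
    ring
  | cons a A ih =>
    simp only [List.cons_append, pairProd_cons, ih, List.map_append, List.map_cons,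
      List.prod_append, List.prod_cons]
    ring

theorem prod_map_mul_inv_mul (c : ℂ) (L : List ℂ) (g : ℂ → ℂ) :
    (L.map fun y => c * (y⁻¹ * g y)).prod = c ^ L.length * (L.prod⁻¹ * (L.map g).prod) := by
  rw [List.prod_map_mul, List.prod_map_mul, List.map_const', List.prod_replicate, List.prod_inv]

theorem pairProd_inv {X : List ℂ} (hX : ∀ x ∈ X, x ≠ 0) :
    (pairProd (X.map (·⁻¹)) fun x y => x - y) =
      (-1) ^ X.length.choose 2 * (X.prod ^ (1 - X.length : ℤ) * pairProd X fun x y => x - y) := by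
  induction X with
  | nil => simp
  | cons x X ih =>
    have hx : x ≠ 0 := hX x (by simp)
    replace hX : ∀ y ∈ X, y ≠ 0 := fun y hy => hX y (by simp [hy])
    have hP : X.prod ≠ 0 := List.prod_ne_zero fun h => hX 0 h rfl
    have hrow : ((X.map (·⁻¹)).map fun y => x⁻¹ - y).prod =
        (-1) ^ X.length * (x ^ (-X.length : ℤ) * (X.prod⁻¹ * (X.map fun y => x - y).prod)) := by
      have hterm : ∀ y ∈ X, x⁻¹ - y⁻¹ = -x⁻¹ * (y⁻¹ * (x - y)) := fun y hy => by
        have := hX y hy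
        field_simp
        ring
      rw [List.map_map, Function.comp_def, List.map_congr_left hterm, prod_map_mul_inv_mul,
        neg_pow, mul_assoc, zpow_neg, zpow_natCast, inv_pow]
    rw [List.map_cons, pairProd_cons, pairProd_cons, hrow, ih hX, List.length_cons,
      Nat.choose_succ_succ' X.length 1, Nat.choose_one_right, pow_add, List.prod_cons,
      Nat.cast_add_one, sub_add_cancel_right, mul_zpow, sub_eq_add_neg, zpow_one_add₀ hP]
    field_simp

/-- The denominator `D(B|F)` in terms of `x = z_b` and `y = -z_f`, in which it is symmetric. -/
noncomputable def cauchyDen (X Y : List ℂ) : ℂ :=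
  (pairProd X fun x x' => x - x') * (pairProd Y fun y y' => y - y') /
    prodLL X Y fun x y => x + y

theorem Dden_eq_cauchyDen {ι : Type*} (z : ι → ℂ) (B F : List ι) :
    Dden z B F = cauchyDen (B.map z) (F.map fun f => -z f) := by
  simp [Dden, cauchyDen, pairProd_map, prodLL, Function.comp_def, sub_eq_add_neg, add_comm]

theorem cauchyDen_swap (X1 X2 Y1 Y2 : List ℂ) :
    cauchyDen (X1 ++ X2) (Y1 ++ Y2) =
      (-1) ^ (X1.length * X2.length + Y1.length * Y2.length) *
        cauchyDen (X2 ++ X1) (Y2 ++ Y1) := by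
  have hX := isSkewSymm_pairProd_sub.append_comm [] X1 X2 []
  have hY := isSkewSymm_pairProd_sub.append_comm [] Y1 Y2 []
  have hXY : prodLL (X1 ++ X2) (Y1 ++ Y2) (fun x y => x + y) =
      prodLL (X2 ++ X1) (Y2 ++ Y1) fun x y => x + y := by
    simp only [prodLL, List.map_append, List.prod_append, mul_comm]
  simp only [List.nil_append, List.append_nil] at hX hY
  rw [cauchyDen, cauchyDen, hX, hY, hXY, pow_add]
  ring

theorem prodLL_inv {X Y : List ℂ} (h : IsGeneric X Y) :
    (prodLL (X.map (·⁻¹)) (Y.map (·⁻¹)) fun x y => x + y) =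
      X.prod ^ (-Y.length : ℤ) * (Y.prod ^ (-X.length : ℤ) * prodLL X Y fun x y => x + y) := by
  have hterm : ∀ x ∈ X, ((Y.map (·⁻¹)).map fun y => x⁻¹ + y).prod =
      x ^ (-Y.length : ℤ) * (Y.prod⁻¹ * (Y.map fun y => x + y).prod) := fun x hx => by
    have hsum : ∀ y ∈ Y, x⁻¹ + y⁻¹ = x⁻¹ * (y⁻¹ * (x + y)) := fun y hy => by
      have := h.1 x hx
      have := h.2 y hy
      field_simp
      ring
    rw [List.map_map, Function.comp_def, List.map_congr_left hsum, prod_map_mul_inv_mul,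
      zpow_neg, zpow_natCast, inv_pow]
  rw [prodLL, List.map_map, Function.comp_def, List.map_congr_left hterm, List.prod_map_mul,
    List.prod_map_mul, ← List.prod_zpow, List.map_const', List.prod_replicate, zpow_neg, zpow_neg,
    zpow_natCast, zpow_natCast, inv_pow, prodLL]

theorem cauchyDen_inv {X Y : List ℂ} (h : IsGeneric X Y) :
    cauchyDen (X.map (·⁻¹)) (Y.map (·⁻¹)) =
      (-1) ^ (X.length.choose 2 + Y.length.choose 2) *
        (X.prod ^ (1 - X.length + Y.length : ℤ) * (Y.prod ^ (1 - Y.length + X.length : ℤ) *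
          cauchyDen X Y)) := by
  have hX : X.prod ≠ 0 := List.prod_ne_zero fun h0 => h.1 0 h0 rfl
  have hY : Y.prod ≠ 0 := List.prod_ne_zero fun h0 => h.2 0 h0 rfl
  rw [cauchyDen, cauchyDen, pairProd_inv h.1, pairProd_inv h.2, prodLL_inv h, zpow_add₀ hX _ _,
    zpow_add₀ hY _ _, zpow_neg, zpow_neg, pow_add]
  field_simp

end CauchyDenominators

section InversionFormula

/-- A sparse determinant with kernels `kernel t1` and `kernel t2`, divided by its Cauchy
denominator: the common shape, up to a sign, of all regional formulas for supercharacters. -/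
noncomputable def sparseRatio (t1 t2 : ℤ) (X1 X2 Y1 Y2 : List ℂ) (R S T1 T2 : List ℤ) : ℂ :=
  sparseDet (kernel t1) (kernel t2) X1 X2 (Y1 ++ Y2) R S T1 T2 / cauchyDen (X1 ++ X2) (Y1 ++ Y2)

theorem Delta_div_Dden {ι : Type*} (z : ι → ℂ) (B1 B2 F1 F2 : List ι) (R S T1 T2 : List ℤ)
    (η : ℤ) :
    Delta z B1 B2 (F1 ++ F2) R S T1 T2 η / Dden z (B1 ++ B2) (F1 ++ F2) =
      sparseRatio 0 η (B1.map z) (B2.map z) (F1.map fun f => -z f) (F2.map fun f => -z f)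
        R S T1 T2 := by
  rw [Delta_eq_sparseDet, Dden_eq_cauchyDen, sparseRatio, List.map_append, List.map_append]

theorem neg_one_pow_choose_two {m n r σ τ : ℕ} (h : n + σ + τ = m + r) :
    (-1 : ℂ) ^ (r.choose 2 + (σ.choose 2 + τ.choose 2)) =
      (-1) ^ (σ * τ + (m + n) * (m + σ + τ)) * (-1) ^ (m.choose 2 + n.choose 2) := by
  have hmr := choose_two_add m r
  rw [← h, add_assoc, choose_two_add n (σ + τ), choose_two_add σ τ] at hmr
  zify at h hmr
  rw [← pow_add, ← zpow_natCast, ← zpow_natCast]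
  refine neg_one_zpow_congr ⟨r.choose 2 - n.choose 2 - σ * τ - m * m - n * (σ + τ), ?_⟩
  push_cast
  linear_combination hmr - m * h

variable {X1 X2 Y1 Y2 : List ℂ} {R S T1 T2 : List ℤ}

theorem sparseRatio_inv (h : IsGeneric (X1 ++ X2) (Y1 ++ Y2))
    (hsq : (Y1 ++ Y2).length + S.length + (T1.length + T2.length) =
      (X1 ++ X2).length + R.length) (t1 t2 w : ℤ) :
    sparseRatio t1 t2 (X1.map (·⁻¹)) (X2.map (·⁻¹)) (Y1.map (·⁻¹)) (Y2.map (·⁻¹)) R S T1 T2 =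
      (-1) ^ (S.length * (T1.length + T2.length) + ((X1 ++ X2).length + (Y1 ++ Y2).length) *
          ((X1 ++ X2).length + S.length + (T1.length + T2.length))) *
        (((X2 ++ X1).prod / (Y2 ++ Y1).prod) ^
          (w + (X1 ++ X2).length - (Y1 ++ Y2).length : ℤ) *
        sparseRatio (w - t2) (w - t1) X2 X1 Y2 Y1 (R.map (1 + w - ·)).reverse
          (S.map (1 - w - ·)).reverse (T2.map (1 - w - ·)).reverse
          (T1.map (1 - w - ·)).reverse) := by
  have hX : (X1 ++ X2).prod ≠ 0 := List.prod_ne_zero fun h0 => h.1 0 h0 rfl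
  have hY : (Y1 ++ Y2).prod ≠ 0 := List.prod_ne_zero fun h0 => h.2 0 h0 rfl
  have hden := cauchyDen_inv h
  rw [cauchyDen_swap, List.map_append, List.map_append] at hden
  set m := (X1 ++ X2).length
  set n := (Y1 ++ Y2).length
  have hXpow : (X1 ++ X2).prod ^ (1 + w) =
      (X1 ++ X2).prod ^ (1 - m + n : ℤ) * (X1 ++ X2).prod ^ (w + m - n) := by
    rw [← zpow_add₀ hX]
    ring_nf
  have hYpow : (Y1 ++ Y2).prod ^ (1 - w) =
      (Y1 ++ Y2).prod ^ (1 - n + m : ℤ) / (Y1 ++ Y2).prod ^ (w + m - n) := by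
    rw [← zpow_sub₀ hY]
    ring_nf
  rw [sparseRatio, sparseRatio, hden, ← List.map_append, sparseDet_inv h t1 t2 w, sparseDet_swap,
    (List.perm_append_comm (l₁ := X2)).prod_eq, (List.perm_append_comm (l₁ := Y2)).prod_eq, hXpow,
    hYpow, div_zpow]
  simp only [List.length_map, add_assoc (Y1.length * Y2.length)]
  rw [add_add_add_comm (X1.length * X2.length),
    pow_add _ (X1.length * X2.length + Y1.length * Y2.length), neg_one_pow_choose_two hsq]
  field_simp

end InversionFormula

section RegionalFormulas

/-- The supercharacter with `p = s + η1` and `q = -s + η2` in the region `max p q ≤ a`, in terms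
of the values `x = z_b` and `y = -z_f` and without the global sign `(-1)^θ`. As a segment is empty
when its end precedes its start, one formula covers the regions (1)-(4). -/
noncomputable def charMiddle (X1 X2 Y1 Y2 : List ℂ) (a p q : ℤ) : ℂ :=
  (-1) ^ (p * X2.length + p.toNat * q) *
    sparseRatio 0 (a - p) X1 X2 Y1 Y2 (seg 1 (-p) ++ seg (a - p + 1) (a - p - q)) [] (seg 1 p)
      (seg (p - a + 1) (p + q - a))

/-- The analogue of `charMiddle` for the region `a ≤ p`, covering (5) and (6). -/
noncomputable def charRight (X1 X2 Y1 Y2 : List ℂ) (a p q : ℤ) : ℂ :=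
  (-1) ^ (a * X2.length + a * (a - p - q).toNat) *
    sparseRatio 0 0 X1 X2 Y1 Y2 (seg 1 (a - p - q)) (seg 1 (p + q - a)) (seg (p - a + 1) p) []

/-- The analogue of `charMiddle` for the region `a ≤ q`, covering (7) and (8). -/
noncomputable def charLeft (X1 X2 Y1 Y2 : List ℂ) (a p q : ℤ) : ℂ :=
  (-1) ^ (a * (1 + X2.length) + a * (a - p - q).toNat) *
    sparseRatio 0 0 X1 X2 Y1 Y2 (seg 1 (a - p - q)) (seg 1 (p + q - a)) [] (seg (p - a + 1) p)

variable {X1 X2 Y1 Y2 : List ℂ} {a p q : ℤ}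

theorem sparseRatio_middle_shift (h : IsGeneric (X1 ++ X2) (Y1 ++ Y2)) (ha : 0 ≤ a) :
    sparseRatio 0 (a - p) X1 X2 Y1 Y2 (seg 1 (-p) ++ seg (a - p + 1) (a - p - q)) [] (seg 1 p)
        (seg (p - a + 1) (p + q - a)) =
      (-1) ^ (-p * (X1.length + p.toNat) + -q * (X2.length + q.toNat)) *
        sparseRatio (-p) (a - p - q) X1 X2 Y1 Y2 (seg 1 (-p) ++ seg (a - p + 1) (a - p - q)) []
          (seg 1 p) (seg (p - a + 1) (p + q - a)) := by
  have hdisj : (seg (0 + 1) (-p)).Disjoint (seg (a - p + 1) (a - p - q)) := fun i hi hi' => by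
    rw [mem_seg] at hi hi'
    omega
  have hshift := sparseDet_shift_blocks h hdisj
  rw [zero_add, sub_zero, sub_zero, zero_sub, neg_neg, sub_sub_cancel_left, sub_sub_cancel,
    show 1 - (a - p) = p - a + 1 by ring, show -(a - p - q) = p + q - a by ring] at hshift
  rw [sparseRatio, sparseRatio, ← mul_div_assoc, hshift]

theorem sparseRatio_middle_inv (h : IsGeneric (X1 ++ X2) (Y1 ++ Y2))
    (hpq : p + q = (X1 ++ X2).length - (Y1 ++ Y2).length) :
    sparseRatio 0 (a - p) (X1.map (·⁻¹)) (X2.map (·⁻¹)) (Y1.map (·⁻¹)) (Y2.map (·⁻¹))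
        (seg 1 (-p) ++ seg (a - p + 1) (a - p - q)) [] (seg 1 p) (seg (p - a + 1) (p + q - a)) =
      (-1) ^ (((X1 ++ X2).length + (Y1 ++ Y2).length) *
          ((X1 ++ X2).length + (p.toNat + q.toNat))) *
        (((X2 ++ X1).prod / (Y2 ++ Y1).prod) ^ a *
          sparseRatio (-q) (a - q - p) X2 X1 Y2 Y1 (seg 1 (-q) ++ seg (a - q + 1) (a - q - p)) []
            (seg 1 q) (seg (q - a + 1) (q + p - a))) := by
  have hT1 : (seg 1 p).length = p.toNat := by rw [length_seg, sub_add_cancel]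
  have hT2 : (seg (p - a + 1) (p + q - a)).length = q.toNat := by
    rw [length_seg]
    congr 1
    ring
  have hsq : (Y1 ++ Y2).length + 0 + (p.toNat + q.toNat) = (X1 ++ X2).length +
      (seg 1 (-p) ++ seg (a - p + 1) (a - p - q)).length := by
    rw [List.length_append (as := seg 1 (-p)), length_seg, length_seg]
    omega
  rw [sparseRatio_inv h (by rw [hT1, hT2]; exact hsq) 0 (a - p) (a - p - q), hT1, hT2]
  simp only [List.map_append, List.reverse_append, reverse_map_sub_seg, List.map_nil,
    List.reverse_nil, List.length_nil, zero_mul, zero_add, add_zero]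
  congr! 3
  · omega
  all_goals ring_nf

theorem charMiddle_inv (h : IsGeneric (X1 ++ X2) (Y1 ++ Y2))
    (hpq : p + q = (X1 ++ X2).length - (Y1 ++ Y2).length) (ha : 0 ≤ a) :
    charMiddle (X1.map (·⁻¹)) (X2.map (·⁻¹)) (Y1.map (·⁻¹)) (Y2.map (·⁻¹)) a p q =
      ((X2 ++ X1).prod / (Y2 ++ Y1).prod) ^ a * charMiddle X2 X1 Y2 Y1 a q p := by
  have hX : (X1 ++ X2).length = X1.length + X2.length := List.length_append
  have hY : ((Y1 ++ Y2).length : ℤ) = X1.length + X2.length - p - q := by omega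
  have hsign : (-1 : ℂ) ^ (p * X2.length + p.toNat * q) * (-1) ^ (((X1 ++ X2).length +
      (Y1 ++ Y2).length) * ((X1 ++ X2).length + (p.toNat + q.toNat))) =
      (-1) ^ (q * X1.length + q.toNat * p) *
        (-1) ^ (-q * (X2.length + q.toNat) + -p * (X1.length + p.toNat)) := by
    rw [← zpow_natCast, ← zpow_add₀ (by norm_num), ← zpow_add₀ (by norm_num)]
    refine neg_one_zpow_congr ⟨(X1.length + X2.length) * (X1.length + X2.length + p.toNat + q.toNat)
      - q * X1.length - q.toNat * p, ?_⟩
    push_cast [hX, hY]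
    ring
  rw [charMiddle, charMiddle, List.length_map, sparseRatio_middle_inv h hpq,
    sparseRatio_middle_shift h.swap ha, ← mul_assoc, hsign]
  ring

theorem sparseRatio_zero_shift (h : IsGeneric (X1 ++ X2) (Y1 ++ Y2)) (k : ℤ) (T1 T2 : List ℤ) :
    sparseRatio 0 0 X1 X2 Y1 Y2 (seg 1 (-k)) (seg 1 k) T1 T2 =
      (-1) ^ (-k * (X1.length + X2.length + k.toNat + T1.length + T2.length)) *
        sparseRatio (-k) (-k) X1 X2 Y1 Y2 (seg 1 (-k)) (seg 1 k) T1 T2 := by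
  have hshift := sparseDet_shift (T1 := T1) (T2 := T2) h 0 (-k)
  rw [zero_add, sub_zero, sub_zero, add_zero, neg_neg] at hshift
  rw [sparseRatio, sparseRatio, ← mul_div_assoc, hshift]

theorem sparseRatio_zero_inv (h : IsGeneric (X1 ++ X2) (Y1 ++ Y2)) {k : ℤ} {T1 T2 : List ℤ}
    (hk : k + (T1.length + T2.length) = (X1 ++ X2).length - (Y1 ++ Y2).length) :
    sparseRatio 0 0 (X1.map (·⁻¹)) (X2.map (·⁻¹)) (Y1.map (·⁻¹)) (Y2.map (·⁻¹)) (seg 1 (-k))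
        (seg 1 k) T1 T2 =
      (-1) ^ ((T1.length + T2.length) * (X1.length + X2.length + 1)) *
        (((X2 ++ X1).prod / (Y2 ++ Y1).prod) ^ (T1.length + T2.length) *
          sparseRatio 0 0 X2 X1 Y2 Y1 (seg 1 (-k)) (seg 1 k)
            (T2.map (1 + k - ·)).reverse (T1.map (1 + k - ·)).reverse) := by
  have hS : (seg 1 k).length = k.toNat := by rw [length_seg, sub_add_cancel]
  have hR : (seg 1 (-k)).length = (-k).toNat := by rw [length_seg, sub_add_cancel]
  have hX : (X1 ++ X2).length = X1.length + X2.length := List.length_append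
  have hY : ((Y1 ++ Y2).length : ℤ) = X1.length + X2.length - k - (T1.length + T2.length) := by
    omega
  have hpow : -k + (X1 ++ X2).length - (Y1 ++ Y2).length =
      ((T1.length + T2.length : ℕ) : ℤ) := by
    omega
  have hsign : (-1 : ℂ) ^ (k.toNat * (T1.length + T2.length) +
        ((X1 ++ X2).length + (Y1 ++ Y2).length) *
          ((X1 ++ X2).length + k.toNat + (T1.length + T2.length))) =
      (-1) ^ ((T1.length + T2.length) * (X1.length + X2.length + 1)) *
        (-1) ^ (-k * (X2.length + X1.length + k.toNat + T2.length + T1.length)) := by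
    obtain ⟨r, hr⟩ := Int.even_mul_succ_self (T1.length + T2.length)
    rw [← zpow_natCast, ← zpow_natCast, ← zpow_add₀ (by norm_num)]
    refine neg_one_zpow_congr ⟨(X1.length + X2.length) * (X1.length + X2.length + k.toNat) - r, ?_⟩
    push_cast [hX, hY]
    linear_combination -hr
  rw [sparseRatio_zero_shift h.swap, sparseRatio_inv h (by omega) 0 0 (-k), hpow, zpow_natCast]
  simp only [reverse_map_sub_seg, hS, hsign, List.length_map, List.length_reverse, sub_zero,
    sub_neg_eq_add, neg_add_cancel_right, add_sub_cancel_left, add_sub_cancel_right]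
  ring

theorem reverse_map_outer_seg (a p q : ℤ) :
    ((seg (p - a + 1) p).map (1 + (p + q - a) - ·)).reverse = seg (q - a + 1) q := by
  rw [reverse_map_sub_seg]
  congr 1 <;> ring

theorem charRight_inv (h : IsGeneric (X1 ++ X2) (Y1 ++ Y2))
    (hpq : p + q = (X1 ++ X2).length - (Y1 ++ Y2).length) (ha : 0 ≤ a) :
    charRight (X1.map (·⁻¹)) (X2.map (·⁻¹)) (Y1.map (·⁻¹)) (Y2.map (·⁻¹)) a p q =
      ((X2 ++ X1).prod / (Y2 ++ Y1).prod) ^ a * charLeft X2 X1 Y2 Y1 a q p := by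
  lift a to ℕ using ha
  have hT : (seg (p - a + 1) p).length = a := by
    rw [length_seg]
    omega
  have hk : -(p + q - a) = a - p - q := by ring
  have hinv := sparseRatio_zero_inv h (k := p + q - a) (T1 := seg (p - a + 1) p) (T2 := [])
    (by simp only [hT, List.length_nil]; omega)
  simp only [hT, hk, reverse_map_outer_seg, List.length_nil, List.map_nil, List.reverse_nil,
    add_zero] at hinv
  have hsign : (-1 : ℂ) ^ (a * X2.length + a * (a - p - q).toNat : ℤ) *
      (-1) ^ (a * (X1.length + X2.length + 1)) =
      (-1) ^ (a * (1 + X1.length) + a * (a - q - p).toNat : ℤ) := by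
    rw [← zpow_natCast, ← zpow_add₀ (by norm_num), sub_right_comm]
    refine neg_one_zpow_congr ⟨a * X2.length, ?_⟩
    push_cast
    ring
  rw [charRight, charLeft, List.length_map, ← hsign, hinv, sub_right_comm _ q, add_comm q,
    zpow_natCast]
  ring

theorem charLeft_inv (h : IsGeneric (X1 ++ X2) (Y1 ++ Y2))
    (hpq : p + q = (X1 ++ X2).length - (Y1 ++ Y2).length) (ha : 0 ≤ a) :
    charLeft (X1.map (·⁻¹)) (X2.map (·⁻¹)) (Y1.map (·⁻¹)) (Y2.map (·⁻¹)) a p q =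
      ((X2 ++ X1).prod / (Y2 ++ Y1).prod) ^ a * charRight X2 X1 Y2 Y1 a q p := by
  lift a to ℕ using ha
  have hT : (seg (p - a + 1) p).length = a := by
    rw [length_seg]
    omega
  have hk : -(p + q - a) = a - p - q := by ring
  have hinv := sparseRatio_zero_inv h (k := p + q - a) (T1 := []) (T2 := seg (p - a + 1) p)
    (by simp only [hT, List.length_nil]; omega)
  simp only [hT, hk, reverse_map_outer_seg, List.length_nil, List.map_nil, List.reverse_nil,
    zero_add] at hinv
  have hsign : (-1 : ℂ) ^ (a * (1 + X2.length) + a * (a - p - q).toNat : ℤ) *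
      (-1) ^ (a * (X1.length + X2.length + 1)) =
      (-1) ^ (a * X1.length + a * (a - q - p).toNat : ℤ) := by
    rw [← zpow_natCast, ← zpow_add₀ (by norm_num), sub_right_comm]
    refine neg_one_zpow_congr ⟨a * (1 + X2.length), ?_⟩
    push_cast
    ring
  rw [charRight, charLeft, List.length_map, ← hsign, hinv, sub_right_comm _ q, add_comm q,
    zpow_natCast]
  ring

end RegionalFormulas

section Supercharacters

/-- The sign `(-1)^θ` common to all regional formulas, for `m` bosonic and `n` fermionic indices. -/
noncomputable def thetaSign (m n : ℤ) : ℂ :=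
  (-1) ^ (m * (m - 1) / 2 + n * (n - 1) / 2)

theorem neg_one_zpow_mul_mul_div {e e' θ : ℤ} (he : Even (e - e')) (x y : ℂ) :
    (-1) ^ (e + θ) * x / y = (-1) ^ θ * ((-1) ^ e' * (x / y)) := by
  rw [zpow_add₀ (by norm_num), neg_one_zpow_congr he]
  ring

namespace IsChi

variable {ι : Type*} {z : ι → ℂ} {B1 B2 F1 F2 : List ι} {χ : ℤ → ℤ → ℂ} {a s p q : ℤ}

theorem eq_charMiddle (h : IsChi z B1 B2 F1 F2 χ) (hp : s + (B1.length - F1.length) = p)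
    (hq : -s + (B2.length - F2.length) = q) (ha : 0 ≤ a) (hpa : p ≤ a) (hqa : q ≤ a) :
    χ a s = thetaSign (B1.length + B2.length) (F1.length + F2.length) *
      charMiddle (B1.map z) (B2.map z) (F1.map fun f => -z f) (F2.map fun f => -z f) a p q := by
  have hη : a - s - (B1.length - F1.length) = a - p := by omega
  have hR1 : -s - (B1.length - F1.length) = -p := by omega
  have hR2 : a - (B1.length - F1.length) - (B2.length - F2.length) = a - p - q := by omega
  have hT2 : s - a + (B1.length - F1.length) + 1 = p - a + 1 := by omega
  have hT2' : -a + (B1.length - F1.length) + (B2.length - F2.length) = p + q - a := by omega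
  have hn2 : s + F2.length = B2.length - q := by omega
  obtain ⟨-, h1, h2, h3, h4, -⟩ := h
  rw [charMiddle, ← Delta_div_Dden, thetaSign, List.length_map]
  rcases le_total 0 p with hp0 | hp0 <;> rcases le_total 0 q with hq0 | hq0
  · rw [h1 a s (by omega) (by omega) ha (by omega) (by omega), hp, hη, hT2, hT2', hn2,
      seg_eq_nil (b := -p) (by omega), seg_eq_nil (b := a - p - q) (by omega),
      List.nil_append, Int.toNat_of_nonneg hp0]
    exact neg_one_zpow_mul_mul_div ⟨-(p * q), by ring⟩ _ _
  · rw [h2 a s (by omega) (by omega) ha (by omega) (by omega), hp, hη, hR2, hn2,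
      seg_eq_nil (b := -p) (by omega), seg_eq_nil (b := p + q - a) (by omega),
      List.nil_append, Int.toNat_of_nonneg hp0]
    exact neg_one_zpow_mul_mul_div ⟨-(p * q), by ring⟩ _ _
  · rw [h3 a s (by omega) (by omega) ha (by omega) (by omega), hp, hη, hR1, hT2, hT2',
      seg_eq_nil (b := p) (by omega), seg_eq_nil (b := a - p - q) (by omega),
      List.append_nil, Int.toNat_of_nonpos hp0]
    exact neg_one_zpow_mul_mul_div ⟨0, by push_cast; ring⟩ _ _
  · rw [h4 a s (by omega) (by omega) ha (by omega) (by omega), hp, hη, hR1, hR2,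
      seg_eq_nil (b := p) (by omega), seg_eq_nil (b := p + q - a) (by omega),
      Int.toNat_of_nonpos hp0]
    exact neg_one_zpow_mul_mul_div ⟨0, by push_cast; ring⟩ _ _

theorem eq_charRight (h : IsChi z B1 B2 F1 F2 χ) (hp : s + (B1.length - F1.length) = p)
    (hq : -s + (B2.length - F2.length) = q) (hap : a ≤ p) :
    χ a s = thetaSign (B1.length + B2.length) (F1.length + F2.length) *
      charRight (B1.map z) (B2.map z) (F1.map fun f => -z f) (F2.map fun f => -z f) a p q := by
  have hR : a - (B1.length - F1.length) - (B2.length - F2.length) = a - p - q := by omega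
  have hS : -a + (B1.length - F1.length) + (B2.length - F2.length) = p + q - a := by omega
  have hT : s - a + (B1.length - F1.length) + 1 = p - a + 1 := by omega
  have hn2 : (B1.length - F1.length + F2.length + 1 : ℤ) =
      p + q - B2.length + 2 * F2.length + 1 := by
    omega
  obtain ⟨-, -, -, -, -, h5, h6, -⟩ := h
  rw [charRight, ← Delta_div_Dden, thetaSign, List.length_map]
  rcases le_total a (p + q) with hpq | hpq
  · rw [h5 a s (by omega) (by omega), hp, hS, hT, seg_eq_nil (b := a - p - q) (by omega),
      Int.toNat_of_nonpos (by omega)]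
    exact neg_one_zpow_mul_mul_div ⟨0, by push_cast; ring⟩ _ _
  · obtain ⟨r, hr⟩ := Int.even_mul_succ_self a
    rw [h6 a s (by omega) (by omega), hp, hR, hT, hn2, seg_eq_nil (b := p + q - a) (by omega),
      Int.toNat_of_nonneg (by omega)]
    exact neg_one_zpow_mul_mul_div
      ⟨a * (p + q - B2.length + F2.length + 1) - r, by linear_combination -hr⟩ _ _

theorem eq_charLeft (h : IsChi z B1 B2 F1 F2 χ) (hp : s + (B1.length - F1.length) = p)
    (hq : -s + (B2.length - F2.length) = q) (haq : a ≤ q) :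
    χ a s = thetaSign (B1.length + B2.length) (F1.length + F2.length) *
      charLeft (B1.map z) (B2.map z) (F1.map fun f => -z f) (F2.map fun f => -z f) a p q := by
  have hR : a - (B1.length - F1.length) - (B2.length - F2.length) = a - p - q := by omega
  have hS : -a + (B1.length - F1.length) + (B2.length - F2.length) = p + q - a := by omega
  have hT : s - a + (B1.length - F1.length) + 1 = p - a + 1 := by omega
  have hn2 : (B1.length - F1.length + F2.length : ℤ) = p + q - B2.length + 2 * F2.length := by
    omega
  obtain ⟨-, -, -, -, -, -, -, h7, h8⟩ := h
  rw [charLeft, ← Delta_div_Dden, thetaSign, List.length_map]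
  rcases le_total a (p + q) with hpq | hpq
  · rw [h7 a s (by omega) (by omega), hp, hS, hT, seg_eq_nil (b := a - p - q) (by omega),
      Int.toNat_of_nonpos (by omega)]
    exact neg_one_zpow_mul_mul_div ⟨0, by push_cast; ring⟩ _ _
  · obtain ⟨r, hr⟩ := Int.even_mul_succ_self a
    rw [h8 a s (by omega) (by omega), hp, hR, hT, hn2, seg_eq_nil (b := p + q - a) (by omega),
      Int.toNat_of_nonneg (by omega)]
    exact neg_one_zpow_mul_mul_div
      ⟨a * (p + q - B2.length + F2.length) - r, by linear_combination -hr⟩ _ _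

end IsChi

theorem map_neg_eq_map_inv {ι κ : Type*} {z : ι → ℂ} {z' : κ → ℂ} {F : List ι} {F' : List κ}
    (h : F.map z = (F'.map z').map (·⁻¹)) :
    (F.map fun f => -z f) = (F'.map fun f => -z' f).map (·⁻¹) := by
  simpa only [List.map_map, Function.comp_def, inv_neg] using congrArg (List.map Neg.neg) h

theorem IsChi.apply_eq_of_map_inv {ι κ : Type*} {z : ι → ℂ} {z' : κ → ℂ} {B1 B2 F1 F2 : List ι}
    {B1' B2' F1' F2' : List κ} {χ χ' : ℤ → ℤ → ℂ} {a : ℤ} (h : IsChi z B1 B2 F1 F2 χ)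
    (h' : IsChi z' B2' B1' F2' F1' χ') (hB1 : B1.map z = (B1'.map z').map (·⁻¹))
    (hB2 : B2.map z = (B2'.map z').map (·⁻¹)) (hF1 : F1.map z = (F1'.map z').map (·⁻¹))
    (hF2 : F2.map z = (F2'.map z').map (·⁻¹))
    (hg : IsGeneric ((B1' ++ B2').map z') ((F1' ++ F2').map fun f => -z' f)) (ha : 0 ≤ a) (s : ℤ) :
    χ a s = (prodL (B2' ++ B1') z' / prodL (F2' ++ F1') fun f => -z' f) ^ a * χ' a (-s) := by
  have hlen : ∀ {B : List ι} {B' : List κ}, B.map z = (B'.map z').map (·⁻¹) →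
      B.length = B'.length := fun hB => by
    simpa only [List.length_map] using congrArg List.length hB
  obtain ⟨p, hp⟩ : ∃ p : ℤ, s + (B1'.length - F1'.length) = p := ⟨_, rfl⟩
  obtain ⟨q, hq⟩ : ∃ q : ℤ, -s + (B2'.length - F2'.length) = q := ⟨_, rfl⟩
  have hpq : p + q = ((B1'.map z' ++ B2'.map z').length : ℤ) -
      ((F1'.map fun f => -z' f) ++ F2'.map fun f => -z' f).length := by
    simp only [List.length_append, List.length_map]
    omega
  have hp' : s + (B1.length - F1.length) = p := by rw [hlen hB1, hlen hF1, hp]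
  have hq' : -s + (B2.length - F2.length) = q := by rw [hlen hB2, hlen hF2, hq]
  have hp'' : - -s + (B1'.length - F1'.length) = p := by rw [neg_neg, hp]
  have hθ : thetaSign (B1.length + B2.length) (F1.length + F2.length) =
      thetaSign (B2'.length + B1'.length) (F2'.length + F1'.length) := by
    rw [hlen hB1, hlen hB2, hlen hF1, hlen hF2, add_comm (B1'.length : ℤ),
      add_comm (F1'.length : ℤ)]
  rw [List.map_append, List.map_append] at hg
  rw [prodL, prodL, List.map_append, List.map_append]
  rcases le_total a p with hap | hpa
  · rw [h.eq_charRight hp' hq' hap, h'.eq_charLeft hq hp'' hap, hB1, hB2,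
      map_neg_eq_map_inv hF1, map_neg_eq_map_inv hF2, charRight_inv hg hpq ha, hθ, mul_left_comm]
  rcases le_total a q with haq | hqa
  · rw [h.eq_charLeft hp' hq' haq, h'.eq_charRight hq hp'' haq, hB1, hB2,
      map_neg_eq_map_inv hF1, map_neg_eq_map_inv hF2, charLeft_inv hg hpq ha, hθ, mul_left_comm]
  · rw [h.eq_charMiddle hp' hq' ha hpa hqa, h'.eq_charMiddle hq hp'' ha hqa hpa, hB1, hB2,
      map_neg_eq_map_inv hF1, map_neg_eq_map_inv hF2, charMiddle_inv hg hpq ha, hθ, mul_left_comm]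

end Supercharacters

theorem sigma_transform_general {ι κ : Type*} (z : κ → ℂ) (zσ : ι → ℂ) (β φ : ι → κ)
    (B1 B2 F1 F2 : List ι) (hβ : ∀ b ∈ B1 ++ B2, zσ b = (z (β b))⁻¹)
    (hφ : ∀ f ∈ F1 ++ F2, zσ f = (z (φ f))⁻¹)
    (hz0 : ∀ i ∈ B1 ++ B2 ++ F1 ++ F2, zσ i ≠ 0) (hzd : ((B1 ++ B2 ++ F1 ++ F2).map zσ).Nodup)
    (χσ χhat : ℤ → ℤ → ℂ) (hχσ : IsChi zσ B1 B2 F1 F2 χσ)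
    (hχhat : IsChi z (B2.map β) (B1.map β) (F2.map φ) (F1.map φ) χhat) :
    ∀ a s : ℤ, 0 ≤ a →
      χσ a s = (prodL (B2.map β ++ B1.map β) z /
        prodL (F2.map φ ++ F1.map φ) (fun f => -z f)) ^ a * χhat a (-s) := by
  have hmap : ∀ {σ : ι → κ} {L L' : List ι}, L ⊆ L' → (∀ i ∈ L', zσ i = (z (σ i))⁻¹) →
      L.map zσ = ((L.map σ).map z).map (·⁻¹) := fun {σ L L'} hL hσ => by
    rw [List.map_map, List.map_map]
    exact List.map_congr_left fun i hi => hσ i (hL hi)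
  rw [List.append_assoc (B1 ++ B2)] at hz0 hzd
  rw [List.map_append] at hzd
  have hg : IsGeneric ((B1.map β ++ B2.map β).map z)
      ((F1.map φ ++ F2.map φ).map fun f => -z f) := by
    rw [← List.map_append, ← List.map_append, List.map_map, List.map_map]
    refine ⟨?_, ?_, ?_⟩ <;> simp only [List.forall_mem_map, Function.comp_apply]
    · intro b hb h0
      exact hz0 b (List.mem_append_left _ hb) (by rw [hβ b hb, h0, inv_zero])
    · intro f hf h0
      exact hz0 f (List.mem_append_right _ hf) (by rw [hφ f hf, neg_eq_zero.1 h0, inv_zero])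
    · intro b hb f hf h0
      refine List.disjoint_of_nodup_append hzd (List.mem_map_of_mem hb) ?_
      rw [hβ b hb, add_neg_eq_zero.1 h0, ← hφ f hf]
      exact List.mem_map_of_mem hf
  exact fun a s ha => hχσ.apply_eq_of_map_inv hχhat (hmap (List.subset_append_left ..) hβ)
    (hmap (List.subset_append_right ..) hβ) (hmap (List.subset_append_left ..) hφ)
    (hmap (List.subset_append_right ..) hφ) hg ha s

/-- **σ-transformation of the Wronskian supercharacters.** -/
theorem sigma_transform (M N : ℕ) (z : ℤ → ℂ) (B1 B2 F1 F2 : List ℤ)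
    (hB1 : ∀ i ∈ B1, 1 ≤ i ∧ i ≤ (M : ℤ)) (hB2 : ∀ i ∈ B2, 1 ≤ i ∧ i ≤ (M : ℤ))
    (hF1 : ∀ i ∈ F1, (M : ℤ) + 1 ≤ i ∧ i ≤ (M : ℤ) + N)
    (hF2 : ∀ i ∈ F2, (M : ℤ) + 1 ≤ i ∧ i ≤ (M : ℤ) + N)
    (hnd : (B1 ++ B2 ++ F1 ++ F2).Nodup)
    (hz0 : ∀ i : ℤ, 1 ≤ i → i ≤ (M : ℤ) + N → z i ≠ 0)
    (hzd : ∀ i j : ℤ, 1 ≤ i → i ≤ (M : ℤ) + N → 1 ≤ j → j ≤ (M : ℤ) + N → i ≠ j → z i ≠ z j)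
    (hzinvd : ∀ i j : ℤ, 1 ≤ i → i ≤ (M : ℤ) + N → 1 ≤ j → j ≤ (M : ℤ) + N → i ≠ j →
      (z i)⁻¹ ≠ (z j)⁻¹)
    (χσ χhat : ℤ → ℤ → ℂ)
    (hχσ : IsChi (fun i => if i ≤ (M : ℤ) then (z ((M : ℤ) + 1 - i))⁻¹
        else (z (2 * (M : ℤ) + N + 1 - i))⁻¹) B1 B2 F1 F2 χσ)
    (hχhat : IsChi z
      (B2.map (fun b => (M : ℤ) + 1 - b)) (B1.map (fun b => (M : ℤ) + 1 - b))
      (F2.map (fun f => 2 * (M : ℤ) + N + 1 - f)) (F1.map (fun f => 2 * (M : ℤ) + N + 1 - f))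
      χhat) :
    ∀ a s : ℤ, 0 ≤ a →
      χσ a s =
        (prodL (B2.map (fun b => (M : ℤ) + 1 - b) ++ B1.map (fun b => (M : ℤ) + 1 - b)) z /
            prodL (F2.map (fun f => 2 * (M : ℤ) + N + 1 - f) ++
              F1.map (fun f => 2 * (M : ℤ) + N + 1 - f)) (fun f => -z f)) ^ a *
          χhat a (-s) := by
  have hB : ∀ b ∈ B1 ++ B2, 1 ≤ b ∧ b ≤ M := fun b hb =>
    (List.mem_append.1 hb).elim (hB1 b) (hB2 b)
  have hF : ∀ f ∈ F1 ++ F2, M + 1 ≤ f ∧ f ≤ M + N := fun f hf =>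
    (List.mem_append.1 hf).elim (hF1 f) (hF2 f)
  have hBF : ∀ i ∈ B1 ++ B2 ++ F1 ++ F2, 1 ≤ i ∧ i ≤ M + N := fun i hi => by
    rw [List.append_assoc (B1 ++ B2)] at hi
    rcases List.mem_append.1 hi with hi | hi
    · have := hB i hi
      omega
    · have := hF i hi
      omega
  refine sigma_transform_general z _ _ _ B1 B2 F1 F2 (fun b hb => if_pos (hB b hb).2)
    (fun f hf => if_neg (by linarith [(hF f hf).1])) (fun i hi => ?_)
    (hnd.map_on fun i hi j hj hij => ?_) χσ χhat hχσ hχhat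
  · obtain ⟨hi1, hi2⟩ := hBF i hi
    split_ifs <;> exact inv_ne_zero (hz0 _ (by omega) (by omega))
  · obtain ⟨hi1, hi2⟩ := hBF i hi
    obtain ⟨hj1, hj2⟩ := hBF j hj
    contrapose! hij
    split_ifs <;> exact hzinvd _ _ (by omega) (by omega) (by omega) (by omega) (by omega)

end Stmt4
end
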